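/- arXiv:1406.7229 — 3 statements merged into one kernel-verified Lean document; each statement's English description precedes it below -/
import Mathlib

section
/- For every real p > 1 and every integer n ≥ 1 there exists a constant C = C(p,n), with no dependence on N_1, …, N_n, such that for every f : A → ℂ the spherical maximal function M^A f(x) = max over integers r ≥ 1 with {x ∈ A : |x| = r} nonempty of |(σ_r^A * f)(x)| satisfies ‖M^A f‖_{L^p(A)} ≤ C · ‖f‖_{L^p(A)}. -/
open Finset

noncomputable section

/-- The direct sum `A = ⊕_{m=1}^n (ℤ/(m+1)ℤ)^{N_m}`: the index `i : Fin n` corresponds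
to `m = i + 1`, so the `i`-th component is `(ℤ/(i+2)ℤ)^{N_{i+1}}`. -/
abbrev DSum (n : ℕ) (Nf : Fin n → ℕ) := ∀ i : Fin n, Fin (Nf i) → ZMod (i.val + 2)

/-- The weight `|y| = #{(m,j) : y_m^j ≠ 0}` on `A`. -/
def weightA {n : ℕ} {Nf : Fin n → ℕ} (y : DSum n Nf) : ℕ :=
  ∑ i, (Finset.univ.filter fun j => y i j ≠ 0).card

/-- `L¹`-normalized indicator of the sphere `{x ∈ A : |x| = r}` (zero if the sphere
is empty). -/
def sigmaA (n : ℕ) (Nf : Fin n → ℕ) (r : ℕ) : DSum n Nf → ℂ := fun x =>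
  if weightA x = r then
    ((Finset.univ.filter fun y : DSum n Nf => weightA y = r).card : ℂ)⁻¹
  else 0

/-- Convolution on `A`. -/
def convA {n : ℕ} {Nf : Fin n → ℕ} (g f : DSum n Nf → ℂ) : DSum n Nf → ℂ :=
  fun x => ∑ y, g y * f (x - y)

/-- The spherical maximal function on `A`: the max of `|(σ_r^A * f)(x)|` over integers
`r ≥ 1` such that the sphere `{x ∈ A : |x| = r}` is nonempty (all such `r` satisfy
`r ≤ Σ_m N_m`); the max of the empty collection is interpreted as `0`. -/
def maxA {n : ℕ} {Nf : Fin n → ℕ} (f : DSum n Nf → ℂ) (x : DSum n Nf) : ℝ :=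
  (((Finset.range ((∑ i, Nf i) + 1)).filter fun r =>
        1 ≤ r ∧ ∃ z : DSum n Nf, weightA z = r).sup fun r =>
      ‖convA (sigmaA n Nf r) f x‖₊ : NNReal)

/-!
On the cube, `m` iterated smoothings of the sphere means `σ_r` at scale `√r` split `σ_r` into a
linear combination of `σ_{r+2i}`, `i ≲ √r`, and a remainder. By the local size of binomial
coefficients the former is dominated by a binomial mean over `2r` coordinates; these are averages,
over random orderings of the coordinates, of conditional expectations, and Doob's inequality
bounds their maximal function. The remainder is governed by `m`-th differences
in `r` of Krawtchouk polynomials, which are `O(r^{-m/2})` on all frequencies, so interpolating `ℓ¹`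
with `ℓ²` makes its `ℓᵖ` norm to the `p` summable in `r` once `m (p - 1) ≥ 2`. Radii beyond half
the dimension reduce to small ones by complementation.

For a power of a finite abelian group `H`, the cube acts on pairs `(x, y)` with `y` nowhere zero
by subtracting from `x` the chosen coordinates of `y` and flipping their signs. Averaging over `y`
transfers the cube estimate to Hamming spheres in `H^ι`. The bounds for the factors compose, and a
sphere in the product is a disjoint union of products of spheres.
-/

open scoped BigOperators

section ReverseMartingale

lemma rpow_sub_one_mul_self {p z : ℝ} (hp : p ≠ 0) (hz : 0 ≤ z) : z ^ (p - 1) * z = z ^ p := by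
  rcases hz.eq_or_lt with rfl | hz
  · rw [mul_zero, Real.zero_rpow hp]
  · rw [Real.rpow_sub_one hz.ne', div_mul_cancel₀ _ hz.ne']

lemma mul_rpow_sub_one_mul_le {p z a : ℝ} (hp : 1 < p) (hz : 0 ≤ z) (ha : 0 ≤ a) :
    p * (z ^ (p - 1) * a) ≤ (p - 1) * z ^ p + a ^ p := by
  have hp1 : 0 < p - 1 := sub_pos.2 hp
  have young := Real.young_inequality_of_nonneg (Real.rpow_nonneg hz (p - 1)) ha
    (Real.HolderConjugate.conjExponent hp).symm
  rw [← Real.rpow_mul hz, Real.conjExponent, mul_div_cancel₀ p hp1.ne'] at young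
  calc p * (z ^ (p - 1) * a) ≤ p * (z ^ p / (p / (p - 1)) + a ^ p / p) := by gcongr
    _ = (p - 1) * z ^ p + a ^ p := by field_simp

lemma partialSups_apply_congr {X : Type*} {a : ℕ → X → ℝ} (n : ℕ) {x y : X}
    (h : ∀ s, a s x = a s y) :
    partialSups a n x = partialSups a n y := by
  simp only [Pi.partialSups_apply, h]

variable {X : Type*} [Fintype X] {p : ℝ} {a : ℕ → X → ℝ}

/-- A reverse martingale for the counting measure on a finite set: `a (s + 1)` is the conditional
expectation of `a s` given the future `a (s + 1), a (s + 2), …`. Functions measurable with respect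
to the future are encoded as those taking equal values at points which the future does not
distinguish. -/
def IsReverseMartingale (a : ℕ → X → ℝ) : Prop :=
  ∀ (s : ℕ) (φ : X → ℝ), (∀ x y, (∀ t > s, a t x = a t y) → φ x = φ y) →
    ∑ x, φ x * a s x = ∑ x, φ x * a (s + 1) x

lemma IsReverseMartingale.tail (ha : IsReverseMartingale a) :
    IsReverseMartingale fun s => a (s + 1) := fun s φ hφ =>
  ha (s + 1) φ fun x y h => hφ x y fun t ht => h (t + 1) (by omega)

lemma max_rpow_sub_le {z b : ℝ} (hp : 1 < p) (hz : 0 ≤ z) (hb : 0 ≤ b) :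
    max b z ^ p - p / (p - 1) * (max b z ^ (p - 1) * b) ≤
      z ^ p - p / (p - 1) * (z ^ (p - 1) * b) := by
  have hp1 : 0 < p - 1 := sub_pos.2 hp
  rcases le_total b z with h | h
  · rw [max_eq_right h]
  · rw [max_eq_left h, rpow_sub_one_mul_self (by linarith) hb, ← sub_nonneg]
    calc 0 ≤ ((p - 1) * z ^ p + b ^ p - p * (z ^ (p - 1) * b)) / (p - 1) :=
          div_nonneg (sub_nonneg.2 (mul_rpow_sub_one_mul_le hp hz hb)) hp1.le
      _ = _ := by field_simp; ring

-- Peeling off the first term keeps the remaining maximum measurable with respect to the future.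
lemma sum_partialSups_rpow_le_sum_mul (hp : 1 < p) (n : ℕ) (ha : IsReverseMartingale a)
    (ha0 : ∀ s, 0 ≤ a s) :
    ∑ x, partialSups a n x ^ p ≤ p / (p - 1) * ∑ x, partialSups a n x ^ (p - 1) * a 0 x := by
  rw [← sub_nonpos, mul_sum, ← sum_sub_distrib]
  induction n generalizing a with
  | zero =>
    refine sum_nonpos fun x _ => ?_
    rw [partialSups_zero]
    have hp1 : 0 < p - 1 := sub_pos.2 hp
    have ha0x : 0 ≤ a 0 x := ha0 0 x
    have hmax := max_rpow_sub_le hp le_rfl ha0x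
    rwa [max_eq_left ha0x, Real.zero_rpow (by linarith), Real.zero_rpow hp1.ne', zero_mul,
      mul_zero, sub_zero] at hmax
  | succ n ih =>
    set z : X → ℝ := partialSups (fun s => a (s + 1)) n with hz_def
    have hz : ∀ x, 0 ≤ z x := (ha0 1).trans (le_partialSups_of_le (fun s => a (s + 1)) n.zero_le)
    have hmax : ∀ x, partialSups a (n + 1) x = max (a 0 x) (z x) := fun x => by
      rw [partialSups_add_one']; rfl
    have hmart : ∑ x, z x ^ (p - 1) * a 0 x = ∑ x, z x ^ (p - 1) * a 1 x :=
      ha 0 _ fun x y h => by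
        rw [hz_def, partialSups_apply_congr n fun s => h (s + 1) s.succ_pos]
    calc _ ≤ ∑ x, (z x ^ p - p / (p - 1) * (z x ^ (p - 1) * a 0 x)) := by
          simp only [hmax]
          exact sum_le_sum fun x _ => max_rpow_sub_le hp (hz x) (ha0 0 x)
      _ = ∑ x, (z x ^ p - p / (p - 1) * (z x ^ (p - 1) * a 1 x)) := by
          simp only [sum_sub_distrib, ← mul_sum, hmart]
      _ ≤ 0 := ih ha.tail fun s => ha0 (s + 1)

theorem IsReverseMartingale.sum_partialSups_rpow_le (hp : 1 < p) (n : ℕ)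
    (ha : IsReverseMartingale a) (ha0 : ∀ s, 0 ≤ a s) :
    ∑ x, partialSups a n x ^ p ≤ (p / (p - 1)) ^ p * ∑ x, a 0 x ^ p := by
  set q := p / (p - 1)
  set z : X → ℝ := partialSups a n
  have hz : ∀ x, 0 ≤ z x := (ha0 0).trans (le_partialSups_of_le a n.zero_le)
  have hyoung : p * (q * ∑ x, z x ^ (p - 1) * a 0 x) ≤
      (p - 1) * ∑ x, z x ^ p + q ^ p * ∑ x, a 0 x ^ p := by
    simp only [mul_sum, ← sum_add_distrib]
    refine sum_le_sum fun x _ => ?_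
    have hq : 0 ≤ q := div_nonneg (by linarith) (sub_nonneg.2 hp.le)
    rw [mul_left_comm q, ← Real.mul_rpow hq (ha0 0 x)]
    exact mul_rpow_sub_one_mul_le hp (hz x) (mul_nonneg hq (ha0 0 x))
  have hdoob := mul_le_mul_of_nonneg_left (sum_partialSups_rpow_le_sum_mul hp n ha ha0)
    (by linarith : 0 ≤ p)
  linarith

end ReverseMartingale

section MaximalBound

variable {κ X : Type*} [Fintype X] {p C D : ℝ} {s t : Set κ} {T S U : κ → (X → ℝ) → X → ℝ}

/-- The maximal function `sup_{i ∈ s} T i f` of a family of operators satisfies an `ℓᵖ` bound with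
constant `C ^ (1 / p)` on nonnegative functions. The supremum is encoded by an arbitrary
majorant `g`, so that `s` need not be finite. -/
def MaximalBoundOn (p C : ℝ) (s : Set κ) (T : κ → (X → ℝ) → X → ℝ) : Prop :=
  ∀ f : X → ℝ, 0 ≤ f → ∃ g : X → ℝ, 0 ≤ g ∧ (∀ i ∈ s, T i f ≤ g) ∧
    ∑ x, g x ^ p ≤ C * ∑ x, f x ^ p

lemma max_rpow_le_add {u v : ℝ} (hu : 0 ≤ u) (hv : 0 ≤ v) : max u v ^ p ≤ u ^ p + v ^ p := by
  rcases max_choice u v with h | h <;> rw [h]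
  · exact le_add_of_nonneg_right (Real.rpow_nonneg hv p)
  · exact le_add_of_nonneg_left (Real.rpow_nonneg hu p)

lemma add_rpow_le_mul_add {u v : ℝ} (hp : 1 ≤ p) (hu : 0 ≤ u) (hv : 0 ≤ v) :
    (u + v) ^ p ≤ 2 ^ (p - 1) * (u ^ p + v ^ p) := by
  lift u to NNReal using hu
  lift v to NNReal using hv
  exact_mod_cast NNReal.rpow_add_le_mul_rpow_add_rpow u v hp

lemma expect_rpow_le {α : Type*} (w : Finset α) (hp : 1 ≤ p) {f : α → ℝ}
    (hf : ∀ i ∈ w, 0 ≤ f i) : (𝔼 i ∈ w, f i) ^ p ≤ 𝔼 i ∈ w, f i ^ p := by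
  rcases w.eq_empty_or_nonempty with rfl | hw
  · simp [Real.zero_rpow (by linarith : p ≠ 0)]
  · have hcard : (0 : ℝ) < #w := by exact_mod_cast hw.card_pos
    simp only [expect_eq_sum_div_card, div_eq_inv_mul, mul_sum]
    exact Real.rpow_arith_mean_le_arith_mean_rpow w (fun _ => (#w : ℝ)⁻¹) f
      (fun _ _ => by positivity) (by simp [hcard.ne']) hf hp

namespace MaximalBoundOn

lemma mono (h : MaximalBoundOn p C s T) (hCD : C ≤ D) (hts : t ⊆ s) : MaximalBoundOn p D t T := by
  intro f hf
  obtain ⟨g, hg, hTg, hgp⟩ := h f hf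
  refine ⟨g, hg, fun i hi => hTg i (hts hi), hgp.trans ?_⟩
  exact mul_le_mul_of_nonneg_right hCD (sum_nonneg fun x _ => Real.rpow_nonneg (hf x) p)

lemma union (hs : MaximalBoundOn p C s T) (ht : MaximalBoundOn p D t T) :
    MaximalBoundOn p (C + D) (s ∪ t) T := by
  intro f hf
  obtain ⟨g, hg, hTg, hgp⟩ := hs f hf
  obtain ⟨h, hh, hTh, hhp⟩ := ht f hf
  refine ⟨g ⊔ h, hg.trans le_sup_left, ?_, ?_⟩
  · rintro i (hi | hi)
    · exact (hTg i hi).trans le_sup_left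
    · exact (hTh i hi).trans le_sup_right
  · calc ∑ x, (g ⊔ h) x ^ p ≤ ∑ x, (g x ^ p + h x ^ p) :=
          sum_le_sum fun x _ => max_rpow_le_add (hg x) (hh x)
      _ ≤ (C + D) * ∑ x, f x ^ p := by rw [sum_add_distrib, add_mul]; gcongr

lemma add (hp : 1 ≤ p) (hS : MaximalBoundOn p C s S) (hU : MaximalBoundOn p D s U)
    (hT : ∀ i ∈ s, ∀ f, 0 ≤ f → T i f ≤ S i f + U i f) :
    MaximalBoundOn p (2 ^ (p - 1) * (C + D)) s T := by
  intro f hf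
  obtain ⟨g, hg, hSg, hgp⟩ := hS f hf
  obtain ⟨h, hh, hUh, hhp⟩ := hU f hf
  refine ⟨g + h, add_nonneg hg hh, fun i hi => ?_, ?_⟩
  · exact (hT i hi f hf).trans (add_le_add (hSg i hi) (hUh i hi))
  · calc ∑ x, (g x + h x) ^ p ≤ ∑ x, 2 ^ (p - 1) * (g x ^ p + h x ^ p) :=
          sum_le_sum fun x _ => add_rpow_le_mul_add hp (hg x) (hh x)
      _ ≤ 2 ^ (p - 1) * (C + D) * ∑ x, f x ^ p := by
          rw [← mul_sum, sum_add_distrib, mul_assoc, add_mul]; gcongr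

lemma const_smul {c : ℝ} (hc : 0 ≤ c) (h : MaximalBoundOn p C s T) :
    MaximalBoundOn p (c ^ p * C) s fun i f => c • T i f := by
  intro f hf
  obtain ⟨g, hg, hTg, hgp⟩ := h f hf
  refine ⟨c • g, smul_nonneg hc hg, fun i hi => smul_le_smul_of_nonneg_left (hTg i hi) hc, ?_⟩
  calc ∑ x, (c * g x) ^ p = c ^ p * ∑ x, g x ^ p := by
        rw [mul_sum]; exact sum_congr rfl fun x _ => Real.mul_rpow hc (hg x)
    _ ≤ c ^ p * C * ∑ x, f x ^ p := by rw [mul_assoc]; gcongr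

lemma of_sum_le {s : Finset κ} (hp : 0 < p) {c : κ → ℝ} (hc : ∑ i ∈ s, c i ≤ C)
    (hT0 : ∀ i ∈ s, ∀ f, 0 ≤ f → 0 ≤ T i f)
    (hT : ∀ i ∈ s, ∀ f, 0 ≤ f → ∑ x, T i f x ^ p ≤ c i * ∑ x, f x ^ p) :
    MaximalBoundOn p C (s : Set κ) T := by
  intro f hf
  have hpow : ∀ x, ∀ i ∈ s, 0 ≤ T i f x ^ p := fun x i hi => Real.rpow_nonneg (hT0 i hi f hf x) p
  refine ⟨fun x => (∑ i ∈ s, T i f x ^ p) ^ p⁻¹,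
    fun x => Real.rpow_nonneg (sum_nonneg (hpow x)) _, fun i hi x => ?_, ?_⟩
  · rw [Real.le_rpow_inv_iff_of_pos (hT0 i hi f hf x) (sum_nonneg (hpow x)) hp]
    exact single_le_sum (hpow x) hi
  · calc ∑ x, ((∑ i ∈ s, T i f x ^ p) ^ p⁻¹) ^ p = ∑ x, ∑ i ∈ s, T i f x ^ p :=
          sum_congr rfl fun x _ => Real.rpow_inv_rpow (sum_nonneg (hpow x)) hp.ne'
      _ = ∑ i ∈ s, ∑ x, T i f x ^ p := sum_comm
      _ ≤ ∑ i ∈ s, c i * ∑ x, f x ^ p := sum_le_sum fun i hi => hT i hi f hf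
      _ ≤ C * ∑ x, f x ^ p := by
          rw [← sum_mul]
          exact mul_le_mul_of_nonneg_right hc (sum_nonneg fun x _ => Real.rpow_nonneg (hf x) p)

lemma comp_equiv {κ' : Type*} {T' : κ' → (X → ℝ) → X → ℝ} {t : Set κ'} (e : X ≃ X) (φ : κ' → κ)
    (h : MaximalBoundOn p C s T) (hφ : Set.MapsTo φ t s)
    (hT : ∀ i ∈ t, ∀ f x, T' i f x = T (φ i) f (e x)) : MaximalBoundOn p C t T' := by
  intro f hf
  obtain ⟨g, hg, hTg, hgp⟩ := h f hf
  refine ⟨g ∘ e, fun x => hg (e x), fun i hi x => ?_, ?_⟩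
  · exact (hT i hi f x).trans_le (hTg _ (hφ hi) (e x))
  · exact (Equiv.sum_comp e fun x => g x ^ p).trans_le hgp

lemma rpow {θ : ℝ} (hθ : 0 < θ) (h : MaximalBoundOn p C s T)
    (hT0 : ∀ i ∈ s, ∀ f, 0 ≤ f → 0 ≤ T i f)
    (hT : ∀ i ∈ s, ∀ f, 0 ≤ f → ∀ x, T i f x ^ θ ≤ T i (fun y => f y ^ θ) x) :
    MaximalBoundOn (θ * p) C s T := by
  intro f hf
  obtain ⟨g, hg, hTg, hgp⟩ := h (fun y => f y ^ θ) fun y => Real.rpow_nonneg (hf y) θ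
  refine ⟨fun x => g x ^ θ⁻¹, fun x => Real.rpow_nonneg (hg x) _, fun i hi x => ?_, ?_⟩
  · rw [Real.le_rpow_inv_iff_of_pos (hT0 i hi f hf x) (hg x) hθ]
    exact (hT i hi f hf x).trans (hTg i hi x)
  · simp only [Real.rpow_mul (Real.rpow_nonneg (hg _) _), Real.rpow_mul (hf _),
      Real.rpow_inv_rpow (hg _) hθ.ne']
    exact hgp

lemma expect {Ω : Type*} [Fintype Ω] [Nonempty Ω] {V : Ω → κ → (X → ℝ) → X → ℝ} (hp : 1 ≤ p)
    (hV : ∀ ω, MaximalBoundOn p C s (V ω)) :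
    MaximalBoundOn p C s fun i f x => 𝔼 ω, V ω i f x := by
  intro f hf
  choose g hg hVg hgp using fun ω => hV ω f hf
  refine ⟨fun x => 𝔼 ω, g ω x, fun x => expect_nonneg fun ω _ => hg ω x, fun i hi x =>
    expect_le_expect fun ω _ => hVg ω i hi x, ?_⟩
  calc ∑ x, (𝔼 ω, g ω x) ^ p ≤ ∑ x, 𝔼 ω, g ω x ^ p :=
        sum_le_sum fun x _ => expect_rpow_le univ hp fun ω _ => hg ω x
    _ = 𝔼 ω, ∑ x, g ω x ^ p := (expect_sum_comm univ univ fun ω x => g ω x ^ p).symm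
    _ ≤ C * ∑ x, f x ^ p := expect_le univ_nonempty fun ω _ => hgp ω

end MaximalBoundOn

end MaximalBound

section Interpolation

lemma integrable_indicator_Ioc_rpow {p c : ℝ} (hp : 1 < p) (hc : 0 ≤ c) :
    MeasureTheory.Integrable ((Set.Ioc 0 c).indicator fun l : ℝ => l ^ (p - 2)) := by
  rw [MeasureTheory.integrable_indicator_iff measurableSet_Ioc,
    ← intervalIntegrable_iff_integrableOn_Ioc_of_le hc]
  exact intervalIntegral.intervalIntegrable_rpow' (by linarith)

lemma integral_indicator_Ioc_rpow {p c : ℝ} (hp : 1 < p) (hc : 0 ≤ c) :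
    ∫ l, (Set.Ioc 0 c).indicator (fun l : ℝ => l ^ (p - 2)) l = c ^ (p - 1) / (p - 1) := by
  rw [MeasureTheory.integral_indicator measurableSet_Ioc, ← intervalIntegral.integral_of_le hc,
    integral_rpow (Or.inl (by linarith)), show p - 2 + 1 = p - 1 by ring,
    Real.zero_rpow (by linarith), sub_zero]

lemma integrable_indicator_Ioi_rpow {p c : ℝ} (hp : p < 2) (hc : 0 < c) :
    MeasureTheory.Integrable ((Set.Ioi c).indicator fun l : ℝ => l ^ (p - 3)) := by
  rw [MeasureTheory.integrable_indicator_iff measurableSet_Ioi]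
  exact integrableOn_Ioi_rpow_of_lt (by linarith) hc

lemma integral_indicator_Ioi_rpow {p c : ℝ} (hp : p < 2) (hc : 0 < c) :
    ∫ l, (Set.Ioi c).indicator (fun l : ℝ => l ^ (p - 3)) l = c ^ (p - 2) / (2 - p) := by
  rw [MeasureTheory.integral_indicator measurableSet_Ioi,
    integral_Ioi_rpow_of_lt (by linarith) hc, show p - 3 + 1 = p - 2 by ring,
    show 2 - p = -(p - 2) by ring, div_neg, neg_div]

lemma le_two_mul_add_of_le_add {l u v w : ℝ} (hl : 0 < l) (hlu : l ≤ u) (hv : 0 ≤ v)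
    (huvw : u ≤ v + w) : u ≤ 2 * v + 4 * w ^ 2 / l := by
  rcases le_total w v with h | h
  · have : 0 ≤ 4 * w ^ 2 / l := by positivity
    linarith
  · have : u ≤ 4 * w ^ 2 / l := by
      rw [le_div_iff₀ hl]
      nlinarith
    linarith

variable {X : Type*} [Fintype X] {p A B a : ℝ} {T : (X → ℝ) → X → ℝ}

-- Truncation of `f` at height `a * l`: the large part is measured in `ℓ¹`, the small part in `ℓ²`.
lemma sum_mul_indicator_Ioc_le (ha : 0 < a)
    (hsub : ∀ f g x, |T (f + g) x| ≤ |T f x| + |T g x|)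
    (h1 : ∀ f, ∑ x, |T f x| ≤ A * ∑ x, |f x|)
    (h2 : ∀ f, ∑ x, |T f x| ^ 2 ≤ B * ∑ x, |f x| ^ 2) (f : X → ℝ) (l : ℝ) :
    ∑ x, |T f x| * (Set.Ioc 0 |T f x|).indicator (fun l => l ^ (p - 2)) l ≤
      ∑ x, (2 * A * |f x| * (Set.Ioc 0 (|f x| / a)).indicator (fun l => l ^ (p - 2)) l +
        4 * B * |f x| ^ 2 * (Set.Ioi (|f x| / a)).indicator (fun l => l ^ (p - 3)) l) := by
  rcases le_or_gt l 0 with hl | hl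
  · have hIoc (c : ℝ) : l ∉ Set.Ioc 0 c := fun h => hl.not_gt h.1
    have hIoi (x : X) : l ∉ Set.Ioi (|f x| / a) := fun h =>
      hl.not_gt ((div_nonneg (abs_nonneg (f x)) ha.le).trans_lt h)
    simp [Set.indicator_of_notMem (hIoc _), Set.indicator_of_notMem (hIoi _)]
  set large : X → ℝ := fun x => if l ≤ |f x| / a then f x else 0 with hlarge
  set small : X → ℝ := fun x => if l ≤ |f x| / a then 0 else f x with hsmall
  have hsplit : f = large + small := by
    funext x; simp only [hlarge, hsmall, Pi.add_apply]; split_ifs <;> simp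
  have hpointwise (x : X) : |T f x| * (Set.Ioc 0 |T f x|).indicator (fun l => l ^ (p - 2)) l ≤
      (2 * |T large x| + 4 * |T small x| ^ 2 / l) * l ^ (p - 2) := by
    by_cases hx : l ≤ |T f x|
    · rw [Set.indicator_of_mem (show l ∈ Set.Ioc 0 |T f x| from ⟨hl, hx⟩)]
      gcongr
      exact le_two_mul_add_of_le_add hl hx (abs_nonneg _)
        ((congrArg (fun g => |T g x|) hsplit).trans_le (hsub _ _ x))
    · rw [Set.indicator_of_notMem fun h => hx h.2, mul_zero]
      positivity
  calc _ ≤ ∑ x, (2 * |T large x| + 4 * |T small x| ^ 2 / l) * l ^ (p - 2) :=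
        sum_le_sum fun x _ => hpointwise x
    _ = 2 * l ^ (p - 2) * ∑ x, |T large x| + 4 * l ^ (p - 3) * ∑ x, |T small x| ^ 2 := by
        rw [mul_sum, mul_sum, ← sum_add_distrib, show p - 3 = p - 2 - 1 by ring,
          Real.rpow_sub_one hl.ne']
        exact sum_congr rfl fun x _ => by ring
    _ ≤ 2 * l ^ (p - 2) * (A * ∑ x, |large x|) + 4 * l ^ (p - 3) * (B * ∑ x, |small x| ^ 2) := by
        gcongr
        exacts [h1 _, h2 _]
    _ = _ := by
        simp only [mul_sum, ← sum_add_distrib, hlarge, hsmall]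
        refine sum_congr rfl fun x _ => ?_
        by_cases hx : l ≤ |f x| / a
        · simp [Set.indicator, hl, hx, hx.not_gt]; ring
        · simp [Set.indicator, hx, not_le.1 hx]; ring

lemma integrable_truncation (hp : 1 < p) (hp2 : p < 2) (ha : 0 < a) {u : ℝ} (hu : 0 ≤ u) :
    MeasureTheory.Integrable fun l =>
      2 * A * u * (Set.Ioc 0 (u / a)).indicator (fun l => l ^ (p - 2)) l +
        4 * B * u ^ 2 * (Set.Ioi (u / a)).indicator (fun l => l ^ (p - 3)) l := by
  refine ((integrable_indicator_Ioc_rpow hp (by positivity)).const_mul _).add ?_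
  rcases hu.eq_or_lt with rfl | hu
  · simp
  · exact (integrable_indicator_Ioi_rpow hp2 (by positivity)).const_mul _

lemma integral_truncation (hp : 1 < p) (hp2 : p < 2) (hA : 0 < A) (hB : 0 < B) {u : ℝ}
    (hu : 0 ≤ u) :
    ∫ l, (2 * A * u * (Set.Ioc 0 (u / (A / B))).indicator (fun l => l ^ (p - 2)) l +
        4 * B * u ^ 2 * (Set.Ioi (u / (A / B))).indicator (fun l => l ^ (p - 3)) l) =
      (2 / (p - 1) + 4 / (2 - p)) * A ^ (2 - p) * B ^ (p - 1) * u ^ p := by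
  rcases hu.eq_or_lt with rfl | hu
  · simp [Real.zero_rpow (by linarith : p ≠ 0)]
  have hc : 0 < u / (A / B) := by positivity
  have hp1 : p - 1 ≠ 0 := by linarith
  have hp2' : 2 - p ≠ 0 := by linarith
  rw [MeasureTheory.integral_add ((integrable_indicator_Ioc_rpow hp hc.le).const_mul _)
      ((integrable_indicator_Ioi_rpow hp2 hc).const_mul _),
    MeasureTheory.integral_const_mul, MeasureTheory.integral_const_mul,
    integral_indicator_Ioc_rpow hp hc.le, integral_indicator_Ioi_rpow hp2 hc]
  simp only [Real.div_rpow, hu.le, hA.le, hB.le, div_nonneg, Real.rpow_sub, hu, hA, hB,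
    Real.rpow_one, Real.rpow_two]
  field_simp

theorem sum_abs_rpow_le_of_one_of_two (hp : 1 < p) (hp2 : p < 2) (hA : 0 < A) (hB : 0 < B)
    (hsub : ∀ f g x, |T (f + g) x| ≤ |T f x| + |T g x|)
    (h1 : ∀ f, ∑ x, |T f x| ≤ A * ∑ x, |f x|)
    (h2 : ∀ f, ∑ x, |T f x| ^ 2 ≤ B * ∑ x, |f x| ^ 2) (f : X → ℝ) :
    ∑ x, |T f x| ^ p ≤
      (2 + 4 * (p - 1) / (2 - p)) * A ^ (2 - p) * B ^ (p - 1) * ∑ x, |f x| ^ p := by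
  have hp1 : 0 < p - 1 := sub_pos.2 hp
  have hlow (x : X) : MeasureTheory.Integrable fun l =>
      |T f x| * (Set.Ioc 0 |T f x|).indicator (fun l => l ^ (p - 2)) l :=
    (integrable_indicator_Ioc_rpow hp (abs_nonneg _)).const_mul _
  have hhigh (x : X) := integrable_truncation (A := A) (B := B) hp hp2 (div_pos hA hB)
    (abs_nonneg (f x))
  have hint := MeasureTheory.integral_mono
    (MeasureTheory.integrable_finsetSum univ fun x _ => hlow x)
    (MeasureTheory.integrable_finsetSum univ fun x _ => hhigh x) fun l =>
      sum_mul_indicator_Ioc_le (p := p) (div_pos hA hB) hsub h1 h2 f l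
  rw [MeasureTheory.integral_finsetSum _ fun x _ => hlow x,
    MeasureTheory.integral_finsetSum _ fun x _ => hhigh x] at hint
  simp only [MeasureTheory.integral_const_mul, integral_indicator_Ioc_rpow hp (abs_nonneg _),
    integral_truncation hp hp2 hA hB (abs_nonneg _)] at hint
  calc ∑ x, |T f x| ^ p = (p - 1) * ∑ x, |T f x| * (|T f x| ^ (p - 1) / (p - 1)) := by
        rw [mul_sum]
        refine sum_congr rfl fun x _ => ?_
        rw [← rpow_sub_one_mul_self (by linarith) (abs_nonneg (T f x))]
        field_simp
    _ ≤ (p - 1) * ∑ x, (2 / (p - 1) + 4 / (2 - p)) * A ^ (2 - p) * B ^ (p - 1) * |f x| ^ p := by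
        gcongr
    _ = _ := by rw [← mul_sum]; field_simp

end Interpolation

section CentralBinomial

lemma sixteen_pow_le_mul_centralBinom_sq {n : ℕ} (hn : 1 ≤ n) :
    (16 : ℝ) ^ n ≤ 4 * n * (n.centralBinom : ℝ) ^ 2 := by
  induction n, hn using Nat.le_induction with
  | base => norm_num [Nat.centralBinom]
  | succ n hn ih =>
    have hrec : ((n : ℝ) + 1) * (n + 1).centralBinom = 2 * (2 * n + 1) * n.centralBinom := by
      exact_mod_cast Nat.succ_mul_centralBinom_succ n
    refine le_of_mul_le_mul_right ?_ (by positivity : (0 : ℝ) < n + 1)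
    calc (16 : ℝ) ^ (n + 1) * (n + 1) ≤ 16 * (4 * n * (n.centralBinom : ℝ) ^ 2) * (n + 1) := by
          rw [pow_succ']; gcongr
      _ ≤ 4 * (2 * (2 * n + 1) * (n.centralBinom : ℝ)) ^ 2 := by
          nlinarith [sq_nonneg (n.centralBinom : ℝ)]
      _ = 4 * (n + 1 : ℕ) * ((n + 1).centralBinom : ℝ) ^ 2 * (n + 1) := by
          rw [← hrec]; push_cast; ring

lemma choose_mid_succ_eq {r t : ℕ} (ht : t ≤ r) :
    ((2 * r).choose (r + (t + 1)) : ℝ) = (2 * r).choose (r + t) * ((r - t) / (r + t + 1)) := by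
  have h := congrArg (Nat.cast (R := ℝ)) (Nat.choose_succ_right_eq (2 * r) (r + t))
  rw [show 2 * r - (r + t) = r - t by omega] at h
  push_cast [Nat.cast_sub ht] at h
  rw [← add_assoc, ← mul_div_assoc, ← h, mul_div_cancel_right₀ _ (by positivity)]

lemma one_sub_sq_succ_div_le {r t : ℝ} (ht : 0 ≤ t) (htr : (t + 1) ^ 2 ≤ r) :
    1 - (t + 1) ^ 2 / r ≤ (1 - t ^ 2 / r) * ((r - t) / (r + t + 1)) := by
  have hr : 0 < r := by nlinarith
  have hratio : 1 - (2 * t + 1) / r ≤ (r - t) / (r + t + 1) := by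
    rw [one_sub_div hr.ne', div_le_div_iff₀ hr (by positivity)]
    nlinarith
  have hfactor : 0 ≤ 1 - t ^ 2 / r := by
    rw [sub_nonneg, div_le_one hr]; nlinarith
  calc 1 - (t + 1) ^ 2 / r ≤ 1 - (t + 1) ^ 2 / r + t ^ 2 / r * ((2 * t + 1) / r) :=
        le_add_of_nonneg_right (by positivity)
    _ = (1 - t ^ 2 / r) * (1 - (2 * t + 1) / r) := by field_simp; ring
    _ ≤ _ := mul_le_mul_of_nonneg_left hratio hfactor

lemma centralBinom_mul_one_sub_le {r : ℕ} (hr : 1 ≤ r) (t : ℕ) :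
    (r.centralBinom : ℝ) * (1 - (t : ℝ) ^ 2 / r) ≤ (2 * r).choose (r + t) := by
  have hr' : (0 : ℝ) < r := by exact_mod_cast hr
  induction t with
  | zero => simp [Nat.centralBinom]
  | succ t ih =>
    push_cast
    rcases le_or_gt ((t + 1 : ℝ) ^ 2) r with htr | htr
    · have ht : (t : ℝ) ≤ r := by nlinarith [(Nat.cast_nonneg t : (0 : ℝ) ≤ t)]
      rw [choose_mid_succ_eq (Nat.cast_le.1 ht)]
      calc _ ≤ (r.centralBinom : ℝ) * ((1 - (t : ℝ) ^ 2 / r) * ((r - t) / (r + t + 1))) := by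
            gcongr; exact one_sub_sq_succ_div_le t.cast_nonneg htr
        _ = r.centralBinom * (1 - (t : ℝ) ^ 2 / r) * ((r - t) / (r + t + 1)) := by ring
        _ ≤ _ := mul_le_mul_of_nonneg_right ih (div_nonneg (sub_nonneg.2 ht) (by positivity))
    · have : 1 - (t + 1 : ℝ) ^ 2 / r ≤ 0 := by rw [sub_nonpos, one_le_div hr']; exact htr.le
      exact (mul_nonpos_of_nonneg_of_nonpos (Nat.cast_nonneg _) this).trans (Nat.cast_nonneg _)

lemma four_pow_le_sqrt_mul_choose {r t : ℕ} (hr : 1 ≤ r) (ht : 2 * t ^ 2 ≤ r) :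
    (4 : ℝ) ^ r ≤ 4 * √r * (2 * r).choose (r + t) := by
  have hr' : (0 : ℝ) < r := by exact_mod_cast hr
  have hcentral : (4 : ℝ) ^ r ≤ 2 * √r * r.centralBinom := by
    rw [← pow_le_pow_iff_left₀ (by positivity) (by positivity) two_ne_zero]
    calc ((4 : ℝ) ^ r) ^ 2 = 16 ^ r := by rw [← pow_mul, mul_comm, pow_mul]; norm_num
      _ ≤ _ := sixteen_pow_le_mul_centralBinom_sq hr
      _ = _ := by rw [mul_pow, mul_pow, Real.sq_sqrt hr'.le]; ring
  have hhalf : (1 : ℝ) / 2 ≤ 1 - (t : ℝ) ^ 2 / r := by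
    have : 2 * (t : ℝ) ^ 2 ≤ r := by exact_mod_cast ht
    rw [le_sub_comm, div_le_iff₀ hr']; linarith
  calc (4 : ℝ) ^ r ≤ 2 * √r * r.centralBinom := hcentral
    _ = 4 * √r * (r.centralBinom * (1 / 2)) := by ring
    _ ≤ 4 * √r * (r.centralBinom * (1 - (t : ℝ) ^ 2 / r)) := by gcongr
    _ ≤ _ := by gcongr; exact centralBinom_mul_one_sub_le hr t

end CentralBinomial

section Smoothing

open Polynomial
open scoped fwdDiff

lemma coeff_pow_nonneg {P : ℝ[X]} (hP : ∀ i, 0 ≤ P.coeff i) (k i : ℕ) : 0 ≤ (P ^ k).coeff i := by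
  induction k generalizing i with
  | zero => rw [pow_zero, coeff_one]; split_ifs <;> norm_num
  | succ k ih =>
    rw [pow_succ, coeff_mul]
    exact sum_nonneg fun x _ => mul_nonneg (ih _) (hP _)

lemma sum_range_coeff_le_eval_one {P : ℝ[X]} (hP : ∀ i, 0 ≤ P.coeff i) (n : ℕ) :
    ∑ i ∈ range n, P.coeff i ≤ P.eval 1 := by
  rw [eval_eq_sum_range' (lt_max_of_lt_right (Nat.lt_succ_self P.natDegree) :
    P.natDegree < max n (P.natDegree + 1))]
  simp only [one_pow, mul_one]
  exact sum_le_sum_of_subset_of_nonneg (range_subset_range.2 (le_max_left _ _)) fun i _ _ => hP i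

/-- The generating polynomial of the uniform average over a window of length `w`. -/
def windowPoly (w : ℕ) : ℝ[X] := C (w : ℝ)⁻¹ * ∑ i ∈ range w, X ^ i

/-- The quotient of `1 - windowPoly w` by `1 - X`: it expresses the deviation of a function from its
window averages through its differences. -/
def rampPoly (w : ℕ) : ℝ[X] := C (w : ℝ)⁻¹ * ∑ i ∈ range w, ∑ j ∈ range i, X ^ j

/-- The `m`-fold iterated smoothing polynomial: its deviation from `1` vanishes to order `m`
at `X = 1`. -/
def smoothPoly (m w : ℕ) : ℝ[X] := 1 - (1 - windowPoly w) ^ m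

variable {m w : ℕ}

lemma one_sub_windowPoly (hw : w ≠ 0) : 1 - windowPoly w = rampPoly w * (1 - X) := by
  have hw' : (w : ℝ) ≠ 0 := by exact_mod_cast hw
  rw [rampPoly, windowPoly, mul_assoc, sum_mul, sum_congr rfl fun i _ => geom_sum_mul_neg X i,
    sum_sub_distrib, mul_sub, sum_const, card_range, nsmul_eq_mul, mul_one, ← C_eq_natCast,
    ← C_mul, inv_mul_cancel₀ hw', C_1]

lemma smoothPoly_add_rampPoly_pow_mul (m : ℕ) (hw : w ≠ 0) :
    smoothPoly m w + rampPoly w ^ m * (1 - X) ^ m = 1 := by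
  rw [← mul_pow, ← one_sub_windowPoly hw, smoothPoly, sub_add_cancel]

lemma coeff_windowPoly (w i : ℕ) : (windowPoly w).coeff i = if i < w then (w : ℝ)⁻¹ else 0 := by
  simp [windowPoly, coeff_C_mul, finsetSum_coeff, coeff_X_pow]

lemma coeff_windowPoly_nonneg (w i : ℕ) : 0 ≤ (windowPoly w).coeff i := by
  rw [coeff_windowPoly]; split_ifs <;> positivity

lemma coeff_windowPoly_le (w i : ℕ) : (windowPoly w).coeff i ≤ (w : ℝ)⁻¹ := by
  rw [coeff_windowPoly]; split_ifs
  · exact le_rfl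
  · positivity

lemma eval_one_windowPoly (hw : w ≠ 0) : (windowPoly w).eval 1 = 1 := by
  simp [windowPoly, eval_finsetSum, hw]

lemma coeff_windowPoly_pow_succ_le (hw : w ≠ 0) (k i : ℕ) :
    (windowPoly w ^ (k + 1)).coeff i ≤ (w : ℝ)⁻¹ := by
  rw [pow_succ, coeff_mul, Finset.Nat.sum_antidiagonal_eq_sum_range_succ_mk]
  calc ∑ j ∈ range (i + 1), (windowPoly w ^ k).coeff j * (windowPoly w).coeff (i - j)
      ≤ ∑ j ∈ range (i + 1), (windowPoly w ^ k).coeff j * (w : ℝ)⁻¹ := by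
        gcongr with j
        · exact coeff_pow_nonneg (coeff_windowPoly_nonneg w) k j
        · exact coeff_windowPoly_le w _
    _ ≤ (windowPoly w ^ k).eval 1 * (w : ℝ)⁻¹ := by
        rw [← sum_mul]
        gcongr
        exact sum_range_coeff_le_eval_one (coeff_pow_nonneg (coeff_windowPoly_nonneg w) k) _
    _ = (w : ℝ)⁻¹ := by rw [eval_pow, eval_one_windowPoly hw, one_pow, one_mul]

lemma smoothPoly_eq_sum (m w : ℕ) :
    smoothPoly m w = -∑ k ∈ range m, C ((-1) ^ (k + 1) * (m.choose (k + 1) : ℝ)) *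
      windowPoly w ^ (k + 1) := by
  rw [smoothPoly, sub_eq_neg_add 1 (windowPoly w), add_pow, sum_range_succ']
  have hterm (k : ℕ) : (-windowPoly w) ^ (k + 1) * 1 ^ (m - (k + 1)) * (m.choose (k + 1) : ℝ[X]) =
      C ((-1) ^ (k + 1) * (m.choose (k + 1) : ℝ)) * windowPoly w ^ (k + 1) := by
    rw [neg_pow, C_mul, C_pow, C_neg, C_1, C_eq_natCast, one_pow]
    ring
  simp only [hterm]
  simp

lemma abs_coeff_smoothPoly_le (m : ℕ) (hw : w ≠ 0) (i : ℕ) :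
    |(smoothPoly m w).coeff i| ≤ 2 ^ m / w := by
  rw [smoothPoly_eq_sum, coeff_neg, abs_neg, finsetSum_coeff]
  calc _ ≤ ∑ k ∈ range m, (m.choose (k + 1) : ℝ) * (w : ℝ)⁻¹ := by
        refine (abs_sum_le_sum_abs _ _).trans (sum_le_sum fun k _ => ?_)
        rw [coeff_C_mul, abs_mul, abs_mul, abs_pow, abs_neg, abs_one, one_pow, one_mul,
          Nat.abs_cast, abs_of_nonneg (coeff_pow_nonneg (coeff_windowPoly_nonneg w) _ _)]
        gcongr
        exact coeff_windowPoly_pow_succ_le hw k i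
    _ ≤ 2 ^ m / w := by
        have hchoose := Nat.sum_range_choose m
        rw [sum_range_succ'] at hchoose
        rw [← sum_mul, ← div_eq_mul_inv]
        gcongr
        exact_mod_cast Nat.le.intro hchoose

lemma coeff_rampPoly (w i : ℕ) :
    (rampPoly w).coeff i = (w : ℝ)⁻¹ * ∑ a ∈ range w, if i < a then 1 else 0 := by
  simp [rampPoly, coeff_C_mul, finsetSum_coeff, coeff_X_pow]

lemma coeff_rampPoly_nonneg (w i : ℕ) : 0 ≤ (rampPoly w).coeff i := by
  rw [coeff_rampPoly]
  exact mul_nonneg (by positivity) (sum_nonneg fun a _ => by split_ifs <;> norm_num)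

lemma eval_one_rampPoly_nonneg (w : ℕ) : 0 ≤ (rampPoly w).eval 1 := by
  simp only [rampPoly, eval_mul, eval_C, eval_finsetSum, eval_pow, eval_X, one_pow, sum_const,
    card_range, nsmul_eq_mul, mul_one]
  positivity

lemma eval_one_rampPoly_le (hw : w ≠ 0) : (rampPoly w).eval 1 ≤ w := by
  have hw' : (0 : ℝ) < w := by positivity
  simp only [rampPoly, eval_mul, eval_C, eval_finsetSum, eval_pow, eval_X, one_pow, sum_const,
    card_range, nsmul_eq_mul, mul_one]
  rw [inv_mul_le_iff₀ hw']
  calc ∑ i ∈ range w, (i : ℝ) ≤ ∑ _ ∈ range w, (w : ℝ) := by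
        gcongr with _ hi; exact (mem_range.1 hi).le
    _ = w * w := by simp

lemma sum_range_coeff_rampPoly_pow_le (hw : w ≠ 0) (m n : ℕ) :
    ∑ i ∈ range n, (rampPoly w ^ m).coeff i ≤ (w : ℝ) ^ m := by
  refine (sum_range_coeff_le_eval_one (coeff_pow_nonneg (coeff_rampPoly_nonneg w) m) n).trans ?_
  rw [eval_pow]
  exact pow_le_pow_left₀ (eval_one_rampPoly_nonneg w) (eval_one_rampPoly_le hw) m

lemma natDegree_smoothPoly_lt (hm : m ≠ 0) (hw : w ≠ 0) : (smoothPoly m w).natDegree < m * w := by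
  have hbox : (windowPoly w).natDegree ≤ w - 1 := by
    rw [natDegree_le_iff_coeff_eq_zero]
    exact fun n hn => by rw [coeff_windowPoly, if_neg (by omega)]
  have hsub : (1 - windowPoly w).natDegree ≤ w - 1 :=
    (natDegree_sub_le_of_le natDegree_one.le hbox).trans (by simp)
  calc (smoothPoly m w).natDegree ≤ max 0 (m * (w - 1)) :=
        natDegree_sub_le_of_le natDegree_one.le (natDegree_pow_le_of_le m hsub)
    _ = m * (w - 1) := Nat.max_eq_right (Nat.zero_le _)
    _ < m * w := Nat.mul_lt_mul_of_pos_left (by omega) (by omega)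

lemma natDegree_rampPoly_pow_lt (hm : m ≠ 0) (hw : w ≠ 0) :
    (rampPoly w ^ m).natDegree < m * w := by
  have hramp : (rampPoly w).natDegree ≤ w - 1 := by
    rw [natDegree_le_iff_coeff_eq_zero]
    refine fun n hn => ?_
    rw [coeff_rampPoly, sum_eq_zero fun a ha => if_neg (by rw [mem_range] at ha; omega), mul_zero]
  calc (rampPoly w ^ m).natDegree ≤ m * (w - 1) := natDegree_pow_le_of_le m hramp
    _ < m * w := Nat.mul_lt_mul_of_pos_left (by omega) (by omega)

variable {M : Type*} [AddCommMonoid M]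

lemma aeval_funLeft_add_apply (h : M) (P : ℝ[X]) {n : ℕ} (hP : P.natDegree < n) (f : M → ℝ)
    (y : M) :
    aeval (LinearMap.funLeft ℝ ℝ (· + h)) P f y = ∑ i ∈ range n, P.coeff i * f (y + i • h) := by
  have hpow (i : ℕ) (y : M) : (LinearMap.funLeft ℝ ℝ (· + h) ^ i) f y = f (y + i • h) := by
    induction i generalizing y with
    | zero => simp
    | succ i ih => rw [pow_succ', Module.End.mul_apply, LinearMap.funLeft_apply, ih, succ_nsmul',
        add_assoc]
  simp [aeval_eq_sum_range' hP, hpow]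

lemma one_sub_funLeft_add_pow_apply (h : M) (m : ℕ) (f : M → ℝ) :
    ((1 - LinearMap.funLeft ℝ ℝ (· + h)) ^ m) f = (-1 : ℝ) ^ m • Δ_[h] ^[m] f := by
  induction m with
  | zero => simp
  | succ m ih =>
    rw [pow_succ', Module.End.mul_apply, ih, Function.iterate_succ_apply', map_smul, pow_succ,
      mul_smul]
    congr 1
    funext y
    simp [fwdDiff]

theorem eq_sum_smoothPoly_add_sum_fwdDiff (hm : m ≠ 0) (hw : w ≠ 0) (h : M) (f : M → ℝ) (y : M) :
    f y = ∑ i ∈ range (m * w), (smoothPoly m w).coeff i * f (y + i • h) +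
      ∑ i ∈ range (m * w), (rampPoly w ^ m).coeff i * ((-1) ^ m * Δ_[h] ^[m] f (y + i • h)) := by
  have key := congrArg (fun P => aeval (LinearMap.funLeft ℝ ℝ (· + h)) P f y)
    (smoothPoly_add_rampPoly_pow_mul m hw)
  simp only [map_add, map_mul, map_pow, map_sub, map_one, aeval_X, LinearMap.add_apply,
    Module.End.mul_apply, one_sub_funLeft_add_pow_apply, Module.End.one_apply,
    Pi.add_apply] at key
  rw [← map_pow, aeval_funLeft_add_apply h _ (natDegree_smoothPoly_lt hm hw),
    aeval_funLeft_add_apply h _ (natDegree_rampPoly_pow_lt hm hw)] at key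
  exact key.symm

end Smoothing

section Walsh

open scoped symmDiff

variable {ι : Type*} [DecidableEq ι]

/-- The Walsh character of the group `(Finset ι, ∆)` with frequency `U`, i.e. `(-1) ^ #(U ∩ X)`. -/
def walsh (U X : Finset ι) : ℝ := ∏ i ∈ X, if i ∈ U then -1 else 1

lemma walsh_eq_neg_one_pow (U X : Finset ι) : walsh U X = (-1) ^ #(X ∩ U) := by
  rw [walsh, prod_ite, prod_const, prod_const_one, mul_one, filter_mem_eq_inter]

lemma walsh_comm (U X : Finset ι) : walsh U X = walsh X U := by
  rw [walsh_eq_neg_one_pow, walsh_eq_neg_one_pow, inter_comm]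

lemma walsh_mul_self (U X : Finset ι) : walsh U X * walsh U X = 1 := by
  rw [walsh_eq_neg_one_pow, ← pow_add, Even.neg_one_pow ⟨_, rfl⟩]

lemma walsh_union_of_disjoint (U : Finset ι) {X Y : Finset ι} (h : Disjoint X Y) :
    walsh U (X ∪ Y) = walsh U X * walsh U Y :=
  prod_union h

lemma walsh_symmDiff (U X Y : Finset ι) : walsh U (X ∆ Y) = walsh U X * walsh U Y := by
  have hX : walsh U X = walsh U (X \ Y) * walsh U (X ∩ Y) := by
    rw [← walsh_union_of_disjoint U (disjoint_sdiff_inter X Y), sdiff_union_inter]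
  have hY : walsh U Y = walsh U (Y \ X) * walsh U (X ∩ Y) := by
    rw [inter_comm, ← walsh_union_of_disjoint U (disjoint_sdiff_inter Y X), sdiff_union_inter]
  rw [hX, hY, mul_mul_mul_comm, walsh_mul_self, mul_one, symmDiff_def, sup_eq_union,
    walsh_union_of_disjoint U (disjoint_sdiff_sdiff)]

variable [Fintype ι]

lemma sum_walsh (X : Finset ι) : ∑ U, walsh U X = if X = ∅ then 2 ^ Fintype.card ι else 0 := by
  have hprod : ∑ U, walsh U X = ∏ i, (1 + if i ∈ X then (-1 : ℝ) else 1) := by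
    rw [prod_one_add, powerset_univ]
    exact sum_congr rfl fun U _ => walsh_comm U X
  rw [hprod]
  split_ifs with hX
  · norm_num [hX]
  · obtain ⟨i, hi⟩ := nonempty_iff_ne_empty.2 hX
    exact prod_eq_zero (mem_univ i) (by simp [hi])

lemma sum_walsh_mul_walsh (X Y : Finset ι) :
    ∑ U, walsh U X * walsh U Y = if X = Y then 2 ^ Fintype.card ι else 0 := by
  simp only [← walsh_symmDiff, sum_walsh, ← bot_eq_empty, symmDiff_eq_bot]

/-- The (unnormalised) Fourier transform on the group `(Finset ι, ∆)`. -/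
def walshTransform (f : Finset ι → ℝ) (U : Finset ι) : ℝ := ∑ X, f X * walsh U X

/-- Convolution on the group `(Finset ι, ∆)`. -/
def cubeConv (K f : Finset ι → ℝ) (X : Finset ι) : ℝ := ∑ Y, K Y * f (X ∆ Y)

lemma cubeConv_add_right (K f g : Finset ι → ℝ) :
    cubeConv K (f + g) = cubeConv K f + cubeConv K g := by
  funext X
  simp only [cubeConv, Pi.add_apply, mul_add, sum_add_distrib]

lemma sum_symmDiff_right (f : Finset ι → ℝ) (Y : Finset ι) : ∑ X, f (X ∆ Y) = ∑ X, f X :=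
  Function.Bijective.sum_comp (symmDiff_left_involutive Y).bijective f

lemma sum_walshTransform_sq (f : Finset ι → ℝ) :
    ∑ U, walshTransform f U ^ 2 = 2 ^ Fintype.card ι * ∑ X, f X ^ 2 := by
  calc ∑ U, walshTransform f U ^ 2
      = ∑ U, ∑ X, ∑ Y, f X * f Y * (walsh U X * walsh U Y) := by
        refine sum_congr rfl fun U _ => ?_
        rw [walshTransform, sq, sum_mul_sum]
        exact sum_congr rfl fun X _ => sum_congr rfl fun Y _ => mul_mul_mul_comm _ _ _ _
    _ = ∑ X, ∑ Y, f X * f Y * ∑ U, walsh U X * walsh U Y := by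
        rw [sum_comm]
        refine sum_congr rfl fun X _ => ?_
        rw [sum_comm]
        exact sum_congr rfl fun Y _ => (mul_sum _ _ _).symm
    _ = 2 ^ Fintype.card ι * ∑ X, f X ^ 2 := by
        rw [mul_sum]
        refine sum_congr rfl fun X _ => ?_
        simp only [sum_walsh_mul_walsh, mul_ite, mul_zero, sum_ite_eq, mem_univ, if_true]
        ring

lemma walshTransform_cubeConv (K f : Finset ι → ℝ) (U : Finset ι) :
    walshTransform (cubeConv K f) U = walshTransform K U * walshTransform f U := by
  calc walshTransform (cubeConv K f) U
      = ∑ Y, ∑ X, K Y * walsh U Y * (f (X ∆ Y) * walsh U (X ∆ Y)) := by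
        simp only [walshTransform, cubeConv, sum_mul]
        rw [sum_comm]
        refine sum_congr rfl fun Y _ => sum_congr rfl fun X _ => ?_
        rw [walsh_symmDiff]
        linear_combination (-K Y * f (X ∆ Y) * walsh U X) * walsh_mul_self U Y
    _ = walshTransform K U * walshTransform f U := by
        rw [walshTransform, sum_mul]
        refine sum_congr rfl fun Y _ => ?_
        rw [← mul_sum, sum_symmDiff_right fun X => f X * walsh U X]
        rfl

lemma sum_abs_cubeConv_le (K f : Finset ι → ℝ) :
    ∑ X, |cubeConv K f X| ≤ (∑ Y, |K Y|) * ∑ X, |f X| := by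
  calc ∑ X, |cubeConv K f X| ≤ ∑ X, ∑ Y, |K Y| * |f (X ∆ Y)| := by
        refine sum_le_sum fun X _ => (abs_sum_le_sum_abs _ _).trans_eq ?_
        exact sum_congr rfl fun Y _ => abs_mul _ _
    _ = (∑ Y, |K Y|) * ∑ X, |f X| := by
        rw [sum_comm, sum_mul]
        refine sum_congr rfl fun Y _ => ?_
        rw [← mul_sum, sum_symmDiff_right fun X => |f X|]

lemma sum_cubeConv_sq_le {K : Finset ι → ℝ} {b : ℝ} (hK : ∀ U, |walshTransform K U| ≤ b)
    (f : Finset ι → ℝ) : ∑ X, cubeConv K f X ^ 2 ≤ b ^ 2 * ∑ X, f X ^ 2 := by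
  refine le_of_mul_le_mul_left ?_ (by positivity : (0 : ℝ) < 2 ^ Fintype.card ι)
  calc 2 ^ Fintype.card ι * ∑ X, cubeConv K f X ^ 2
      = ∑ U, walshTransform K U ^ 2 * walshTransform f U ^ 2 := by
        simp only [← sum_walshTransform_sq, walshTransform_cubeConv, mul_pow]
    _ ≤ ∑ U, b ^ 2 * walshTransform f U ^ 2 := by
        gcongr ∑ U, ?_ * _ with U
        exact sq_le_sq' (neg_le_of_abs_le (hK U)) (le_of_abs_le (hK U))
    _ = 2 ^ Fintype.card ι * (b ^ 2 * ∑ X, f X ^ 2) := by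
        rw [← mul_sum, sum_walshTransform_sq, mul_left_comm]

end Walsh

section Sphere

open scoped symmDiff

variable {ι : Type*} [Fintype ι]

/-- The normalised indicator function of the Hamming sphere of radius `k`; it vanishes when the
sphere is empty. -/
def sphereKernel (k : ℕ) (Y : Finset ι) : ℝ :=
  if #Y = k then ((Fintype.card ι).choose k : ℝ)⁻¹ else 0

lemma sum_sphereKernel_mul (k : ℕ) (F : Finset ι → ℝ) :
    ∑ Y, sphereKernel k Y * F Y = 𝔼 Y ∈ powersetCard k univ, F Y := by
  simp only [sphereKernel, ite_mul, zero_mul]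
  rw [expect_eq_sum_div_card, card_powersetCard, card_univ, div_eq_inv_mul, mul_sum, ← sum_filter,
    univ_filter_card_eq]

lemma sum_abs_sphereKernel_le (k : ℕ) : ∑ Y : Finset ι, |sphereKernel k Y| ≤ 1 := by
  have habs (Y : Finset ι) : |sphereKernel k Y| = sphereKernel k Y * 1 := by
    rw [mul_one, abs_of_nonneg]
    unfold sphereKernel
    split_ifs <;> positivity
  simp only [habs, sum_sphereKernel_mul]
  rcases (powersetCard k (univ : Finset ι)).eq_empty_or_nonempty with h | h
  · simp [h]
  · exact (expect_const h 1).le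

variable [DecidableEq ι]

/-- The average of `f` over the Hamming sphere of radius `k` around `X`, in the group
`(Finset ι, ∆)`; it is `0` when `k` exceeds the dimension. -/
def sphereMean (k : ℕ) (f : Finset ι → ℝ) (X : Finset ι) : ℝ :=
  𝔼 Y ∈ powersetCard k univ, f (X ∆ Y)

/-- The Krawtchouk function: the Walsh transform of the normalised sphere of radius `k`. -/
def krawtchouk (k : ℕ) (U : Finset ι) : ℝ := 𝔼 Y ∈ powersetCard k univ, walsh U Y

lemma cubeConv_sphereKernel (k : ℕ) (f : Finset ι → ℝ) :
    cubeConv (sphereKernel k) f = sphereMean k f := by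
  funext X
  rw [cubeConv, sum_sphereKernel_mul, sphereMean]

variable {f : Finset ι → ℝ}

lemma sphereMean_nonneg (k : ℕ) (hf : 0 ≤ f) : 0 ≤ sphereMean k f :=
  fun _ => expect_nonneg fun _ _ => hf _

lemma sphereMean_rpow_le (k : ℕ) {p : ℝ} (hp : 1 ≤ p) (hf : 0 ≤ f) (X : Finset ι) :
    sphereMean k f X ^ p ≤ sphereMean k (fun Y => f Y ^ p) X :=
  expect_rpow_le _ hp fun _ _ => hf _

lemma sum_sphereMean_rpow_le (k : ℕ) {p : ℝ} (hp : 1 ≤ p) (hf : 0 ≤ f) :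
    ∑ X, sphereMean k f X ^ p ≤ ∑ X, f X ^ p := by
  have hfp (Y : Finset ι) : 0 ≤ f Y ^ p := Real.rpow_nonneg (hf Y) p
  calc ∑ X, sphereMean k f X ^ p ≤ ∑ X, |sphereMean k (fun Y => f Y ^ p) X| :=
        sum_le_sum fun X _ => (sphereMean_rpow_le k hp hf X).trans (le_abs_self _)
    _ ≤ (∑ Y : Finset ι, |sphereKernel k Y|) * ∑ X, |f X ^ p| := by
        rw [← cubeConv_sphereKernel]; exact sum_abs_cubeConv_le _ _
    _ ≤ 1 * ∑ X, |f X ^ p| := by gcongr; exact sum_abs_sphereKernel_le k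
    _ = ∑ X, f X ^ p := by simp only [one_mul, abs_of_nonneg (hfp _)]

lemma sphereMean_eq_sphereMean_compl {k : ℕ} (hk : k ≤ Fintype.card ι) (f : Finset ι → ℝ)
    (X : Finset ι) : sphereMean k f X = sphereMean (Fintype.card ι - k) f Xᶜ := by
  refine expect_nbij' compl compl ?_ ?_ ?_ ?_ ?_
  · intro Y hY
    simp only [mem_powersetCard_univ, card_compl] at hY ⊢
    omega
  · intro Y hY
    simp only [mem_powersetCard_univ, card_compl] at hY ⊢
    omega
  · exact fun Y _ => compl_compl Y
  · exact fun Y _ => compl_compl Y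
  · exact fun Y _ => by rw [compl_symmDiff_compl]

end Sphere

section RandomEmbedding

variable {α β : Type*}

lemma exists_perm_map_eq [Finite β] {S T : Finset β} (h : #S = #T) :
    ∃ π : Equiv.Perm β, S.map π.toEmbedding = T := by
  classical
  refine ⟨(equivOfCardEq h).extendSubtype, eq_of_subset_of_card_le ?_ ?_⟩
  · intro x hx
    obtain ⟨y, hy, rfl⟩ := mem_map.1 hx
    exact (equivOfCardEq h).extendSubtype_mem y hy
  · rw [card_map, h]

lemma expect_map_perm [Fintype β] [DecidableEq β] (F : Finset β → ℝ) (T : Finset β) :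
    𝔼 π : Equiv.Perm β, F (T.map π.toEmbedding) = 𝔼 S ∈ powersetCard #T univ, F S := by
  have hindep : ∀ S ∈ powersetCard #T univ, 𝔼 π : Equiv.Perm β, F (S.map π.toEmbedding) =
      𝔼 π : Equiv.Perm β, F (T.map π.toEmbedding) := by
    intro S hS
    obtain ⟨ρ, rfl⟩ := exists_perm_map_eq (mem_powersetCard_univ.1 hS).symm
    exact Fintype.expect_equiv (Equiv.mulRight ρ) _ _ fun π => by rw [map_map]; rfl
  have hmap (π : Equiv.Perm β) :
      𝔼 S ∈ powersetCard #T univ, F (S.map π.toEmbedding) = 𝔼 S ∈ powersetCard #T univ, F S :=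
    expect_equiv (Equiv.finsetCongr π)
      (fun S => by simp only [mem_powersetCard_univ, Equiv.finsetCongr_apply, card_map])
      fun _ _ => rfl
  have hne : (powersetCard #T (univ : Finset β)).Nonempty := ⟨T, by simp⟩
  calc 𝔼 π : Equiv.Perm β, F (T.map π.toEmbedding)
      = 𝔼 S ∈ powersetCard #T univ, 𝔼 π : Equiv.Perm β, F (S.map π.toEmbedding) := by
        rw [expect_congr rfl hindep, expect_const hne]
    _ = 𝔼 S ∈ powersetCard #T univ, F S := by
        rw [expect_comm, expect_congr rfl fun π _ => hmap π, expect_const univ_nonempty]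

lemma expect_map_embedding [Fintype α] [Fintype β] [Nonempty (α ↪ β)] (F : Finset β → ℝ)
    (T : Finset α) : 𝔼 e : α ↪ β, F (T.map e) = 𝔼 S ∈ powersetCard #T univ, F S := by
  classical
  have hperm (π : Equiv.Perm β) :
      𝔼 e : α ↪ β, F ((T.map e).map π.toEmbedding) = 𝔼 e : α ↪ β, F (T.map e) :=
    Fintype.expect_equiv (Equiv.embeddingCongr (Equiv.refl α) π) _ _ fun e => by rw [map_map]; rfl
  calc 𝔼 e : α ↪ β, F (T.map e)
      = 𝔼 π : Equiv.Perm β, 𝔼 e : α ↪ β, F ((T.map e).map π.toEmbedding) := by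
        rw [expect_congr rfl fun π _ => hperm π, expect_const univ_nonempty]
    _ = 𝔼 S ∈ powersetCard #T univ, F S := by
        rw [expect_comm]
        simp only [expect_map_perm, card_map]
        exact expect_const univ_nonempty _

end RandomEmbedding

section KrawtchoukDifference

open scoped fwdDiff

variable {Q P : Type*}

lemma disjoint_product_false_true (U U' : Finset P) :
    Disjoint (U ×ˢ ({false} : Finset Bool)) (U' ×ˢ {true}) :=
  disjoint_product.2 (.inr (by simp))

variable [Fintype Q] [Fintype P] [DecidableEq P]

/-- For signs `d` on a set `Q` of single coordinates and a set `P` of pairs of coordinates, a weight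
which vanishes unless `J` is the set of pairs whose two signs differ. Its mean over random signs
with a prescribed number of minus signs is a `#J`-th difference of Krawtchouk functions. -/
def pairWeight (J : Finset P) (d : Q ⊕ P × Bool → ℝ) : ℝ :=
  (∏ a, d (.inl a)) * (∏ i ∈ Jᶜ, (d (.inr (i, false)) / 2 + d (.inr (i, true)) / 2)) *
    ∏ i ∈ J, (-(d (.inr (i, false)) * d (.inr (i, true))) + 1)

/-- All single coordinates, one element of each pair outside `J` (the first for pairs in `U`, the
second otherwise) and both elements of each pair in `V`: a monomial of `pairWeight J`. -/
def pairSelection (J U V : Finset P) : Finset (Q ⊕ P × Bool) :=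
  univ.disjSum ((U ×ˢ {false} ∪ (Jᶜ \ U) ×ˢ {true}) ∪ V ×ˢ univ)

variable {J U V : Finset P}

lemma disjoint_product_union_product (hU : U ⊆ Jᶜ) (hV : V ⊆ J) :
    Disjoint (U ×ˢ ({false} : Finset Bool) ∪ (Jᶜ \ U) ×ˢ {true}) (V ×ˢ univ) := by
  have hJ : Disjoint Jᶜ V := disjoint_compl_left.mono_right hV
  rw [disjoint_union_left, disjoint_product, disjoint_product]
  exact ⟨.inl (hJ.mono_left hU), .inl (hJ.mono_left sdiff_subset)⟩

lemma card_pairSelection (hU : U ⊆ Jᶜ) (hV : V ⊆ J) :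
    #(pairSelection (Q := Q) J U V) = Fintype.card Q + #Jᶜ + 2 * #V := by
  rw [pairSelection, card_disjSum, card_union_of_disjoint (disjoint_product_union_product hU hV),
    card_union_of_disjoint (disjoint_product_false_true _ _)]
  simp only [card_product, card_singleton, card_univ, Fintype.card_bool, mul_one]
  have := card_sdiff_add_card_eq_card hU
  omega

lemma prod_pairSelection (hU : U ⊆ Jᶜ) (hV : V ⊆ J) (d : Q ⊕ P × Bool → ℝ) :
    ∏ a ∈ pairSelection J U V, d a = (∏ a, d (.inl a)) *
      ((∏ i ∈ U, d (.inr (i, false))) * ∏ i ∈ Jᶜ \ U, d (.inr (i, true))) *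
      ∏ i ∈ V, d (.inr (i, false)) * d (.inr (i, true)) := by
  rw [pairSelection, prod_disjSum, prod_union (disjoint_product_union_product hU hV),
    prod_union (disjoint_product_false_true _ _)]
  simp only [prod_product, prod_singleton, Fintype.prod_bool, mul_comm (d (.inr (_, true))),
    mul_assoc]

lemma pairWeight_eq_expect (J : Finset P) (d : Q ⊕ P × Bool → ℝ) :
    pairWeight J d = 𝔼 U ∈ Jᶜ.powerset, ∑ V ∈ J.powerset,
      (-1) ^ #V * ∏ a ∈ pairSelection J U V, d a := by
  rw [pairWeight, prod_add, prod_add, mul_assoc, sum_mul_sum, mul_sum, expect_eq_sum_div_card,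
    sum_div]
  refine sum_congr rfl fun U hU => ?_
  rw [mul_sum, sum_div]
  refine sum_congr rfl fun V hV => ?_
  rw [mem_powerset] at hU hV
  have hhalf : (2 : ℝ) ^ #Jᶜ = 2 ^ #U * 2 ^ #(Jᶜ \ U) := by
    rw [← pow_add, ← card_sdiff_add_card_eq_card hU, add_comm]
  rw [prod_pairSelection hU hV, card_powerset, Nat.cast_pow, Nat.cast_ofNat, hhalf, prod_neg,
    prod_div_distrib, prod_div_distrib, prod_const, prod_const, prod_const_one]
  field_simp

variable {d : Q ⊕ P × Bool → ℝ}

lemma abs_pairWeight_le (hd : ∀ a, d a = 1 ∨ d a = -1) (J : Finset P) :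
    |pairWeight J d| ≤ 2 ^ #J := by
  have habs (a) : |d a| = 1 := by rcases hd a with h | h <;> simp [h]
  have hcompl : ∏ i ∈ Jᶜ, |d (.inr (i, false)) / 2 + d (.inr (i, true)) / 2| ≤ 1 :=
    prod_le_one (fun _ _ => abs_nonneg _) fun i _ => by
      rcases hd (.inr (i, false)) with h | h <;> rcases hd (.inr (i, true)) with h' | h' <;>
        norm_num [h, h']
  have hJ : ∏ i ∈ J, |-(d (.inr (i, false)) * d (.inr (i, true))) + 1| ≤ 2 ^ #J := by
    rw [← prod_const]
    refine prod_le_prod (fun _ _ => abs_nonneg _) fun i _ => ?_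
    rcases hd (.inr (i, false)) with h | h <;> rcases hd (.inr (i, true)) with h' | h' <;>
      norm_num [h, h']
  rw [pairWeight, abs_mul, abs_mul, abs_prod, abs_prod, abs_prod]
  simp only [habs, prod_const_one, one_mul]
  calc _ ≤ 1 * (2 : ℝ) ^ #J := by gcongr
    _ = 2 ^ #J := one_mul _

lemma pairWeight_eq_zero (hd : ∀ a, d a = 1 ∨ d a = -1)
    (hJ : J ≠ ({i | d (.inr (i, false)) ≠ d (.inr (i, true))} : Finset P)) :
    pairWeight J d = 0 := by
  obtain ⟨i, hi⟩ : ∃ i, ¬(i ∈ J ↔ d (.inr (i, false)) ≠ d (.inr (i, true))) := by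
    by_contra! h
    exact hJ (Finset.ext fun i => by simpa using h i)
  rw [pairWeight]
  by_cases hiJ : i ∈ J
  · have heq : d (.inr (i, false)) = d (.inr (i, true)) := by simpa [hiJ] using hi
    rw [prod_eq_zero hiJ, mul_zero]
    rcases hd (.inr (i, true)) with h | h <;> norm_num [heq, h]
  · have hne : d (.inr (i, false)) ≠ d (.inr (i, true)) := by simpa [hiJ] using hi
    rw [prod_eq_zero (mem_compl.2 hiJ), mul_zero, zero_mul]
    rcases hd (.inr (i, false)) with h | h <;> rcases hd (.inr (i, true)) with h' | h' <;>
      first | exact absurd (h.trans h'.symm) hne | norm_num [h, h']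

lemma sum_abs_pairWeight_le (hd : ∀ a, d a = 1 ∨ d a = -1) (m : ℕ) :
    ∑ J ∈ powersetCard m univ, |pairWeight J d| ≤ 2 ^ m := by
  calc ∑ J ∈ powersetCard m univ, |pairWeight J d|
      ≤ ∑ J ∈ powersetCard m univ,
          if J = ({i | d (.inr (i, false)) ≠ d (.inr (i, true))} : Finset P) then 2 ^ m else 0 := by
        refine sum_le_sum fun J hJ => ?_
        split_ifs with h
        · exact (abs_pairWeight_le hd J).trans_eq (by rw [mem_powersetCard_univ.1 hJ])
        · rw [pairWeight_eq_zero hd h, abs_zero]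
    _ ≤ 2 ^ m := by
        rw [sum_ite_eq']
        split_ifs <;> first | exact le_rfl | positivity

variable {ι : Type*} [Fintype ι] [DecidableEq ι]

lemma expect_pairWeight [Nonempty (Q ⊕ P × Bool ↪ ι)] (J : Finset P) (Y : Finset ι) :
    𝔼 e : Q ⊕ P × Bool ↪ ι, pairWeight J (fun a => if e a ∈ Y then -1 else 1) =
      (-1) ^ #J * Δ_[2] ^[#J] (fun k => krawtchouk k Y) (Fintype.card Q + #Jᶜ) := by
  have hmonomial (T : Finset (Q ⊕ P × Bool)) :
      𝔼 e : Q ⊕ P × Bool ↪ ι, ∏ a ∈ T, (if e a ∈ Y then (-1 : ℝ) else 1) = krawtchouk #T Y := by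
    rw [krawtchouk, ← expect_map_embedding]
    simp only [walsh, prod_map]
  calc 𝔼 e : Q ⊕ P × Bool ↪ ι, pairWeight J (fun a => if e a ∈ Y then -1 else 1)
      = 𝔼 U ∈ Jᶜ.powerset, ∑ V ∈ J.powerset,
          (-1) ^ #V * krawtchouk (Fintype.card Q + #Jᶜ + 2 * #V) Y := by
        simp only [pairWeight_eq_expect]
        rw [expect_comm]
        refine expect_congr rfl fun U hU => ?_
        rw [expect_sum_comm]
        refine sum_congr rfl fun V hV => ?_
        rw [← mul_expect, hmonomial,
          card_pairSelection (mem_powerset.1 hU) (mem_powerset.1 hV)]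
    _ = ∑ j ∈ range (#J + 1),
          (#J).choose j • ((-1) ^ j * krawtchouk (Fintype.card Q + #Jᶜ + 2 * j) Y) := by
        rw [expect_const (powerset_nonempty _), sum_powerset_apply_card
          fun j => (-1) ^ j * krawtchouk (Fintype.card Q + #Jᶜ + 2 * j) Y]
    _ = _ := by
        rw [fwdDiff_iter_eq_sum_shift, mul_sum]
        refine sum_congr rfl fun j hj => ?_
        have hsign : (-1 : ℝ) ^ #J * (-1) ^ (#J - j) = (-1) ^ j := by
          rw [← pow_add, show #J + (#J - j) = j + 2 * (#J - j) by grind, pow_add, pow_mul]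
          norm_num
        rw [← hsign, smul_eq_mul, mul_comm 2 j, zsmul_eq_mul, nsmul_eq_mul]
        push_cast
        ring

lemma abs_fwdDiff_iter_krawtchouk_le {r r' m : ℕ} (hr : r' ≤ r)
    (hcard : r + r' + 2 * m ≤ Fintype.card ι) (Y : Finset ι) :
    |Δ_[2] ^[m] (fun k => krawtchouk k Y) r| ≤ 2 ^ m / (r' + m).choose m := by
  have : Nonempty (Fin (r - r') ⊕ Fin (r' + m) × Bool ↪ ι) := by
    refine Function.Embedding.nonempty_of_card_le ?_
    simp only [Fintype.card_sum, Fintype.card_prod, Fintype.card_fin, Fintype.card_bool]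
    omega
  set D := Δ_[2] ^[m] (fun k => krawtchouk k Y) r
  set s : (Fin (r - r') ⊕ Fin (r' + m) × Bool ↪ ι) → Fin (r - r') ⊕ Fin (r' + m) × Bool → ℝ :=
    fun e a => if e a ∈ Y then -1 else 1 with hs
  have hmean : ∀ J ∈ powersetCard m (univ : Finset (Fin (r' + m))),
      𝔼 e, pairWeight J (s e) = (-1) ^ m * D := by
    intro J hJ
    have hJm : #J = m := mem_powersetCard_univ.1 hJ
    rw [hs, expect_pairWeight, card_compl, Fintype.card_fin, Fintype.card_fin, hJm,
      Nat.add_sub_cancel, Nat.sub_add_cancel hr]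
  rw [le_div_iff₀ (by exact_mod_cast Nat.choose_pos (Nat.le_add_left m r'))]
  calc |D| * (r' + m).choose m
      = |𝔼 e, ∑ J ∈ powersetCard m (univ : Finset (Fin (r' + m))), pairWeight J (s e)| := by
        rw [expect_sum_comm, sum_congr rfl hmean, sum_const, card_powersetCard, card_univ,
          Fintype.card_fin, nsmul_eq_mul, abs_mul, abs_mul, abs_pow, abs_neg, abs_one, one_pow,
          one_mul, Nat.abs_cast, mul_comm]
    _ ≤ 𝔼 e, ∑ J ∈ powersetCard m (univ : Finset (Fin (r' + m))), |pairWeight J (s e)| :=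
        (abs_expect_le _ _).trans (expect_le_expect fun e _ => abs_sum_le_sum_abs _ _)
    _ ≤ 2 ^ m := by
        refine expect_le univ_nonempty fun e _ => sum_abs_pairWeight_le (fun a => ?_) m
        simp only [hs]
        split_ifs <;> simp

end KrawtchoukDifference

section SubcubeMean

open scoped symmDiff

variable {ι : Type*} [DecidableEq ι] {V : Finset ι}

/-- The average of `f` over the subcube `{X ∆ U | U ⊆ V}` through `X`: the conditional expectation
of `f` given the coordinates outside `V`. -/
def subcubeMean (V : Finset ι) (f : Finset ι → ℝ) (X : Finset ι) : ℝ := 𝔼 U ∈ V.powerset, f (X ∆ U)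

lemma subcubeMean_empty (f : Finset ι → ℝ) : subcubeMean ∅ f = f := by
  funext X
  rw [subcubeMean, powerset_empty, expect_singleton, ← bot_eq_empty, symmDiff_bot]

lemma subcubeMean_nonneg (V : Finset ι) {f : Finset ι → ℝ} (hf : 0 ≤ f) : 0 ≤ subcubeMean V f :=
  fun _ => expect_nonneg fun _ _ => hf _

lemma subcubeMean_symmDiff {U : Finset ι} (hU : U ⊆ V) (f : Finset ι → ℝ) (X : Finset ι) :
    subcubeMean V f (X ∆ U) = subcubeMean V f X := by
  have hmem : ∀ T ∈ V.powerset, U ∆ T ∈ V.powerset := fun T hT =>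
    mem_powerset.2 (symmDiff_subset_union.trans (union_subset hU (mem_powerset.1 hT)))
  refine expect_nbij' (U ∆ ·) (U ∆ ·) hmem hmem ?_ ?_ ?_
  · exact fun T _ => symmDiff_symmDiff_cancel_left U T
  · exact fun T _ => symmDiff_symmDiff_cancel_left U T
  · exact fun T _ => by rw [symmDiff_assoc]

variable [Fintype ι]

lemma sum_mul_subcubeMean {φ : Finset ι → ℝ} (hφ : ∀ U ⊆ V, ∀ X, φ (X ∆ U) = φ X)
    (f : Finset ι → ℝ) : ∑ X, φ X * subcubeMean V f X = ∑ X, φ X * f X := by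
  calc ∑ X, φ X * subcubeMean V f X = 𝔼 U ∈ V.powerset, ∑ X, φ (X ∆ U) * f (X ∆ U) := by
        simp only [subcubeMean, mul_expect]
        rw [← expect_sum_comm]
        exact expect_congr rfl fun U hU =>
          sum_congr rfl fun X _ => by rw [hφ U (mem_powerset.1 hU)]
    _ = ∑ X, φ X * f X := by
        simp only [sum_symmDiff_right fun X => φ X * f X]
        exact expect_const (powerset_nonempty V) _

lemma isReverseMartingale_subcubeMean {V : ℕ → Finset ι} (hV : Monotone V) (f : Finset ι → ℝ) :
    IsReverseMartingale fun s => subcubeMean (V s) f := by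
  intro s φ hφ
  have hinv : ∀ U ⊆ V (s + 1), ∀ X, φ (X ∆ U) = φ X := fun U hU X =>
    hφ _ _ fun t ht => subcubeMean_symmDiff (hU.trans (hV ht)) f X
  rw [sum_mul_subcubeMean fun U hU => hinv U (hU.trans (hV s.le_succ)), sum_mul_subcubeMean hinv]

lemma maximalBoundOn_subcubeMean {p : ℝ} (hp : 1 < p) {V : ℕ → Finset ι} (hV : Monotone V)
    (hV0 : V 0 = ∅) (n : ℕ) :
    MaximalBoundOn p ((p / (p - 1)) ^ p) (Set.Iic n) fun s => subcubeMean (V s) := by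
  intro f hf
  have hnonneg (s : ℕ) : 0 ≤ subcubeMean (V s) f := subcubeMean_nonneg _ hf
  refine ⟨partialSups (fun s => subcubeMean (V s) f) n, ?_, ?_, ?_⟩
  · exact (hnonneg 0).trans (le_partialSups_of_le (fun s => subcubeMean (V s) f) n.zero_le)
  · exact fun s hs => le_partialSups_of_le (fun s => subcubeMean (V s) f) hs
  · have := (isReverseMartingale_subcubeMean hV f).sum_partialSups_rpow_le hp n hnonneg
    simpa only [hV0, subcubeMean_empty] using this

/-- The average of `f (X ∆ U)` over a random set `U` of binomially distributed size: `#U = k` with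
probability `s.choose k / 2 ^ s`. -/
def binomialMean (s : ℕ) (f : Finset ι → ℝ) (X : Finset ι) : ℝ :=
  (∑ k ∈ range (s + 1), s.choose k * sphereMean k f X) / 2 ^ s

lemma expect_subcubeMean_map {α : Type*} [Fintype α] [Nonempty (α ↪ ι)] (S : Finset α)
    (f : Finset ι → ℝ) (X : Finset ι) :
    𝔼 e : α ↪ ι, subcubeMean (S.map e) f X = binomialMean #S f X := by
  classical
  have hparam (e : α ↪ ι) :
      subcubeMean (S.map e) f X = (∑ T ∈ S.powerset, f (X ∆ T.map e)) / 2 ^ #S := by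
    have himage : (S.map e).powerset = S.powerset.image fun T => T.map e := by
      ext U
      simp only [mem_powerset, subset_map_iff, mem_image, eq_comm]
    rw [subcubeMean, himage, expect_image (map_injective e).injOn, expect_eq_sum_div_card,
      card_powerset, Nat.cast_pow, Nat.cast_ofNat]
  calc 𝔼 e : α ↪ ι, subcubeMean (S.map e) f X
      = (∑ T ∈ S.powerset, sphereMean #T f X) / 2 ^ #S := by
        simp only [hparam, ← expect_div]
        rw [expect_sum_comm]
        simp only [expect_map_embedding fun T => f (X ∆ T), sphereMean]
    _ = binomialMean #S f X := by
        rw [sum_powerset_apply_card fun k => sphereMean k f X, binomialMean]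
        simp only [nsmul_eq_mul]

lemma maximalBoundOn_binomialMean {p : ℝ} (hp : 1 < p) :
    MaximalBoundOn p ((p / (p - 1)) ^ p) (Set.Iic (Fintype.card ι))
      (binomialMean (ι := ι)) := by
  have : Nonempty (Fin (Fintype.card ι) ↪ ι) := ⟨(Fintype.equivFin ι).symm.toEmbedding⟩
  set S : ℕ → Finset (Fin (Fintype.card ι)) := fun s => {i | i.val < s} with hS
  have hmono (e : Fin (Fintype.card ι) ↪ ι) : Monotone fun s => (S s).map e :=
    fun s t hst => map_subset_map.2 fun i => by simpa [hS] using fun hi => hi.trans_le hst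
  refine (MaximalBoundOn.expect hp.le fun e : Fin (Fintype.card ι) ↪ ι =>
    maximalBoundOn_subcubeMean hp (hmono e) (by simp [hS]) (Fintype.card ι)).comp_equiv
      (Equiv.refl _) id (fun _ hs => hs) fun s hs f X => ?_
  have hcard : #(S s) = s := by
    rw [hS, Fin.card_filter_val_lt, min_eq_right hs]
  exact ((expect_subcubeMean_map (S s) f X).trans (by rw [hcard])).symm

lemma binomialMean_nonneg (s : ℕ) {f : Finset ι → ℝ} (hf : 0 ≤ f) : 0 ≤ binomialMean s f :=
  fun X => div_nonneg (sum_nonneg fun k _ =>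
    mul_nonneg (Nat.cast_nonneg _) (sphereMean_nonneg k hf X)) (by positivity)

lemma sum_choose_mul_sphereMean_le {s : ℕ} {K : Finset ℕ} (hK : K ⊆ range (s + 1))
    {f : Finset ι → ℝ} (hf : 0 ≤ f) (X : Finset ι) :
    ∑ k ∈ K, s.choose k * sphereMean k f X ≤ 2 ^ s * binomialMean s f X := by
  rw [binomialMean, mul_div_cancel₀ _ (by positivity)]
  exact sum_le_sum_of_subset_of_nonneg hK fun k _ _ =>
    mul_nonneg (Nat.cast_nonneg _) (sphereMean_nonneg k hf X)

end SubcubeMean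

section Remainder

open scoped fwdDiff

variable {ι : Type*} [Fintype ι] {m w r : ℕ}

/-- The part of the sphere of radius `r` left over after replacing it by the combination of the
spheres of radii `r, r + 2, r + 4, …` with coefficients those of `smoothPoly m w`. -/
def remainderKernel (m w r : ℕ) (Y : Finset ι) : ℝ :=
  sphereKernel r Y -
    ∑ i ∈ range (m * w), (smoothPoly m w).coeff i * sphereKernel (r + i • 2) Y

lemma sum_remainderKernel_mul (m w r : ℕ) (F : Finset ι → ℝ) :
    ∑ Y, remainderKernel m w r Y * F Y = 𝔼 Y ∈ powersetCard r univ, F Y -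
      ∑ i ∈ range (m * w), (smoothPoly m w).coeff i * 𝔼 Y ∈ powersetCard (r + i • 2) univ, F Y := by
  simp only [remainderKernel, sub_mul, sum_sub_distrib, sum_mul, ← sum_sphereKernel_mul, mul_sum]
  rw [sum_comm]
  simp only [mul_assoc]

lemma sum_abs_remainderKernel_le (m : ℕ) (hw : w ≠ 0) (r : ℕ) :
    ∑ Y : Finset ι, |remainderKernel m w r Y| ≤ 1 + m * 2 ^ m := by
  calc ∑ Y : Finset ι, |remainderKernel m w r Y|
      ≤ ∑ Y : Finset ι, (|sphereKernel r Y| +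
          ∑ i ∈ range (m * w), 2 ^ m / w * |sphereKernel (r + i • 2) Y|) := by
        refine sum_le_sum fun Y _ => (abs_sub _ _).trans ?_
        gcongr
        refine (abs_sum_le_sum_abs _ _).trans (sum_le_sum fun i _ => ?_)
        rw [abs_mul]
        gcongr
        exact abs_coeff_smoothPoly_le m hw i
    _ ≤ 1 + ∑ i ∈ range (m * w), 2 ^ m / w * (1 : ℝ) := by
        rw [sum_add_distrib, sum_comm]
        simp only [← mul_sum]
        gcongr <;> exact sum_abs_sphereKernel_le _
    _ = 1 + m * 2 ^ m := by
        rw [sum_const, card_range, nsmul_eq_mul]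
        push_cast
        field_simp

variable [DecidableEq ι]

lemma cubeConv_remainderKernel (m w r : ℕ) (f : Finset ι → ℝ) (X : Finset ι) :
    cubeConv (remainderKernel m w r) f X = sphereMean r f X -
      ∑ i ∈ range (m * w), (smoothPoly m w).coeff i * sphereMean (r + i • 2) f X :=
  sum_remainderKernel_mul m w r _

lemma walshTransform_remainderKernel (hm : m ≠ 0) (hw : w ≠ 0) (r : ℕ) (U : Finset ι) :
    walshTransform (remainderKernel m w r) U = ∑ i ∈ range (m * w),
      (rampPoly w ^ m).coeff i * ((-1) ^ m * Δ_[2] ^[m] (fun k => krawtchouk k U) (r + i • 2)) := by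
  rw [walshTransform, sum_remainderKernel_mul, sub_eq_iff_eq_add']
  exact eq_sum_smoothPoly_add_sum_fwdDiff hm hw 2 (fun k => krawtchouk k U) r

lemma abs_walshTransform_remainderKernel_le (hm : m ≠ 0) (hw : w ≠ 0) (hmw : 8 * (m * w) ≤ r)
    (hr : 2 * r ≤ Fintype.card ι) (U : Finset ι) :
    |walshTransform (remainderKernel m w r) U| ≤ w ^ m * (2 ^ m / (r / 2 + m).choose m) := by
  have hcoeff (i : ℕ) : 0 ≤ (rampPoly w ^ m).coeff i :=
    coeff_pow_nonneg (coeff_rampPoly_nonneg w) m i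
  have hm_le : m ≤ m * w := Nat.le_mul_of_pos_right m (Nat.pos_of_ne_zero hw)
  rw [walshTransform_remainderKernel hm hw]
  calc |∑ i ∈ range (m * w), (rampPoly w ^ m).coeff i *
        ((-1) ^ m * Δ_[2] ^[m] (fun k => krawtchouk k U) (r + i • 2))|
      ≤ ∑ i ∈ range (m * w),
          (rampPoly w ^ m).coeff i * (2 ^ m / (r / 2 + m).choose m) := by
        refine (abs_sum_le_sum_abs _ _).trans (sum_le_sum fun i hi => ?_)
        rw [mem_range] at hi
        rw [abs_mul, abs_mul, abs_pow, abs_neg, abs_one, one_pow, one_mul,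
          abs_of_nonneg (hcoeff i), smul_eq_mul]
        exact mul_le_mul_of_nonneg_left
          (abs_fwdDiff_iter_krawtchouk_le (by omega) (by omega) U) (hcoeff i)
    _ ≤ w ^ m * (2 ^ m / (r / 2 + m).choose m) := by
        rw [← sum_mul]
        gcongr
        exact sum_range_coeff_rampPoly_pow_le hw m _

lemma pow_le_factorial_mul_choose (r m : ℕ) :
    (r : ℝ) ^ m ≤ 2 ^ m * (m.factorial * (r / 2 + m).choose m) := by
  have hr : r ≤ 2 * (r / 2 + 1) := by omega
  have hpow : (r / 2 + 1) ^ m ≤ m.factorial * (r / 2 + m).choose m := by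
    rw [← Nat.ascFactorial_eq_factorial_mul_choose]
    exact Nat.pow_succ_le_ascFactorial (r / 2 + 1) m
  calc (r : ℝ) ^ m ≤ (2 * (r / 2 + 1 : ℕ)) ^ m := by gcongr; exact_mod_cast hr
    _ ≤ 2 ^ m * (m.factorial * (r / 2 + m).choose m) := by
        rw [mul_pow]
        gcongr
        exact_mod_cast hpow

lemma sum_cubeConv_remainderKernel_sq_le (hm : m ≠ 0) (hw : w ≠ 0) (hmw : 8 * (m * w) ^ 2 ≤ r)
    (hr : 2 * r ≤ Fintype.card ι) (f : Finset ι → ℝ) :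
    ∑ X, cubeConv (remainderKernel m w r) f X ^ 2 ≤
      (4 ^ m * m.factorial) ^ 2 / r ^ m * ∑ X, f X ^ 2 := by
  have hmw_pos : 0 < m * w := Nat.pos_of_ne_zero (mul_ne_zero hm hw)
  have hmw_le : m * w ≤ (m * w) ^ 2 := Nat.le_self_pow two_ne_zero _
  have hw_le : w ≤ m * w := Nat.le_mul_of_pos_left w (Nat.pos_of_ne_zero hm)
  have hr_pos : (0 : ℝ) < r := by exact_mod_cast (by omega : 0 < r)
  have hchoose : (0 : ℝ) < (r / 2 + m).choose m := by
    exact_mod_cast Nat.choose_pos (Nat.le_add_left m _)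
  have hwr : ((w : ℝ) ^ m) ^ 2 ≤ r ^ m := by
    rw [← pow_mul, mul_comm, pow_mul]
    gcongr
    exact_mod_cast (Nat.pow_le_pow_left hw_le 2).trans (by omega)
  refine (sum_cubeConv_sq_le
    (abs_walshTransform_remainderKernel_le hm hw (by omega) hr) f).trans ?_
  gcongr
  calc ((w : ℝ) ^ m * (2 ^ m / (r / 2 + m).choose m)) ^ 2
      ≤ ((w : ℝ) ^ m * (4 ^ m * m.factorial / r ^ m)) ^ 2 := by
        gcongr ((w : ℝ) ^ m * ?_) ^ 2
        rw [div_le_div_iff₀ hchoose (by positivity), show (4 : ℝ) = 2 * 2 by norm_num, mul_pow,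
          mul_assoc, mul_assoc]
        gcongr
        exact pow_le_factorial_mul_choose r m
    _ = ((w : ℝ) ^ m) ^ 2 * ((4 ^ m * m.factorial) ^ 2 / (r ^ m) ^ 2) := by rw [mul_pow, div_pow]
    _ ≤ (r : ℝ) ^ m * ((4 ^ m * m.factorial) ^ 2 / (r ^ m) ^ 2) := by gcongr
    _ = (4 ^ m * m.factorial) ^ 2 / r ^ m := by field_simp

lemma sum_abs_cubeConv_remainderKernel_rpow_le {p : ℝ} (hp : 1 < p) (hp2 : p < 2) (hm : m ≠ 0)
    (hmp : 2 ≤ m * (p - 1)) (hw : w ≠ 0) (hmw : 8 * (m * w) ^ 2 ≤ r)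
    (hr : 2 * r ≤ Fintype.card ι) (f : Finset ι → ℝ) :
    ∑ X, |cubeConv (remainderKernel m w r) f X| ^ p ≤
      (2 + 4 * (p - 1) / (2 - p)) * (1 + m * 2 ^ m) ^ (2 - p) *
        ((4 ^ m * m.factorial) ^ 2) ^ (p - 1) * (1 / r ^ 2) * ∑ X, |f X| ^ p := by
  have hr_pos : 0 < r := (by positivity : 0 < 8 * (m * w) ^ 2).trans_le hmw
  have hr1 : (1 : ℝ) ≤ r := by exact_mod_cast hr_pos
  have hdecay : ((4 ^ m * m.factorial) ^ 2 / (r : ℝ) ^ m) ^ (p - 1) ≤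
      ((4 ^ m * m.factorial) ^ 2) ^ (p - 1) * (1 / r ^ 2) := by
    rw [Real.div_rpow (by positivity) (by positivity), div_eq_mul_one_div]
    gcongr
    rw [← Real.rpow_natCast_mul (by positivity), ← Real.rpow_ofNat]
    exact Real.rpow_le_rpow_of_exponent_le hr1 hmp
  have : 0 < p - 1 := by linarith
  have : 0 < 2 - p := by linarith
  refine (sum_abs_rpow_le_of_one_of_two (T := cubeConv (remainderKernel m w r)) hp hp2
    (by positivity : (0 : ℝ) < 1 + m * 2 ^ m)
    (by positivity : 0 < (4 ^ m * m.factorial) ^ 2 / (r : ℝ) ^ m) ?_ ?_ ?_ f).trans ?_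
  · intro f g X
    rw [cubeConv_add_right]
    exact abs_add_le _ _
  · intro f
    refine (sum_abs_cubeConv_le _ f).trans ?_
    gcongr
    exact sum_abs_remainderKernel_le m hw r
  · intro f
    simpa only [sq_abs] using sum_cubeConv_remainderKernel_sq_le hm hw hmw hr f
  · rw [mul_assoc _ (_ ^ (p - 1)) (1 / _)]
    gcongr

lemma sum_sphereMean_add_smul_le {n : ℕ} (hn : n ≠ 0) (hnr : 8 * n ^ 2 ≤ r) {f : Finset ι → ℝ}
    (hf : 0 ≤ f) (X : Finset ι) :
    ∑ i ∈ range n, sphereMean (r + i • 2) f X ≤ 4 * √r * binomialMean (2 * r) f X := by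
  have hn_pos : 0 < n := Nat.pos_of_ne_zero hn
  have hn_le : n ≤ n ^ 2 := Nat.le_self_pow two_ne_zero _
  have hinj : Function.Injective fun i : ℕ => r + i • 2 := fun i j h => by
    simpa only [smul_eq_mul, add_right_inj, Nat.mul_left_inj two_ne_zero] using h
  refine le_of_mul_le_mul_left ?_ (by positivity : (0 : ℝ) < 4 ^ r)
  calc (4 : ℝ) ^ r * ∑ i ∈ range n, sphereMean (r + i • 2) f X
      ≤ 4 * √r * ∑ i ∈ range n, (2 * r).choose (r + i • 2) * sphereMean (r + i • 2) f X := by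
        rw [mul_sum, mul_sum]
        refine sum_le_sum fun i hi => ?_
        rw [← mul_assoc]
        refine mul_le_mul_of_nonneg_right ?_ (sphereMean_nonneg _ hf X)
        refine four_pow_le_sqrt_mul_choose (by omega) ?_
        have := Nat.pow_le_pow_left (mem_range.1 hi).le 2
        rw [smul_eq_mul, mul_pow]
        omega
    _ ≤ 4 * √r * (4 ^ r * binomialMean (2 * r) f X) := by
        gcongr
        rw [← sum_image (f := fun k => ((2 * r).choose k : ℝ) * sphereMean k f X) hinj.injOn,
          show (4 : ℝ) = 2 ^ 2 by norm_num, ← pow_mul]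
        refine sum_choose_mul_sphereMean_le (fun k hk => ?_) hf X
        obtain ⟨i, hi, rfl⟩ := mem_image.1 hk
        rw [mem_range] at hi ⊢
        rw [smul_eq_mul]
        omega
    _ = 4 ^ r * (4 * √r * binomialMean (2 * r) f X) := mul_left_comm _ _ _

lemma sum_smoothPoly_mul_sphereMean_le (hm : m ≠ 0) (hw : w ≠ 0) (hmw : 8 * (m * w) ^ 2 ≤ r)
    (hrmw : r ≤ 36 * (m * w) ^ 2) {f : Finset ι → ℝ} (hf : 0 ≤ f) (X : Finset ι) :
    ∑ i ∈ range (m * w), (smoothPoly m w).coeff i * sphereMean (r + i • 2) f X ≤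
      24 * m * 2 ^ m * binomialMean (2 * r) f X := by
  have hsqrt : √(r : ℝ) ≤ 6 * (m * w) :=
    Real.sqrt_le_iff.2 ⟨by positivity, by rw [mul_pow]; norm_num; exact_mod_cast hrmw⟩
  calc ∑ i ∈ range (m * w), (smoothPoly m w).coeff i * sphereMean (r + i • 2) f X
      ≤ ∑ i ∈ range (m * w), 2 ^ m / w * sphereMean (r + i • 2) f X := by
        gcongr with i
        · exact sphereMean_nonneg _ hf X
        · exact (le_abs_self _).trans (abs_coeff_smoothPoly_le m hw i)
    _ ≤ 2 ^ m / w * (4 * √r * binomialMean (2 * r) f X) := by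
        rw [← mul_sum]
        gcongr
        exact sum_sphereMean_add_smul_le (mul_ne_zero hm hw) hmw hf X
    _ ≤ 2 ^ m / w * (4 * (6 * (m * w)) * binomialMean (2 * r) f X) := by
        gcongr
        exact binomialMean_nonneg _ hf X
    _ = 24 * m * 2 ^ m * binomialMean (2 * r) f X := by field_simp; ring

end Remainder

section CubeMaximal

lemma exists_smoothing_width {m r : ℕ} (hm : m ≠ 0) (hr : 8 * m ^ 2 ≤ r) :
    ∃ w ≠ 0, 8 * (m * w) ^ 2 ≤ r ∧ r ≤ 36 * (m * w) ^ 2 := by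
  have hpos : 0 < 8 * m ^ 2 := by positivity
  set q := r / (8 * m ^ 2)
  have hw : 1 ≤ q.sqrt := Nat.le_sqrt'.2 ((Nat.le_div_iff_mul_le hpos).2 (by linarith))
  have hlower : q.sqrt ^ 2 ≤ q := Nat.sqrt_le' q
  have hupper : q < (q.sqrt + 1) ^ 2 := Nat.lt_succ_sqrt' q
  refine ⟨q.sqrt, by omega, ?_, ?_⟩
  · calc 8 * (m * q.sqrt) ^ 2 = 8 * m ^ 2 * q.sqrt ^ 2 := by ring
      _ ≤ 8 * m ^ 2 * q := by gcongr
      _ ≤ r := Nat.mul_div_le r _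
  · calc r ≤ 8 * m ^ 2 * (q + 1) := (Nat.lt_mul_div_succ r hpos).le
      _ ≤ 8 * m ^ 2 * (q.sqrt + q.sqrt) ^ 2 := by gcongr; exact hupper.trans_le (by gcongr)
      _ ≤ 36 * (m * q.sqrt) ^ 2 := by nlinarith [sq_nonneg (m * q.sqrt)]

lemma sphereMean_le_binomialMean_add_abs_cubeConv {ι : Type*} [Fintype ι] [DecidableEq ι]
    {m w r : ℕ} (hm : m ≠ 0) (hw : w ≠ 0) (hmw : 8 * (m * w) ^ 2 ≤ r)
    (hrmw : r ≤ 36 * (m * w) ^ 2) {f : Finset ι → ℝ} (hf : 0 ≤ f) :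
    sphereMean r f ≤
      (24 * m * 2 ^ m : ℝ) • binomialMean (2 * r) f + |cubeConv (remainderKernel m w r) f| := by
  intro X
  have hsmooth := sum_smoothPoly_mul_sphereMean_le hm hw hmw hrmw hf X
  have hremainder := le_abs_self (cubeConv (remainderKernel m w r) f X)
  simp only [Pi.add_apply, Pi.smul_apply, Pi.abs_apply, smul_eq_mul]
  linarith [cubeConv_remainderKernel m w r f X]

universe u

variable {p : ℝ} {m : ℕ}

/-- The `ℓᵖ` norms of the remainders decay so fast in `r` that they can simply be summed. -/
lemma exists_maximalBoundOn_abs_cubeConv_remainderKernel (hp : 1 < p) (hp2 : p < 2) (hm : m ≠ 0)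
    (hmp : 2 ≤ m * (p - 1)) :
    ∃ C, ∀ (w : ℕ → ℕ) (ι : Type u) [Fintype ι] [DecidableEq ι] (s : Finset ℕ),
      (∀ r ∈ s, w r ≠ 0 ∧ 8 * (m * w r) ^ 2 ≤ r ∧ 2 * r ≤ Fintype.card ι) →
      MaximalBoundOn p C (s : Set ℕ)
        fun r (f : Finset ι → ℝ) => |cubeConv (remainderKernel m (w r) r) f| := by
  set R : ℝ := (2 + 4 * (p - 1) / (2 - p)) * (1 + m * 2 ^ m) ^ (2 - p) *
    ((4 ^ m * m.factorial) ^ 2) ^ (p - 1)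
  have hR : 0 ≤ R := by
    have : 0 < p - 1 := by linarith
    have : 0 < 2 - p := by linarith
    positivity
  refine ⟨R * ∑' r : ℕ, 1 / (r : ℝ) ^ 2, fun w ι _ _ s hs => .of_sum_le
    (c := fun r => R * (1 / (r : ℝ) ^ 2)) (by linarith) ?_ (fun r _ f _ => abs_nonneg _)
    fun r hr f hf => ?_⟩
  · rw [← mul_sum]
    refine mul_le_mul_of_nonneg_left ?_ hR
    exact (Real.summable_one_div_nat_pow.2 one_lt_two).sum_le_tsum _ fun _ _ => by positivity
  · obtain ⟨hw, hmw, hr⟩ := hs r hr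
    have := sum_abs_cubeConv_remainderKernel_rpow_le hp hp2 hm hmp hw hmw hr f
    simp only [abs_of_nonneg (hf _)] at this
    exact this

lemma exists_maximalBoundOn_sphereMean_Icc (hp : 1 < p) (hp2 : p < 2) (hm : m ≠ 0)
    (hmp : 2 ≤ m * (p - 1)) :
    ∃ C, ∀ (ι : Type u) [Fintype ι] [DecidableEq ι],
      MaximalBoundOn p C (Icc (8 * m ^ 2) (Fintype.card ι / 2)) (sphereMean (ι := ι)) := by
  choose! w hw hmw hrmw using fun r (hr : 8 * m ^ 2 ≤ r) => exists_smoothing_width hm hr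
  obtain ⟨C, hC⟩ := exists_maximalBoundOn_abs_cubeConv_remainderKernel.{u} hp hp2 hm hmp
  have hIcc : ∀ {n r : ℕ}, r ∈ Icc (8 * m ^ 2) (n / 2) → 8 * m ^ 2 ≤ r ∧ 2 * r ≤ n := by
    intro n r hr
    rw [mem_Icc] at hr
    omega
  refine ⟨_, fun ι _ _ => .add hp.le (((maximalBoundOn_binomialMean hp).comp_equiv
    (T' := fun r => binomialMean (2 * r)) (Equiv.refl _) (2 * ·) (fun r hr => (hIcc hr).2)
    fun _ _ _ _ => rfl).const_smul (by positivity : (0 : ℝ) ≤ 24 * m * 2 ^ m))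
    (hC w ι _ fun r hr => ⟨hw r (hIcc hr).1, hmw r (hIcc hr).1, (hIcc hr).2⟩)
    fun r hr f hf => ?_⟩
  have hmr := (hIcc hr).1
  exact sphereMean_le_binomialMean_add_abs_cubeConv hm (hw r hmr) (hmw r hmr) (hrmw r hmr) hf

lemma maximalBoundOn_sphereMean_range (hp : 1 ≤ p) (ι : Type*) [Fintype ι] [DecidableEq ι]
    (n : ℕ) : MaximalBoundOn p n (range n) (sphereMean (ι := ι)) :=
  .of_sum_le (c := 1) (by linarith) (by simp) (fun r _ _ hf => sphereMean_nonneg r hf)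
    fun r _ _ hf => by simpa using sum_sphereMean_rpow_le r hp hf

lemma maximalBoundOn_sphereMean_Iic_card {ι : Type*} [Fintype ι] [DecidableEq ι] {C : ℝ}
    (h : MaximalBoundOn p C (Set.Iic (Fintype.card ι / 2)) (sphereMean (ι := ι))) :
    MaximalBoundOn p (C + C) (Set.Iic (Fintype.card ι)) (sphereMean (ι := ι)) := by
  have hcompl : MaximalBoundOn p C (Set.Icc (Fintype.card ι / 2 + 1) (Fintype.card ι))
      (sphereMean (ι := ι)) := by
    refine h.comp_equiv (Function.Involutive.toPerm _ compl_involutive) (Fintype.card ι - ·)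
      (fun r hr => ?_) fun r hr f X => sphereMean_eq_sphereMean_compl hr.2 f X
    have := hr.1
    exact Set.mem_Iic.2 (show Fintype.card ι - r ≤ Fintype.card ι / 2 by omega)
  refine (h.union hcompl).mono le_rfl fun r hr => ?_
  rcases le_or_gt r (Fintype.card ι / 2) with h | h
  · exact Or.inl h
  · exact Or.inr ⟨h, hr⟩

lemma exists_maximalBoundOn_sphereMean_of_lt_two (hp : 1 < p) (hp2 : p < 2) :
    ∃ C, ∀ (ι : Type u) [Fintype ι] [DecidableEq ι],
      MaximalBoundOn p C (Set.Iic (Fintype.card ι)) (sphereMean (ι := ι)) := by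
  have hp1 : 0 < p - 1 := sub_pos.2 hp
  set m := ⌈2 / (p - 1)⌉₊
  have hm : m ≠ 0 := (Nat.ceil_pos.2 (by positivity)).ne'
  obtain ⟨C, hC⟩ := exists_maximalBoundOn_sphereMean_Icc.{u} hp hp2 hm
    ((div_le_iff₀ hp1).1 (Nat.le_ceil _))
  refine ⟨_, fun ι _ _ => maximalBoundOn_sphereMean_Iic_card
    (((maximalBoundOn_sphereMean_range hp.le ι (8 * m ^ 2)).union (hC ι)).mono le_rfl
      fun r hr => ?_)⟩
  simp only [Set.mem_union, mem_coe, mem_range, mem_Icc, Set.mem_Iic] at hr ⊢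
  omega

theorem exists_maximalBoundOn_sphereMean (hp : 1 < p) :
    ∃ C, ∀ (ι : Type u) [Fintype ι] [DecidableEq ι],
      MaximalBoundOn p C (Set.Iic (Fintype.card ι)) (sphereMean (ι := ι)) := by
  set q : ℝ := min p (3 / 2)
  have hq : 1 < q := lt_min hp (by norm_num)
  have hθ : 1 ≤ p / q := (one_le_div (by linarith)).2 (min_le_left _ _)
  obtain ⟨C, hC⟩ := exists_maximalBoundOn_sphereMean_of_lt_two.{u} hq
    ((min_le_right _ _).trans_lt (by norm_num))
  refine ⟨C, fun ι _ _ => ?_⟩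
  rw [← div_mul_cancel₀ p (by linarith : q ≠ 0)]
  exact (hC ι).rpow (by linarith) (fun r _ _ hf => sphereMean_nonneg r hf)
    fun r _ _ hf X => sphereMean_rpow_le r hθ hf X

end CubeMaximal

section Hamming

open scoped symmDiff

variable {p C : ℝ}

/-- Transference: on the orbit of a point the averages become sphere means on the cube, and each
point of `X` lies on equally many of these orbits. -/
lemma maximalBoundOn_expect_action {ι X : Type*} [Fintype ι] [DecidableEq ι] [Fintype X]
    {n : ℕ} (hp : 0 ≤ p) (h : MaximalBoundOn p C (Set.Iic n) (sphereMean (ι := ι)))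
    {τ : Finset ι → X → X} (hτ : ∀ S T x, τ (S ∆ T) x = τ S (τ T x)) (hτ₀ : ∀ x, τ ∅ x = x) :
    MaximalBoundOn p C (Set.Iic n)
      fun r f x => 𝔼 T ∈ powersetCard r univ, f (τ T x) := by
  intro f hf
  set a : ℕ → X → ℝ := fun r x => 𝔼 T ∈ powersetCard r univ, f (τ T x)
  set g : X → ℝ := partialSups a n
  have hg : 0 ≤ g := le_trans (fun x => expect_nonneg fun T _ => hf (τ T x))
    (le_partialSups_of_le a n.zero_le)
  refine ⟨g, hg, fun r hr => le_partialSups_of_le a hr, ?_⟩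
  have horbit : ∀ x, ∑ S, g (τ S x) ^ p ≤ C * ∑ S, f (τ S x) ^ p := by
    intro x
    obtain ⟨G, -, hmean, hGp⟩ := h (fun S => f (τ S x)) fun S => hf _
    refine le_trans (sum_le_sum fun S _ => ?_) hGp
    refine Real.rpow_le_rpow (hg _) ?_ hp
    refine (Pi.partialSups_apply a n _).trans_le ?_
    refine partialSups_le _ n _ fun r hr => le_trans (le_of_eq ?_) (hmean r hr S)
    exact expect_congr rfl fun T _ => by rw [← hτ, symmDiff_comm]
  have hsum : ∀ (u : X → ℝ) S, ∑ x, u (τ S x) = ∑ x, u x := fun u S =>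
    Equiv.sum_comp (Function.Involutive.toPerm (τ S) fun x => by
      rw [← hτ, symmDiff_self, bot_eq_empty, hτ₀]) u
  have hcard : (0 : ℝ) < #(univ : Finset (Finset ι)) := by simp
  refine le_of_mul_le_mul_left ?_ hcard
  calc #(univ : Finset (Finset ι)) * ∑ x, g x ^ p = ∑ x, ∑ S, g (τ S x) ^ p := by
        rw [sum_comm]; simp only [hsum fun x => g x ^ p, sum_const, nsmul_eq_mul]
    _ ≤ ∑ x, C * ∑ S, f (τ S x) ^ p := sum_le_sum fun x _ => horbit x
    _ = #(univ : Finset (Finset ι)) * (C * ∑ x, f x ^ p) := by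
        rw [← mul_sum, sum_comm]
        simp only [hsum fun x => f x ^ p, sum_const, nsmul_eq_mul]
        ring

lemma MaximalBoundOn.expect_fst {κ X Y : Type*} [Fintype X] [Fintype Y] [Nonempty Y] {s : Set κ}
    {T : κ → (X × Y → ℝ) → X × Y → ℝ} (hp : 1 ≤ p) (h : MaximalBoundOn p C s T) :
    MaximalBoundOn p C s fun i f x => 𝔼 y, T i (fun z => f z.1) (x, y) := by
  intro f hf
  obtain ⟨G, hG, hTG, hGp⟩ := h (fun z => f z.1) fun z => hf z.1
  refine ⟨fun x => 𝔼 y, G (x, y), fun x => expect_nonneg fun y _ => hG _,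
    fun i hi x => expect_le_expect fun y _ => hTG i hi (x, y), ?_⟩
  have hcard : (0 : ℝ) < Fintype.card Y := by exact_mod_cast Fintype.card_pos
  refine le_of_mul_le_mul_left ?_ hcard
  calc Fintype.card Y * ∑ x, (𝔼 y, G (x, y)) ^ p
      ≤ Fintype.card Y * ∑ x, 𝔼 y, G (x, y) ^ p := by
        gcongr with x
        exact expect_rpow_le univ hp fun y _ => hG _
    _ = ∑ z, G z ^ p := by
        rw [mul_sum, Fintype.sum_prod_type]
        exact sum_congr rfl fun x _ => card_mul_expect univ fun y => G (x, y) ^ p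
    _ ≤ C * ∑ z : X × Y, f z.1 ^ p := hGp
    _ = Fintype.card Y * (C * ∑ x, f x ^ p) := by
        simp only [Fintype.sum_prod_type, sum_const, card_univ, nsmul_eq_mul, ← mul_sum]
        ring

lemma expect_comp_eq_expect {α β : Type*} [DecidableEq β] {s : Finset α} {t : Finset β} {c : ℕ}
    {g : α → β} (hg : ∀ a ∈ s, g a ∈ t) (hc : c ≠ 0) (hcard : ∀ b ∈ t, #{a ∈ s | g a = b} = c)
    (F : β → ℝ) : 𝔼 a ∈ s, F (g a) = 𝔼 b ∈ t, F b := by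
  have hst : #s = #t * c := card_eq_sum_card_fiberwise hg |>.trans (sum_const_nat hcard)
  have hsum : ∑ a ∈ s, F (g a) = c * ∑ b ∈ t, F b := by
    rw [← sum_fiberwise_of_maps_to hg, mul_sum]
    refine sum_congr rfl fun b hb => ?_
    rw [sum_congr rfl fun a ha => by rw [(mem_filter.1 ha).2], sum_const, hcard b hb,
      nsmul_eq_mul]
  have hc' : (c : ℝ) ≠ 0 := by exact_mod_cast hc
  rw [expect_eq_sum_div_card, expect_eq_sum_div_card, hsum, hst, Nat.cast_mul, mul_comm,
    mul_div_mul_right _ _ hc']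

variable {ι H : Type*} [DecidableEq ι]

/-- The vector agreeing with the nowhere vanishing vector `y` on `S` and vanishing elsewhere. -/
def restrictTo [Zero H] (S : Finset ι) (y : ι → {h : H // h ≠ 0}) (j : ι) : H :=
  if j ∈ S then y j else 0

lemma restrictTo_empty [Zero H] (y : ι → {h : H // h ≠ 0}) : restrictTo ∅ y = 0 := rfl

lemma restrictTo_ne_zero_iff [Zero H] {S : Finset ι} {y : ι → {h : H // h ≠ 0}} {j : ι} :
    restrictTo S y j ≠ 0 ↔ j ∈ S := by
  simp [restrictTo, (y j).2]

/-- Negates the coordinates of a nowhere vanishing vector indexed by `S`. -/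
def negOn [AddGroup H] (S : Finset ι) (y : ι → {h : H // h ≠ 0}) (j : ι) : {h : H // h ≠ 0} :=
  if j ∈ S then ⟨-y j, neg_ne_zero.2 (y j).2⟩ else y j

lemma negOn_empty [AddGroup H] (y : ι → {h : H // h ≠ 0}) : negOn ∅ y = y := rfl

lemma negOn_symmDiff [AddGroup H] (S T : Finset ι) (y : ι → {h : H // h ≠ 0}) :
    negOn (S ∆ T) y = negOn S (negOn T y) := by
  ext j
  by_cases hS : j ∈ S <;> by_cases hT : j ∈ T <;> simp [negOn, mem_symmDiff, hS, hT]

lemma restrictTo_symmDiff [AddGroup H] (S T : Finset ι) (y : ι → {h : H // h ≠ 0}) :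
    restrictTo (S ∆ T) y = restrictTo T y + restrictTo S (negOn T y) := by
  ext j
  by_cases hS : j ∈ S <;> by_cases hT : j ∈ T <;>
    simp [restrictTo, negOn, mem_symmDiff, hS, hT]

variable [Fintype ι] [DecidableEq H]

lemma filter_restrictTo_ne_zero [Zero H] (S : Finset ι) (y : ι → {h : H // h ≠ 0}) :
    ({j | restrictTo S y j ≠ 0} : Finset ι) = S := by
  simp only [restrictTo_ne_zero_iff, filter_univ_mem]

lemma hammingNorm_restrictTo [Zero H] (S : Finset ι) (y : ι → {h : H // h ≠ 0}) :
    hammingNorm (restrictTo S y) = #S := by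
  rw [hammingNorm, filter_restrictTo_ne_zero]

lemma restrictTo_support_eq_iff [Zero H] {v : ι → H} {y : ι → {h : H // h ≠ 0}} :
    restrictTo {j | v j ≠ 0} y = v ↔ ∀ j, v j = 0 ∨ y j = v j := by
  rw [funext_iff]
  refine forall_congr' fun j => ?_
  by_cases hj : v j = 0 <;> simp [restrictTo, hj]

lemma card_filter_restrictTo_eq [Zero H] [Fintype H] {r : ℕ} {v : ι → H}
    (hv : hammingNorm v = r) :
    #{z ∈ powersetCard r (univ : Finset ι) ×ˢ (univ : Finset (ι → {h : H // h ≠ 0})) |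
      restrictTo z.1 z.2 = v} = Fintype.card {h : H // h ≠ 0} ^ (Fintype.card ι - r) := by
  set B : ι → Finset {h : H // h ≠ 0} := fun j => {h | v j = 0 ∨ h = v j}
  have hB : ∀ j, #(B j) = if v j = 0 then Fintype.card {h : H // h ≠ 0} else 1 := by
    intro j
    split_ifs with hj
    · simp [B, hj]
    · refine card_eq_one.2 ⟨⟨v j, hj⟩, ?_⟩
      ext h
      simp [B, hj, Subtype.ext_iff]
  have hfiber : {z ∈ powersetCard r (univ : Finset ι) ×ˢ (univ : Finset (ι → {h : H // h ≠ 0})) |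
      restrictTo z.1 z.2 = v} = {({j | v j ≠ 0} : Finset ι)} ×ˢ Fintype.piFinset B := by
    ext ⟨S, y⟩
    simp only [mem_filter, mem_product, mem_powersetCard_univ, mem_univ, and_true, mem_singleton,
      Fintype.mem_piFinset, B, true_and, ← restrictTo_support_eq_iff]
    constructor
    · rintro ⟨-, rfl⟩
      simp only [filter_restrictTo_ne_zero, and_self]
    · rintro ⟨rfl, hy⟩
      exact ⟨hv, hy⟩
  have hcard : #{j | v j = 0} = Fintype.card ι - r :=
    Nat.eq_sub_of_add_eq (by rw [← hv]; exact card_filter_add_card_filter_not _)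
  rw [hfiber, card_product, card_singleton, one_mul, Fintype.card_piFinset,
    prod_congr rfl fun j _ => hB j, prod_ite, prod_const, prod_const_one, mul_one, hcard]

lemma expect_expect_restrictTo [Zero H] [Nontrivial H] [Fintype H] (r : ℕ) (F : (ι → H) → ℝ) :
    𝔼 y : ι → {h : H // h ≠ 0}, 𝔼 S ∈ powersetCard r univ, F (restrictTo S y) =
      𝔼 v with hammingNorm v = r, F v := by
  have := nonempty_subtype.2 (exists_ne (0 : H))
  rw [expect_comm, ← expect_product']
  refine expect_comp_eq_expect (c := Fintype.card {h : H // h ≠ 0} ^ (Fintype.card ι - r))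
    (g := fun z : Finset ι × (ι → {h : H // h ≠ 0}) => restrictTo z.1 z.2) (fun z hz => ?_)
    (by positivity) (fun v hv => ?_) F
  · rw [mem_product, mem_powersetCard_univ] at hz
    exact mem_filter.2 ⟨mem_univ _, (hammingNorm_restrictTo _ _).trans hz.1⟩
  · exact card_filter_restrictTo_eq (mem_filter.1 hv).2

/-- The cube acts on `A × (H ∖ {0})^ι` by moving `x` by the restriction of `y` to `S` and changing
the sign of `y` on `S`; averaging over `y` gives the means over Hamming spheres. -/
lemma maximalBoundOn_expect_hammingNorm [AddCommGroup H] [Nontrivial H] [Fintype H]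
    {A : Type*} [AddCommGroup A] [Fintype A] (hp : 1 ≤ p)
    (h : MaximalBoundOn p C (Set.Iic (Fintype.card ι)) (sphereMean (ι := ι)))
    (φ : (ι → H) →+ A) :
    MaximalBoundOn p C Set.univ fun r f x => 𝔼 v with hammingNorm v = r, f (x - φ v) := by
  have := nonempty_subtype.2 (exists_ne (0 : H))
  have haction : MaximalBoundOn p C (Set.Iic (Fintype.card ι))
      fun r (F : A × (ι → {h : H // h ≠ 0}) → ℝ) z =>
        𝔼 S ∈ powersetCard r univ, F (z.1 - φ (restrictTo S z.2), negOn S z.2) := by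
    refine maximalBoundOn_expect_action (by linarith) h (τ := fun S z =>
      (z.1 - φ (restrictTo S z.2), negOn S z.2)) (fun S T z => ?_) fun z => ?_
    · simp only [restrictTo_symmDiff, map_add, negOn_symmDiff, sub_sub]
    · simp only [restrictTo_empty, map_zero, sub_zero, negOn_empty]
  intro f hf
  obtain ⟨g, hg, hmean, hgp⟩ := haction.expect_fst hp f hf
  refine ⟨g, hg, fun r _ x => ?_, hgp⟩
  rcases le_or_gt r (Fintype.card ι) with hr | hr
  · exact (expect_expect_restrictTo r fun v => f (x - φ v)).symm.trans_le (hmean r hr x)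
  · have hempty : ({v | hammingNorm v = r} : Finset (ι → H)) = ∅ :=
      filter_eq_empty_iff.2 fun v _ => (hammingNorm_le_card_fintype.trans_lt hr).ne
    simp only [hempty, expect_empty]
    exact hg x

end Hamming

section Product

variable {p C D : ℝ}

lemma MaximalBoundOn.comp {X κ κ' : Type*} [Fintype X] {s : Set κ} {t : Set κ'}
    {T : κ → (X → ℝ) → X → ℝ} {T' : κ' → (X → ℝ) → X → ℝ} (hC : 0 ≤ C)
    (h : MaximalBoundOn p C s T) (h' : MaximalBoundOn p D t T')
    (hT : ∀ i ∈ s, Monotone (T i)) :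
    MaximalBoundOn p (C * D) (s ×ˢ t) fun i f => T i.1 (T' i.2 f) := by
  intro f hf
  obtain ⟨g, hg, hTg, hgp⟩ := h' f hf
  obtain ⟨u, hu, hTu, hup⟩ := h g hg
  refine ⟨u, hu, fun i hi => (hT i.1 hi.1 (hTg i.2 hi.2)).trans (hTu i.1 hi.1), ?_⟩
  calc ∑ x, u x ^ p ≤ C * ∑ x, g x ^ p := hup
    _ ≤ C * (D * ∑ x, f x ^ p) := by gcongr
    _ = C * D * ∑ x, f x ^ p := (mul_assoc _ _ _).symm

variable {κ : Type*} [Fintype κ] [DecidableEq κ] {G : κ → Type*} [∀ k, AddCommGroup (G k)]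

lemma expect_piFinset_update {S : ∀ k, Finset (G k)} {a : κ} (hS : S a = {0}) (t : Finset (G a))
    (F : (∀ k, G k) → ℝ) :
    𝔼 y ∈ Fintype.piFinset (Function.update S a t), F y =
      𝔼 y ∈ Fintype.piFinset S, 𝔼 v ∈ t, F (y + Pi.single a v) := by
  rw [← expect_product']
  have hsplit : ∀ y : ∀ k, G k, Function.update y a 0 + Pi.single a (y a) = y := by
    intro y
    ext k
    rcases eq_or_ne k a with rfl | hk <;> simp [*]
  have hzero : ∀ {y : ∀ k, G k}, y ∈ Fintype.piFinset S → y a = 0 := fun hy => by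
    simpa [hS] using Fintype.mem_piFinset.1 hy a
  refine expect_nbij' (fun y => (Function.update y a 0, y a)) (fun z => z.1 + Pi.single a z.2)
    (fun y hy => ?_) (fun z hz => ?_) (fun y _ => hsplit y) (fun z hz => ?_)
    fun y _ => by rw [hsplit]
  · refine mem_product.2 ⟨Fintype.mem_piFinset.2 fun k => ?_, by
      simpa using Fintype.mem_piFinset.1 hy a⟩
    rcases eq_or_ne k a with rfl | hk
    · simp [hS]
    · simpa [hk] using Fintype.mem_piFinset.1 hy k
  · obtain ⟨hz₁, hz₂⟩ := mem_product.1 hz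
    refine Fintype.mem_piFinset.2 fun k => ?_
    rcases eq_or_ne k a with rfl | hk
    · simpa [hzero hz₁] using hz₂
    · simpa [hk] using Fintype.mem_piFinset.1 hz₁ k
  · have hza := hzero (mem_product.1 hz).1
    refine Prod.ext (funext fun k => ?_) (by simp [hza])
    rcases eq_or_ne k a with rfl | hk <;> simp [*]

variable [∀ k, Fintype (G k)]

lemma maximalBoundOn_expect_piFinset {J : κ → Type*} {S : ∀ k, J k → Finset (G k)} (hC : 0 ≤ C)
    (h : ∀ k, MaximalBoundOn p C Set.univ
      fun r (f : (∀ k, G k) → ℝ) x => 𝔼 v ∈ S k r, f (x - Pi.single k v)) :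
    MaximalBoundOn p (C ^ Fintype.card κ) Set.univ
      fun (r : ∀ k, J k) (f : (∀ k, G k) → ℝ) x =>
        𝔼 y ∈ Fintype.piFinset fun k => S k (r k), f (x - y) := by
  suffices ∀ I : Finset κ, MaximalBoundOn p (C ^ #I) Set.univ
      fun (r : ∀ k, J k) (f : (∀ k, G k) → ℝ) x =>
        𝔼 y ∈ Fintype.piFinset (I.piecewise (fun k => S k (r k)) fun _ => {0}), f (x - y) by
    simpa using this univ
  intro I
  induction I using Finset.induction_on with
  | empty =>
    intro f hf
    exact ⟨f, hf, fun r _ x => by simp [← Pi.zero_def], by simp⟩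
  | insert a I ha ih =>
    have hcomp := ih.comp (pow_nonneg hC _) (h a) fun r _ f g hfg x =>
      expect_le_expect fun y _ => hfg (x - y)
    rw [card_insert_of_notMem ha, pow_succ]
    refine hcomp.comp_equiv (Equiv.refl _) (fun r => (r, r a)) (fun r _ => ⟨trivial, trivial⟩) ?_
    intro r _ f x
    rw [piecewise_insert, expect_piFinset_update (piecewise_eq_of_notMem _ _ _ ha)]
    simp only [sub_sub, Equiv.refl_apply]

lemma expect_le_of_forall_expect_fiber_le {α β : Type*} [DecidableEq β] {s : Finset α} {g : α → β}
    {F : α → ℝ} {c : ℝ} (hc : 0 ≤ c)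
    (h : ∀ a₀ ∈ s, 𝔼 a ∈ s with g a = g a₀, F a ≤ c) : 𝔼 a ∈ s, F a ≤ c := by
  have hmaps : ∀ a ∈ s, g a ∈ s.image g := fun a ha => mem_image_of_mem g ha
  rw [expect_eq_sum_div_card]
  refine div_le_of_le_mul₀ (by positivity) hc ?_
  rw [← sum_fiberwise_of_maps_to hmaps, card_eq_sum_card_fiberwise hmaps, Nat.cast_sum, mul_sum]
  refine sum_le_sum fun b hb => ?_
  obtain ⟨a₀, ha₀, rfl⟩ := mem_image.1 hb
  rw [← card_mul_expect, mul_comm c]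
  exact mul_le_mul_of_nonneg_left (h a₀ ha₀) (by positivity)

end Product

section SphericalMaximal

variable {κ : Type*} [Fintype κ] {ι H : κ → Type*} [∀ k, Fintype (ι k)] [∀ k, DecidableEq (H k)]

/-- The number of nonzero coordinates of an element of `⊕ₖ (H k)^(ι k)`. -/
def totalHammingNorm [∀ k, Zero (H k)] (y : ∀ k, ι k → H k) : ℕ :=
  ∑ k, hammingNorm (y k)

variable [∀ k, AddCommGroup (H k)] [∀ k, Fintype (H k)] [DecidableEq κ] [∀ k, DecidableEq (ι k)]

lemma filter_totalHammingNorm_hammingNorm_eq (y₀ : ∀ k, ι k → H k) :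
    {y ∈ ({y | totalHammingNorm y = totalHammingNorm y₀} : Finset (∀ k, ι k → H k)) |
      (fun k => hammingNorm (y k)) = fun k => hammingNorm (y₀ k)} =
    Fintype.piFinset fun k => ({v | hammingNorm v = hammingNorm (y₀ k)} : Finset (ι k → H k)) := by
  ext y
  simp only [mem_filter, mem_univ, true_and, Fintype.mem_piFinset, funext_iff,
    and_iff_right_iff_imp]
  exact fun hy => sum_congr rfl fun k _ => hy k

universe u v

theorem exists_maximalBoundOn_totalHammingNorm {p : ℝ} (hp : 1 < p) :
    ∃ C, 0 ≤ C ∧ ∀ (κ : Type*) [Fintype κ] [DecidableEq κ] (ι : κ → Type u) (H : κ → Type v)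
      [∀ k, Fintype (ι k)] [∀ k, DecidableEq (ι k)] [∀ k, AddCommGroup (H k)]
      [∀ k, Nontrivial (H k)] [∀ k, Fintype (H k)] [∀ k, DecidableEq (H k)],
      MaximalBoundOn p (C ^ Fintype.card κ) Set.univ fun r (f : (∀ k, ι k → H k) → ℝ) x =>
        𝔼 y with totalHammingNorm y = r, f (x - y) := by
  obtain ⟨C, hC⟩ := exists_maximalBoundOn_sphereMean.{u} hp
  refine ⟨max C 0, le_max_right C 0, fun κ _ _ ι H _ _ _ _ _ _ f hf => ?_⟩
  obtain ⟨g, hg, hmean, hgp⟩ := maximalBoundOn_expect_piFinset (le_max_right C 0)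
    (S := fun k r => ({v | hammingNorm v = r} : Finset (ι k → H k)))
    (fun k => (maximalBoundOn_expect_hammingNorm hp.le (hC (ι k))
      (AddMonoidHom.single (fun k => ι k → H k) k)).mono (le_max_left C 0) subset_rfl) f hf
  refine ⟨g, hg, fun r _ x => ?_, hgp⟩
  refine expect_le_of_forall_expect_fiber_le (g := fun y k => hammingNorm (y k)) (hg x)
    fun y₀ hy₀ => ?_
  obtain rfl := (mem_filter.1 hy₀).2
  rw [filter_totalHammingNorm_hammingNorm_eq]
  exact hmean (fun k => hammingNorm (y₀ k)) trivial x

lemma norm_inv_card_smul_sum_le_expect {α E : Type*} [NormedAddCommGroup E] [NormedSpace ℝ E]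
    (s : Finset α) (f : α → E) : ‖(#s : ℝ)⁻¹ • ∑ a ∈ s, f a‖ ≤ 𝔼 a ∈ s, ‖f a‖ := by
  rw [norm_smul, norm_inv, RCLike.norm_natCast, expect_eq_sum_div_card, div_eq_inv_mul]
  gcongr
  exact norm_sum_le s f

variable {E : Type*} [NormedAddCommGroup E] [NormedSpace ℝ E]

/-- The supremum over all nonempty spheres of the norm of the mean of `f` over the sphere centred
at `x`. -/
def sphericalMaximal (f : (∀ k, ι k → H k) → E) (x : ∀ k, ι k → H k) : NNReal :=
  (univ.image (totalHammingNorm : (∀ k, ι k → H k) → ℕ)).sup fun r =>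
    ‖(#{y : ∀ k, ι k → H k | totalHammingNorm y = r} : ℝ)⁻¹ •
      ∑ y with totalHammingNorm y = r, f (x - y)‖₊

lemma nnnorm_inv_card_smul_sum_le_sphericalMaximal (f : (∀ k, ι k → H k) → E)
    (x : ∀ k, ι k → H k) {r : ℕ} (hr : ∃ z : ∀ k, ι k → H k, totalHammingNorm z = r) :
    ‖(#{y : ∀ k, ι k → H k | totalHammingNorm y = r} : ℝ)⁻¹ •
      ∑ y with totalHammingNorm y = r, f (x - y)‖₊ ≤ sphericalMaximal f x := by
  obtain ⟨z, rfl⟩ := hr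
  exact Finset.le_sup (f := fun r => ‖(#{y : ∀ k, ι k → H k | totalHammingNorm y = r} : ℝ)⁻¹ •
    ∑ y with totalHammingNorm y = r, f (x - y)‖₊) (mem_image_of_mem _ (mem_univ z))

lemma sphericalMaximal_le {f : (∀ k, ι k → H k) → E} {x : ∀ k, ι k → H k} {c : ℝ} (hc : 0 ≤ c)
    (h : ∀ r, 𝔼 y with totalHammingNorm y = r, ‖f (x - y)‖ ≤ c) : sphericalMaximal f x ≤ c := by
  lift c to NNReal using hc
  refine NNReal.coe_le_coe.2 (Finset.sup_le fun r _ => ?_)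
  exact NNReal.coe_le_coe.1 ((norm_inv_card_smul_sum_le_expect _ _).trans (h r))

theorem statement1_general (p : ℝ) (hp : 1 < p) :
    ∃ C : ℝ, ∀ (κ : Type*) [Fintype κ] [DecidableEq κ] (ι : κ → Type u) (H : κ → Type v)
      [∀ k, Fintype (ι k)] [∀ k, DecidableEq (ι k)] [∀ k, AddCommGroup (H k)]
      [∀ k, Nontrivial (H k)] [∀ k, Fintype (H k)] [∀ k, DecidableEq (H k)]
      (E : Type*) [NormedAddCommGroup E] [NormedSpace ℝ E] (f : (∀ k, ι k → H k) → E),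
      (∑ x, (sphericalMaximal f x : ℝ) ^ p) ^ (1 / p) ≤
        C ^ Fintype.card κ * (∑ x, ‖f x‖ ^ p) ^ (1 / p) := by
  obtain ⟨C, hC, hmax⟩ := exists_maximalBoundOn_totalHammingNorm.{u, v} hp
  refine ⟨C ^ (1 / p), fun κ _ _ ι H _ _ _ _ _ _ E _ _ f => ?_⟩
  obtain ⟨g, hg, hmean, hgp⟩ := hmax κ ι H (fun x => ‖f x‖) fun x => norm_nonneg (f x)
  rw [Real.rpow_pow_comm hC, ← Real.mul_rpow (by positivity) (by positivity)]
  refine Real.rpow_le_rpow (by positivity) (le_trans ?_ hgp) (by positivity)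
  gcongr with x
  exact sphericalMaximal_le (hg x) fun r => hmean r trivial x

end SphericalMaximal

lemma convA_sigmaA_eq {n : ℕ} {Nf : Fin n → ℕ} (f : DSum n Nf → ℂ) (r : ℕ) (x : DSum n Nf) :
    convA (sigmaA n Nf r) f x =
      (#{y : DSum n Nf | totalHammingNorm y = r} : ℝ)⁻¹ •
        ∑ y with totalHammingNorm y = r, f (x - y) := by
  simp only [convA, sigmaA, ite_mul, zero_mul, ← sum_filter, ← mul_sum, Complex.real_smul,
    Complex.ofReal_inv, Complex.ofReal_natCast]
  rfl

lemma maxA_le_sphericalMaximal {n : ℕ} {Nf : Fin n → ℕ} (f : DSum n Nf → ℂ) (x : DSum n Nf) :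
    maxA f x ≤ sphericalMaximal f x := by
  refine NNReal.coe_le_coe.2 (Finset.sup_le fun r hr => ?_)
  rw [convA_sigmaA_eq]
  exact nnnorm_inv_card_smul_sum_le_sphericalMaximal f x (mem_filter.1 hr).2.2

lemma rpow_sum_maxA_rpow_le {n : ℕ} {Nf : Fin n → ℕ} {p : ℝ} (hp : 0 ≤ p) (f : DSum n Nf → ℂ) :
    (∑ x, maxA f x ^ p) ^ (1 / p) ≤ (∑ x, (sphericalMaximal f x : ℝ) ^ p) ^ (1 / p) := by
  have hmaxA : ∀ x, 0 ≤ maxA f x := fun x => NNReal.coe_nonneg _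
  gcongr with x
  · exact sum_nonneg fun x _ => Real.rpow_nonneg (hmaxA x) p
  · exact hmaxA x
  · exact maxA_le_sphericalMaximal f x

theorem statement1 (p : ℝ) (hp : 1 < p) (n : ℕ) (hn : 1 ≤ n) :
    ∃ C : ℝ, ∀ Nf : Fin n → ℕ, ∀ f : DSum n Nf → ℂ,
      (∑ x, maxA f x ^ p) ^ (1 / p) ≤ C * (∑ x, ‖f x‖ ^ p) ^ (1 / p) := by
  obtain ⟨C, hC⟩ := statement1_general p hp
  have (k : Fin n) : Nontrivial (ZMod (k.val + 2)) := ZMod.nontrivial_iff.2 (by omega)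
  exact ⟨_, fun Nf f => (rpow_sum_maxA_rpow_le (by linarith) f).trans (hC _ _ _ _ f)⟩
end
end

section
/- For every integer m ≥ 2 there exists a constant C = C(m), independent of N, such that for every integer N ≥ 1, every f : G → ℂ, and every λ > 0, #{x ∈ G : M_S^L f(x) > λ} ≤ C · λ^{−1} · Σ_{x ∈ G} |f(x)|. -/
open Finset

noncomputable section

/-- Hamming weight on `(ℤ/(m+1)ℤ)^N`. -/
def hw {m N : ℕ} (y : Fin N → ZMod (m + 1)) : ℕ :=
  (Finset.univ.filter fun i => y i ≠ 0).card

/-- `L¹`-normalized indicator of the sphere of radius `r` (zero if `r < 0` or `r > N`). -/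
def sigmaC (m N : ℕ) (r : ℤ) : (Fin N → ZMod (m + 1)) → ℂ := fun x =>
  if (hw x : ℤ) = r then
    ((Finset.univ.filter fun y : Fin N → ZMod (m + 1) => (hw y : ℤ) = r).card : ℂ)⁻¹
  else 0

/-- Convolution on `(ℤ/(m+1)ℤ)^N`. -/
def convC {m N : ℕ} (g f : (Fin N → ZMod (m + 1)) → ℂ) : (Fin N → ZMod (m + 1)) → ℂ :=
  fun x => ∑ y, g y * f (x - y)

/-- The smooth local spherical maximal function
`M_S^L f (x) = max_{0 ≤ L ≤ c_m N} (1/(L+1)) |Σ_{k=0}^L (σ_k * f)(x)|`.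
Note that the integers `L` with `0 ≤ L ≤ c_m·N = m·N/(m+1)` are exactly those with
`L ≤ ⌊m·N/(m+1)⌋ = (m*N)/(m+1)` (natural division). -/
def smoothLocalMax (m N : ℕ) (f : (Fin N → ZMod (m + 1)) → ℂ) (x : Fin N → ZMod (m + 1)) : ℝ :=
  (Finset.range ((m * N) / (m + 1) + 1)).sup' Finset.nonempty_range_add_one fun L =>
    (1 / ((L : ℝ) + 1)) * ‖∑ k ∈ Finset.range (L + 1), convC (sigmaC m N (k : ℤ)) f x‖

/-!
Spherical averages over small radii are compared with a random walk. Let `T` average a function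
over one step of the walk on `ι → A` that resamples a uniformly chosen coordinate. By symmetry
`Tʲ F x` is a combination of the spherical means of `F` about `x`, the mean of radius `k` having as
weight the probability that the walk from `x` is at distance `k` at time `j`. While its distance
from `x` is at most a quarter of the dimension, the walk drifts outwards at speed at least `1 / 4`,
so at time `8 (L + 1)` it is beyond distance `L` with probability at least `1 / 8`; as it moves by
at most `1` per step, it has visited each of the distances `0, …, L` on the way. Hence
`∑ k ≤ L, sphericalMean k F ≤ 8 ∑ j < 8 (L + 1), Tʲ F` for `F ≥ 0`, and the ergodic averages of `T`
are of weak type `(1, 1)` by Hopf's maximal ergodic lemma. When `L` is comparable to the dimension,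
the average over radii is dominated by the average over all radii, which contracts the `ℓ¹` norm.
-/

section MonotoneEndomorphism

variable {R M : Type*} [Semiring R] [AddCommGroup M] [Module R M] {T : Module.End R M}

lemma sum_range_succ_pow_apply (T : Module.End R M) (g : M) (n : ℕ) :
    ∑ j ∈ range (n + 1), (T ^ j) g = g + T (∑ j ∈ range n, (T ^ j) g) := by
  simp only [sum_range_succ', map_sum, pow_succ', Module.End.mul_apply, pow_zero,
    Module.End.one_apply, add_comm]

lemma monotone_pow_apply [Preorder M] (hT : Monotone T) (n : ℕ) : Monotone (T ^ n) := by
  rw [Module.End.coe_pow]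
  exact hT.iterate n

lemma pow_apply_le_add_sum [PartialOrder M] [IsOrderedAddMonoid M] (hT : Monotone T) {u v : M}
    (huv : T u ≤ u + v) (n : ℕ) : (T ^ n) u ≤ u + ∑ j ∈ range n, (T ^ j) v := by
  induction n with
  | zero => simp
  | succ n ih =>
    calc (T ^ (n + 1)) u = (T ^ n) (T u) := by rw [pow_succ, Module.End.mul_apply]
      _ ≤ (T ^ n) (u + v) := monotone_pow_apply hT n huv
      _ = (T ^ n) u + (T ^ n) v := map_add _ _ _
      _ ≤ u + ∑ j ∈ range n, (T ^ j) v + (T ^ n) v := by gcongr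
      _ = u + ∑ j ∈ range (n + 1), (T ^ j) v := by rw [sum_range_succ, add_assoc]

lemma pow_apply_le_self [PartialOrder M] [IsOrderedAddMonoid M] (hT : Monotone T) {u : M}
    (hu : T u ≤ u) (n : ℕ) : (T ^ n) u ≤ u := by
  simpa using pow_apply_le_add_sum hT (v := 0) (by simpa using hu) n

lemma partialSups_sum_pow_le [Lattice M] [IsOrderedAddMonoid M] (hT : Monotone T) (g : M)
    (K : ℕ) :
    partialSups (fun n ↦ ∑ j ∈ range n, (T ^ j) g) K ≤
      0 ⊔ (g + T (partialSups (fun n ↦ ∑ j ∈ range n, (T ^ j) g) K)) := by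
  refine partialSups_le _ _ _ fun n hn ↦ ?_
  cases n with
  | zero => simp
  | succ n =>
    rw [sum_range_succ_pow_apply]
    refine le_sup_of_le_right ?_
    gcongr
    exact hT (le_partialSups_of_le (fun n ↦ ∑ j ∈ range n, (T ^ j) g) (Nat.le_of_succ_le hn))

end MonotoneEndomorphism

section MaximalErgodic

variable {X : Type*} {T : Module.End ℝ (X → ℝ)}

lemma sum_pow_apply_sub_le_sum_pow_sub_smul (hT : Monotone T) (hone : T 1 ≤ 1) (f : X → ℝ) {lam : ℝ}
    (hlam : 0 ≤ lam) (n : ℕ) (x : X) :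
    (∑ j ∈ range n, (T ^ j) f) x - n * lam ≤ (∑ j ∈ range n, (T ^ j) (f - lam • 1)) x := by
  have sum_le : ∑ j ∈ range n, lam * (T ^ j) 1 x ≤ n * lam := by
    simpa using sum_le_card_nsmul (range n) _ lam fun j _ ↦
      mul_le_of_le_one_right hlam (pow_apply_le_self hT hone j x)
  simp only [map_sub, map_smul, sum_sub_distrib, Pi.sub_apply, Finset.sum_apply, Pi.smul_apply,
    smul_eq_mul]
  linarith

variable [Fintype X]

/-- The **maximal ergodic lemma** of Hopf, in Garsia's form. -/
lemma sum_nonneg_of_partialSups_pos (hT : Monotone T)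
    (hsum : ∀ u : X → ℝ, 0 ≤ u → ∑ x, T u x ≤ ∑ x, u x) (g : X → ℝ) (K : ℕ) :
    0 ≤ ∑ x with 0 < partialSups (fun n ↦ ∑ j ∈ range n, (T ^ j) g) K x, g x := by
  set M : X → ℝ := partialSups (fun n ↦ ∑ j ∈ range n, (T ^ j) g) K
  have M_nonneg : 0 ≤ M :=
    le_partialSups_of_le (fun n ↦ ∑ j ∈ range n, (T ^ j) g) (Nat.zero_le K)
  have TM_nonneg : 0 ≤ T M := by simpa using hT M_nonneg
  have M_le : ∀ x, 0 < M x → M x ≤ g x + T M x := fun x hx ↦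
    (le_sup_iff.mp (partialSups_sum_pow_le hT g K x)).resolve_left hx.not_ge
  have sum_M : ∑ x with 0 < M x, M x = ∑ x, M x :=
    sum_filter_of_ne fun x _ hx ↦ (M_nonneg x).lt_of_ne' hx
  have sum_TM : ∑ x with 0 < M x, T M x ≤ ∑ x, T M x :=
    sum_le_sum_of_subset_of_nonneg (filter_subset _ _) fun x _ _ ↦ TM_nonneg x
  have key : ∑ x with 0 < M x, M x ≤ ∑ x with 0 < M x, g x + ∑ x with 0 < M x, T M x := by
    rw [← sum_add_distrib]
    exact sum_le_sum fun x hx ↦ M_le x (mem_filter.mp hx).2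
  linarith [hsum M M_nonneg]

lemma card_mul_le_sum_of_exists_lt_sum_pow (hT : Monotone T)
    (hsum : ∀ u : X → ℝ, 0 ≤ u → ∑ x, T u x ≤ ∑ x, u x) (hone : T 1 ≤ 1)
    {f : X → ℝ} (hf : 0 ≤ f) {lam : ℝ} (hlam : 0 ≤ lam) {s : Finset X}
    (hs : ∀ x ∈ s, ∃ n : ℕ, n * lam < (∑ j ∈ range n, (T ^ j) f) x) :
    #s * lam ≤ ∑ x, f x := by
  choose! n hn using hs
  set S : ℕ → X → ℝ := fun n ↦ ∑ j ∈ range n, (T ^ j) (f - lam • 1)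
  set E : Finset X := {x | 0 < partialSups S (s.sup n) x} with hE
  have subset : s ⊆ E := fun x hx ↦ by
    rw [hE, mem_filter_univ]
    calc 0 < (∑ j ∈ range (n x), (T ^ j) f) x - n x * lam := sub_pos.mpr (hn x hx)
      _ ≤ S (n x) x := sum_pow_apply_sub_le_sum_pow_sub_smul hT hone f hlam (n x) x
      _ ≤ partialSups S (s.sup n) x := le_partialSups_of_le S (le_sup hx) x
  have hopf : 0 ≤ ∑ x ∈ E, (f - lam • 1) x :=
    sum_nonneg_of_partialSups_pos hT hsum (f - lam • 1) (s.sup n)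
  calc #s * lam ≤ #E * lam := by gcongr
    _ ≤ ∑ x ∈ E, f x := by simpa [sum_sub_distrib] using hopf
    _ ≤ ∑ x, f x := sum_le_sum_of_subset_of_nonneg (subset_univ E) fun x _ _ ↦ hf x

end MaximalErgodic

section HammingDist

variable {ι A : Type*} [Fintype ι] [DecidableEq A]

lemma hammingDist_update [DecidableEq ι] (x y : ι → A) (i : ι) (a : A) :
    hammingDist x (Function.update y i a) =
      hammingDist x (Function.update y i (x i)) + if x i = a then 0 else 1 := by
  simp only [hammingDist, card_filter]
  rw [← add_sum_erase _ _ (mem_univ i), ← add_sum_erase _ _ (mem_univ i)]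
  have off_diag (b : A) : ∑ j ∈ univ.erase i, (if x j ≠ Function.update y i b j then 1 else 0) =
      ∑ j ∈ univ.erase i, (if x j ≠ y j then 1 else 0) :=
    sum_congr rfl fun j hj ↦ by rw [Function.update_of_ne (ne_of_mem_erase hj)]
  rw [off_diag, off_diag]
  simp [add_comm]

lemma hammingDist_update_le [DecidableEq ι] (x : ι → A) (i : ι) (a : A) :
    hammingDist x (Function.update x i a) ≤ 1 := by
  rw [hammingDist_update, Function.update_eq_self, hammingDist_self]
  split_ifs <;> omega

lemma sum_apply_hammingDist_update [DecidableEq ι] [Fintype A] (φ : ℕ → ℝ) (x y : ι → A) (i : ι) :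
    ∑ a, φ (hammingDist x (Function.update y i a)) =
      if x i ≠ y i then
        φ (hammingDist x y - 1) + (Fintype.card A - 1) * φ (hammingDist x y)
      else φ (hammingDist x y) + (Fintype.card A - 1) * φ (hammingDist x y + 1) := by
  set w := hammingDist x (Function.update y i (x i)) with w_def
  have dist_eq : hammingDist x y = w + if x i = y i then 0 else 1 := by
    simpa using hammingDist_update x y i (y i)
  have sum_eq : ∑ a, φ (hammingDist x (Function.update y i a)) =
      φ w + (Fintype.card A - 1) * φ (w + 1) := by
    rw [← add_sum_erase _ _ (mem_univ (x i)), sum_congr rfl fun a ha ↦ by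
      rw [hammingDist_update, if_neg (ne_of_mem_erase ha).symm, ← w_def], sum_const, nsmul_eq_mul,
      card_erase_of_mem (mem_univ _), card_univ,
      Nat.cast_pred (Fintype.card_pos_iff.mpr ⟨x i⟩), ← w_def]
  rw [sum_eq, dist_eq]
  by_cases h : x i = y i <;> simp [h]

end HammingDist

section HammingWalk

variable {ι A : Type*} [Fintype ι] [DecidableEq ι] [Fintype A]

variable (ι A) in
/-- The averaging operator of the lazy random walk on the Hamming graph, which at each step
resamples a uniformly chosen coordinate uniformly from the alphabet `A`. -/
def hammingWalk : Module.End ℝ ((ι → A) → ℝ) where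
  toFun F x := ((Fintype.card ι : ℝ) * Fintype.card A)⁻¹ * ∑ i, ∑ a, F (Function.update x i a)
  map_add' F G := by
    ext x
    simp [sum_add_distrib, mul_add]
  map_smul' c F := by
    ext x
    simp only [Pi.smul_apply, smul_eq_mul, ← mul_sum, RingHom.id_apply]
    ring

lemma hammingWalk_apply (F : (ι → A) → ℝ) (x : ι → A) :
    hammingWalk ι A F x =
      ((Fintype.card ι : ℝ) * Fintype.card A)⁻¹ * ∑ i, ∑ a, F (Function.update x i a) :=
  rfl

lemma monotone_hammingWalk : Monotone (hammingWalk ι A) := fun F G h x ↦ by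
  simp only [hammingWalk_apply]
  gcongr
  exact h _

lemma hammingWalk_one_le : hammingWalk ι A 1 ≤ 1 := fun x ↦ by
  simpa [hammingWalk_apply] using inv_mul_le_one (a := (Fintype.card ι * Fintype.card A : ℝ))

lemma hammingWalk_one [Nonempty ι] [Nonempty A] : hammingWalk ι A 1 = 1 := by
  ext x
  simpa [hammingWalk_apply] using inv_mul_cancel₀ (a := (Fintype.card ι * Fintype.card A : ℝ))
    (by positivity)

lemma hammingWalk_pow_one [Nonempty ι] [Nonempty A] (n : ℕ) : (hammingWalk ι A ^ n) 1 = 1 := by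
  rw [Module.End.coe_pow]
  exact Function.iterate_fixed hammingWalk_one n

lemma hammingWalk_apply_le_of_hammingDist_le_one [DecidableEq A] {F G : (ι → A) → ℝ} {x : ι → A}
    (h : ∀ y, hammingDist x y ≤ 1 → F y ≤ G y) : hammingWalk ι A F x ≤ hammingWalk ι A G x := by
  simp only [hammingWalk_apply]
  gcongr with i _ a _
  exact h _ (hammingDist_update_le x i a)

lemma hammingWalk_pow_apply_le_of_hammingDist_le [DecidableEq A]
    {F G : (ι → A) → ℝ} {n : ℕ} {x : ι → A}
    (h : ∀ y, hammingDist x y ≤ n → F y ≤ G y) :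
    (hammingWalk ι A ^ n) F x ≤ (hammingWalk ι A ^ n) G x := by
  induction n generalizing x with
  | zero => exact h x (hammingDist_self x).le
  | succ n ih =>
    simp only [pow_succ', Module.End.mul_apply]
    refine hammingWalk_apply_le_of_hammingDist_le_one fun y hxy ↦ ih fun z hyz ↦ h z ?_
    exact (hammingDist_triangle x y z).trans (by omega)

lemma hammingWalk_apply_hammingDist [DecidableEq A] (φ : ℕ → ℝ) (x y : ι → A) :
    hammingWalk ι A (fun z ↦ φ (hammingDist x z)) y =
      ((Fintype.card ι : ℝ) * Fintype.card A)⁻¹ *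
        (hammingDist x y *
            (φ (hammingDist x y - 1) + (Fintype.card A - 1) * φ (hammingDist x y)) +
          (Fintype.card ι - hammingDist x y) *
            (φ (hammingDist x y) + (Fintype.card A - 1) * φ (hammingDist x y + 1))) := by
  have card_agree : (#{i | ¬x i ≠ y i} : ℝ) = Fintype.card ι - hammingDist x y := by
    rw [eq_sub_iff_add_eq']
    exact_mod_cast card_filter_add_card_filter_not (s := univ) fun i ↦ x i ≠ y i
  simp only [hammingWalk_apply, sum_apply_hammingDist_update, sum_ite, sum_const, nsmul_eq_mul,
    card_agree]
  rfl

lemma exists_hammingWalk_pow_eq_sum [DecidableEq A] (n : ℕ) :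
    ∃ φ : ℕ → ℝ, ∀ (F : (ι → A) → ℝ) (x : ι → A),
      (hammingWalk ι A ^ n) F x = ∑ y, φ (hammingDist x y) * F y := by
  induction n with
  | zero => exact ⟨fun w ↦ if w = 0 then 1 else 0, fun F x ↦ by simp⟩
  | succ n ih =>
    obtain ⟨φ, hφ⟩ := ih
    refine ⟨fun w ↦ ((Fintype.card ι : ℝ) * Fintype.card A)⁻¹ *
        (w * (φ (w - 1) + (Fintype.card A - 1) * φ w) +
          (Fintype.card ι - w) * (φ w + (Fintype.card A - 1) * φ (w + 1))), fun F x ↦ ?_⟩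
    have pow_eq : (hammingWalk ι A ^ n) F = ∑ y, F y • fun z ↦ φ (hammingDist y z) := by
      ext z
      simp [hφ, hammingDist_comm z, mul_comm]
    rw [pow_succ', Module.End.mul_apply, pow_eq, map_sum, Finset.sum_apply]
    refine sum_congr rfl fun y _ ↦ ?_
    rw [map_smul, Pi.smul_apply, hammingWalk_apply_hammingDist, hammingDist_comm y x, smul_eq_mul,
      mul_comm]

lemma sum_hammingWalk_le {F : (ι → A) → ℝ} (hF : 0 ≤ F) :
    ∑ x, hammingWalk ι A F x ≤ ∑ x, F x := by
  classical
  obtain ⟨φ, hφ⟩ := exists_hammingWalk_pow_eq_sum (ι := ι) (A := A) 1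
  rw [pow_one] at hφ
  have sum_kernel (y : ι → A) : ∑ x, φ (hammingDist x y) ≤ 1 := by
    simpa [hφ, hammingDist_comm y] using hammingWalk_one_le y
  calc ∑ x, hammingWalk ι A F x = ∑ y, (∑ x, φ (hammingDist x y)) * F y := by
        simp only [hφ, sum_mul]
        exact sum_comm
    _ ≤ ∑ y, F y := sum_le_sum fun y _ ↦ mul_le_of_le_one_left (hF y) (sum_kernel y)

lemma hammingWalk_hammingDist [DecidableEq A] [Nonempty ι] (x y : ι → A) :
    hammingWalk ι A (fun z ↦ (hammingDist x z : ℝ)) y =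
      hammingDist x y + (1 - 1 / Fintype.card A) - hammingDist x y / Fintype.card ι := by
  have : Nonempty A := ⟨x (Classical.arbitrary ι)⟩
  have cast_pred : (hammingDist x y : ℝ) * (hammingDist x y - 1 : ℕ) =
      hammingDist x y * (hammingDist x y - 1) := by
    cases hammingDist x y <;> simp
  rw [hammingWalk_apply_hammingDist (fun w ↦ (w : ℝ)), mul_add (hammingDist x y : ℝ), cast_pred]
  push_cast
  field_simp
  ring

lemma hammingDist_add_le_hammingWalk [DecidableEq A] [Nonempty ι] [Nontrivial A] {x y : ι → A}
    (h : 4 * hammingDist x y ≤ Fintype.card ι) :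
    hammingDist x y + 1 / 4 ≤ hammingWalk ι A (fun z ↦ (hammingDist x z : ℝ)) y := by
  have div_le : (hammingDist x y : ℝ) / Fintype.card ι ≤ 1 / 4 := by
    rw [div_le_div_iff₀ (by positivity) (by norm_num)]
    exact_mod_cast (mul_comm _ _).trans_le (h.trans (one_mul _).ge)
  have one_div_le : (1 : ℝ) / Fintype.card A ≤ 1 / 2 := by
    gcongr
    exact_mod_cast Fintype.one_lt_card (α := A)
  rw [hammingWalk_hammingDist]
  linarith

lemma div_four_le_hammingWalk_pow_hammingDist [DecidableEq A] [Nontrivial A] (x : ι → A) {n : ℕ}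
    (hn : 4 * n ≤ Fintype.card ι) :
    (n : ℝ) / 4 ≤ (hammingWalk ι A ^ n) (fun y ↦ (hammingDist x y : ℝ)) x := by
  induction n with
  | zero => simp
  | succ n ih =>
    set D : (ι → A) → ℝ := fun y ↦ hammingDist x y
    have : Nonempty ι := Fintype.card_pos_iff.mp (by omega)
    have drift (y : ι → A) (hy : hammingDist x y ≤ n) :
        (D + (1 / 4 : ℝ) • 1) y ≤ hammingWalk ι A D y := by
      simpa using hammingDist_add_le_hammingWalk (x := x) (y := y) (by omega)
    calc ((n + 1 : ℕ) : ℝ) / 4 = n / 4 + 1 / 4 * 1 := by push_cast; ring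
      _ ≤ (hammingWalk ι A ^ n) D x + 1 / 4 * (hammingWalk ι A ^ n) 1 x := by
          rw [hammingWalk_pow_one, Pi.one_apply]
          gcongr
          exact ih (by omega)
      _ = (hammingWalk ι A ^ n) (D + (1 / 4 : ℝ) • 1) x := by simp
      _ ≤ (hammingWalk ι A ^ n) (hammingWalk ι A D) x :=
          hammingWalk_pow_apply_le_of_hammingDist_le drift
      _ = (hammingWalk ι A ^ (n + 1)) D x := by rw [pow_succ, Module.End.mul_apply]

lemma div_four_le_add_hammingWalk_pow_indicator_lt [DecidableEq A] [Nontrivial A] (x : ι → A)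
    (L : ℕ) {n : ℕ} (hn : 4 * n ≤ Fintype.card ι) :
    (n : ℝ) / 4 ≤
      L + n * (hammingWalk ι A ^ n) (fun y ↦ if L < hammingDist x y then 1 else 0) x := by
  set U : (ι → A) → ℝ := fun y ↦ if L < hammingDist x y then 1 else 0 with hU
  have dist_le (y : ι → A) (hy : hammingDist x y ≤ n) :
      (hammingDist x y : ℝ) ≤ ((L : ℝ) • 1 + (n : ℝ) • U) y := by
    have hy' : (hammingDist x y : ℝ) ≤ n := by exact_mod_cast hy
    by_cases h : L < hammingDist x y
    · simpa [hU, h] using hy'.trans (le_add_of_nonneg_left L.cast_nonneg)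
    · simpa [hU, h] using not_lt.mp h
  calc (n : ℝ) / 4 ≤ (hammingWalk ι A ^ n) (fun y ↦ (hammingDist x y : ℝ)) x :=
        div_four_le_hammingWalk_pow_hammingDist x hn
    _ ≤ (hammingWalk ι A ^ n) ((L : ℝ) • 1 + (n : ℝ) • U) x :=
        hammingWalk_pow_apply_le_of_hammingDist_le dist_le
    _ = L * (hammingWalk ι A ^ n) 1 x + n * (hammingWalk ι A ^ n) U x := by simp
    _ ≤ L + n * (hammingWalk ι A ^ n) U x := by
        gcongr
        exact mul_le_of_le_one_right L.cast_nonneg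
          (pow_apply_le_self monotone_hammingWalk hammingWalk_one_le n x)

lemma one_eighth_le_hammingWalk_pow_indicator_lt [DecidableEq A] [Nontrivial A] (x : ι → A) {L : ℕ}
    (hL : 32 * (L + 1) ≤ Fintype.card ι) :
    1 / 8 ≤ (hammingWalk ι A ^ (8 * (L + 1))) (fun y ↦ if L < hammingDist x y then 1 else 0) x := by
  have mean_le := div_four_le_add_hammingWalk_pow_indicator_lt x L (n := 8 * (L + 1)) (by omega)
  push_cast at mean_le
  refine le_of_mul_le_mul_left ?_ (by positivity : (0 : ℝ) < 8 * (L + 1))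
  linarith

lemma hammingWalk_indicator_lt_le [DecidableEq A] (x : ι → A) (k : ℕ) :
    hammingWalk ι A (fun y ↦ if k < hammingDist x y then 1 else 0) ≤
      (fun y ↦ if k < hammingDist x y then 1 else 0) +
        fun y ↦ if hammingDist x y = k then 1 else 0 := fun y ↦ by
  set U : (ι → A) → ℝ := fun y ↦ if k < hammingDist x y then 1 else 0 with hU
  rcases lt_or_ge (hammingDist x y) k with hlt | hge
  · calc hammingWalk ι A U y ≤ hammingWalk ι A 0 y :=
          hammingWalk_apply_le_of_hammingDist_le_one fun z hyz ↦ by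
            have not_lt : ¬k < hammingDist x z := by
              have := hammingDist_triangle x y z
              omega
            simp [hU, not_lt]
      _ ≤ _ := by simp [hU, hlt.not_gt, hlt.ne]
  · calc hammingWalk ι A U y ≤ hammingWalk ι A 1 y :=
          monotone_hammingWalk (fun z ↦ by simp only [hU]; split_ifs <;> simp) y
      _ ≤ 1 := hammingWalk_one_le y
      _ ≤ _ := by rcases hge.eq_or_lt with h | h <;> simp [hU, h, ne_of_gt]

/-- Since the walk moves by at most one per step, it cannot go beyond distance `k` without visiting
distance `k`. -/
lemma hammingWalk_pow_indicator_lt_le_sum [DecidableEq A] (x : ι → A) (k n : ℕ) :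
    (hammingWalk ι A ^ n) (fun y ↦ if k < hammingDist x y then 1 else 0) x ≤
      ∑ j ∈ range n, (hammingWalk ι A ^ j) (fun y ↦ if hammingDist x y = k then 1 else 0) x := by
  simpa using pow_apply_le_add_sum monotone_hammingWalk (hammingWalk_indicator_lt_le x k) n x

lemma one_eighth_le_sum_hammingWalk_pow_indicator_eq [DecidableEq A] [Nontrivial A] (x : ι → A)
    {k L : ℕ} (hk : k ≤ L) (hL : 32 * (L + 1) ≤ Fintype.card ι) :
    1 / 8 ≤ ∑ j ∈ range (8 * (L + 1)),
      (hammingWalk ι A ^ j) (fun y ↦ if hammingDist x y = k then 1 else 0) x := by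
  calc 1 / 8 ≤ (hammingWalk ι A ^ (8 * (L + 1)))
          (fun y ↦ if L < hammingDist x y then 1 else 0) x :=
        one_eighth_le_hammingWalk_pow_indicator_lt x hL
    _ ≤ (hammingWalk ι A ^ (8 * (L + 1))) (fun y ↦ if k < hammingDist x y then 1 else 0) x := by
        refine monotone_pow_apply monotone_hammingWalk _ (fun y ↦ ?_) x
        by_cases h : L < hammingDist x y
        · simp [h, hk.trans_lt h]
        · simpa only [h, if_false] using by positivity
    _ ≤ _ := hammingWalk_pow_indicator_lt_le_sum x k _

end HammingWalk

section SphericalMean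

variable {ι A E : Type*} [Fintype ι] [DecidableEq ι] [Fintype A] [DecidableEq A]

/-- The sphere of radius `k` about `x` in the Hamming graph. -/
def hammingSphere (x : ι → A) (k : ℕ) : Finset (ι → A) := {y | hammingDist x y = k}

@[simp]
lemma mem_hammingSphere {x y : ι → A} {k : ℕ} : y ∈ hammingSphere x k ↔ hammingDist x y = k := by
  simp [hammingSphere]

lemma card_hammingSphere_eq (x y : ι → A) (k : ℕ) :
    #(hammingSphere x k) = #(hammingSphere y k) := by
  let e (i : ι) : Equiv.Perm A := Equiv.swap (x i) (y i)
  refine card_equiv (Equiv.piCongrRight e) fun z ↦ ?_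
  have map_center : (fun i ↦ e i (x i)) = y := funext fun i ↦ Equiv.swap_apply_left _ _
  have dist_eq := hammingDist_comp (fun i ↦ e i) (x := x) (y := z) fun i ↦ (e i).injective
  rw [map_center] at dist_eq
  simp only [mem_hammingSphere, ← dist_eq]
  rfl

/-- The average of `f` over the sphere of radius `k` about `x`, and `0` if that sphere is empty.
On `(ℤ/(m+1)ℤ)^N` this is `σ_k * f`. -/
def sphericalMean [AddCommGroup E] [Module ℝ E] (k : ℕ) (f : (ι → A) → E) (x : ι → A) : E :=
  (#(hammingSphere x k) : ℝ)⁻¹ • ∑ y ∈ hammingSphere x k, f y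

lemma card_smul_sphericalMean [AddCommGroup E] [Module ℝ E] (k : ℕ) (f : (ι → A) → E)
    (x : ι → A) :
    (#(hammingSphere x k) : ℝ) • sphericalMean k f x = ∑ y ∈ hammingSphere x k, f y := by
  rcases (hammingSphere x k).eq_empty_or_nonempty with h | h
  · simp [h]
  · exact smul_inv_smul₀ (by exact_mod_cast h.card_pos.ne') _

lemma sphericalMean_nonneg {F : (ι → A) → ℝ} (hF : 0 ≤ F) (k : ℕ) (x : ι → A) :
    0 ≤ sphericalMean k F x :=
  mul_nonneg (by positivity) (sum_nonneg fun y _ ↦ hF y)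

lemma sphericalMean_eq_zero_of_card_lt [AddCommGroup E] [Module ℝ E] (f : (ι → A) → E) {k : ℕ}
    (hk : Fintype.card ι < k) (x : ι → A) : sphericalMean k f x = 0 := by
  have sphere_empty : hammingSphere x k = ∅ :=
    eq_empty_of_forall_notMem fun y hy ↦
      (hammingDist_le_card_fintype.trans_lt hk).ne (mem_hammingSphere.mp hy)
  simp [sphericalMean, sphere_empty]

lemma norm_sphericalMean_le [NormedAddCommGroup E] [NormedSpace ℝ E] (f : (ι → A) → E) (k : ℕ)
    (x : ι → A) : ‖sphericalMean k f x‖ ≤ sphericalMean k (fun y ↦ ‖f y‖) x := by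
  rw [sphericalMean, norm_smul, norm_inv, Real.norm_natCast]
  exact mul_le_mul_of_nonneg_left (norm_sum_le _ _) (by positivity)

lemma sum_sphericalMean_le {F : (ι → A) → ℝ} (hF : 0 ≤ F) (k : ℕ) :
    ∑ x, sphericalMean k F x ≤ ∑ x, F x := by
  calc ∑ x, sphericalMean k F x
      = ∑ x, ∑ y ∈ hammingSphere x k, (#(hammingSphere y k) : ℝ)⁻¹ * F y := by
        refine sum_congr rfl fun x _ ↦ ?_
        rw [sphericalMean, smul_eq_mul, mul_sum]
        exact sum_congr rfl fun y _ ↦ by rw [card_hammingSphere_eq x y]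
    _ = ∑ y, ∑ _x ∈ hammingSphere y k, (#(hammingSphere y k) : ℝ)⁻¹ * F y :=
        sum_comm' fun x y ↦ by simp [hammingDist_comm x y]
    _ = ∑ y, #(hammingSphere y k) * (#(hammingSphere y k) : ℝ)⁻¹ * F y := by
        simp [mul_assoc]
    _ ≤ ∑ y, F y := sum_le_sum fun y _ ↦ mul_le_of_le_one_left (hF y) mul_inv_le_one

lemma hammingWalk_pow_apply_eq_sum_sphericalMean (F : (ι → A) → ℝ) (n : ℕ) (x : ι → A) :
    (hammingWalk ι A ^ n) F x = ∑ k ∈ range (Fintype.card ι + 1),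
      (hammingWalk ι A ^ n) (fun y ↦ if hammingDist x y = k then 1 else 0) x *
        sphericalMean k F x := by
  obtain ⟨φ, hφ⟩ := exists_hammingWalk_pow_eq_sum (ι := ι) (A := A) n
  have pow_sphere (k : ℕ) : (hammingWalk ι A ^ n)
      (fun y ↦ if hammingDist x y = k then 1 else 0) x = #(hammingSphere x k) * φ k := by
    simp only [hφ, mul_ite, mul_one, mul_zero, ← sum_filter]
    rw [sum_congr rfl fun y hy ↦ by rw [(mem_filter.mp hy).2], sum_const, nsmul_eq_mul]
    rfl
  have sum_sphere (k : ℕ) : ∑ y ∈ hammingSphere x k, φ (hammingDist x y) * F y =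
      #(hammingSphere x k) * φ k * sphericalMean k F x := by
    rw [sum_congr rfl fun y hy ↦ by rw [mem_hammingSphere.mp hy], ← mul_sum,
      ← card_smul_sphericalMean, smul_eq_mul]
    ring
  rw [hφ, ← sum_fiberwise_of_maps_to (g := hammingDist x)
    fun y _ ↦ mem_range_succ_iff.mpr hammingDist_le_card_fintype]
  exact sum_congr rfl fun k _ ↦ (sum_sphere k).trans (by rw [pow_sphere])

lemma sum_sphericalMean_le_sum_hammingWalk_pow [Nontrivial A] {F : (ι → A) → ℝ} (hF : 0 ≤ F)
    {L : ℕ} (hL : 32 * (L + 1) ≤ Fintype.card ι) (x : ι → A) :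
    ∑ k ∈ range (L + 1), sphericalMean k F x ≤
      8 * (∑ j ∈ range (8 * (L + 1)), (hammingWalk ι A ^ j) F) x := by
  set p : ℕ → ℝ := fun k ↦ ∑ j ∈ range (8 * (L + 1)),
    (hammingWalk ι A ^ j) (fun y ↦ if hammingDist x y = k then 1 else 0) x with hp
  have p_nonneg (k : ℕ) : 0 ≤ p k := sum_nonneg fun j _ ↦ by
    have sphere_nonneg : (0 : (ι → A) → ℝ) ≤ fun y ↦ if hammingDist x y = k then 1 else 0 :=
      fun y ↦ by positivity
    simpa using monotone_pow_apply monotone_hammingWalk j sphere_nonneg x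
  calc ∑ k ∈ range (L + 1), sphericalMean k F x
      ≤ ∑ k ∈ range (L + 1), 8 * (p k * sphericalMean k F x) := by
        refine sum_le_sum fun k hk ↦ ?_
        have := mul_le_mul_of_nonneg_right
          (one_eighth_le_sum_hammingWalk_pow_indicator_eq x (mem_range_succ_iff.mp hk) hL)
          (sphericalMean_nonneg hF k x)
        linarith
    _ ≤ ∑ k ∈ range (Fintype.card ι + 1), 8 * (p k * sphericalMean k F x) :=
        sum_le_sum_of_subset_of_nonneg (range_mono (by omega)) fun k _ _ ↦
          mul_nonneg (by norm_num) (mul_nonneg (p_nonneg k) (sphericalMean_nonneg hF k x))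
    _ = 8 * (∑ j ∈ range (8 * (L + 1)), (hammingWalk ι A ^ j) F) x := by
        simp only [Finset.sum_apply, hammingWalk_pow_apply_eq_sum_sphericalMean F _ x]
        rw [← mul_sum, sum_comm]
        simp only [hp, sum_mul]

lemma card_mul_le_of_exists_small_radius [Nontrivial A] {F : (ι → A) → ℝ} (hF : 0 ≤ F) {lam : ℝ}
    (hlam : 0 ≤ lam) {s : Finset (ι → A)}
    (hs : ∀ x ∈ s, ∃ L : ℕ, 32 * (L + 1) ≤ Fintype.card ι ∧
      (L + 1) * lam < ∑ k ∈ range (L + 1), sphericalMean k F x) :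
    #s * lam ≤ 64 * ∑ x, F x := by
  have ergodic : #s * (lam / 64) ≤ ∑ x, F x := by
    refine card_mul_le_sum_of_exists_lt_sum_pow monotone_hammingWalk
      (fun u ↦ sum_hammingWalk_le) hammingWalk_one_le hF (by positivity) fun x hx ↦ ?_
    obtain ⟨L, hL, hlt⟩ := hs x hx
    refine ⟨8 * (L + 1), ?_⟩
    have := sum_sphericalMean_le_sum_hammingWalk_pow hF hL x
    push_cast
    linarith
  linarith

lemma sum_range_sphericalMean_le {F : (ι → A) → ℝ} (hF : 0 ≤ F) (L : ℕ) (x : ι → A) :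
    ∑ k ∈ range (L + 1), sphericalMean k F x ≤
      ∑ k ∈ range (Fintype.card ι + 1), sphericalMean k F x := by
  rw [← sum_filter_ne_zero]
  refine sum_le_sum_of_subset_of_nonneg (fun k hk ↦ mem_range_succ_iff.mpr ?_)
    fun k _ _ ↦ sphericalMean_nonneg hF k x
  by_contra! hlt
  exact (mem_filter.mp hk).2 (sphericalMean_eq_zero_of_card_lt F hlt x)

lemma card_mul_le_of_exists_large_radius {F : (ι → A) → ℝ} (hF : 0 ≤ F) {lam : ℝ}
    (hlam : 0 ≤ lam) {s : Finset (ι → A)}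
    (hs : ∀ x ∈ s, ∃ L : ℕ, Fintype.card ι < 32 * (L + 1) ∧
      (L + 1) * lam < ∑ k ∈ range (L + 1), sphericalMean k F x) :
    #s * lam ≤ 33 * ∑ x, F x := by
  set total : (ι → A) → ℝ := fun x ↦ ∑ k ∈ range (Fintype.card ι + 1), sphericalMean k F x
  have le_total (x : ι → A) (hx : x ∈ s) : (Fintype.card ι + 1) * lam ≤ 33 * total x := by
    obtain ⟨L, hL, hlt⟩ := hs x hx
    have card_le : (Fintype.card ι + 1 : ℝ) ≤ 33 * (L + 1) := by
      exact_mod_cast (by omega : Fintype.card ι + 1 ≤ 33 * (L + 1))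
    calc (Fintype.card ι + 1) * lam ≤ 33 * ((L + 1) * lam) := by
          rw [← mul_assoc]
          gcongr
      _ ≤ 33 * ∑ k ∈ range (L + 1), sphericalMean k F x := by gcongr
      _ ≤ 33 * total x := by
          gcongr
          exact sum_range_sphericalMean_le hF L x
  have total_nonneg (x : ι → A) : 0 ≤ total x :=
    sum_nonneg fun k _ ↦ sphericalMean_nonneg hF k x
  have sum_total : ∑ x, total x ≤ (Fintype.card ι + 1) * ∑ x, F x := by
    rw [sum_comm]
    simpa using
      sum_le_card_nsmul (range (Fintype.card ι + 1)) _ _ fun k _ ↦ sum_sphericalMean_le hF k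
  refine le_of_mul_le_mul_left ?_ (by positivity : (0 : ℝ) < Fintype.card ι + 1)
  calc (Fintype.card ι + 1) * (#s * lam) = #s • ((Fintype.card ι + 1) * lam) := by
        rw [nsmul_eq_mul]; ring
    _ ≤ ∑ x ∈ s, 33 * total x := card_nsmul_le_sum _ _ _ le_total
    _ ≤ ∑ x, 33 * total x := sum_le_sum_of_subset_of_nonneg (subset_univ s) fun x _ _ ↦
        mul_nonneg (by norm_num) (total_nonneg x)
    _ ≤ (Fintype.card ι + 1) * (33 * ∑ x, F x) := by
        rw [← mul_sum]
        linarith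

lemma card_mul_le_of_exists_radius [Nontrivial A] {F : (ι → A) → ℝ} (hF : 0 ≤ F) {lam : ℝ}
    (hlam : 0 ≤ lam) {s : Finset (ι → A)}
    (hs : ∀ x ∈ s, ∃ L : ℕ, (L + 1) * lam < ∑ k ∈ range (L + 1), sphericalMean k F x) :
    #s * lam ≤ 97 * ∑ x, F x := by
  choose! L hL using hs
  have small := card_mul_le_of_exists_small_radius hF hlam
    (s := {x ∈ s | 32 * (L x + 1) ≤ Fintype.card ι})
    fun x hx ↦ ⟨L x, (mem_filter.mp hx).2, hL x (mem_filter.mp hx).1⟩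
  have large := card_mul_le_of_exists_large_radius hF hlam
    (s := {x ∈ s | ¬32 * (L x + 1) ≤ Fintype.card ι})
    fun x hx ↦ ⟨L x, not_le.mp (mem_filter.mp hx).2, hL x (mem_filter.mp hx).1⟩
  rw [← card_filter_add_card_filter_not (s := s) fun x ↦ 32 * (L x + 1) ≤ Fintype.card ι]
  push_cast
  linarith

end SphericalMean

theorem statement2_general {ι A E : Type*} [Fintype ι] [DecidableEq ι] [Fintype A] [DecidableEq A]
    [Nontrivial A] [NormedAddCommGroup E] [NormedSpace ℝ E] (f : (ι → A) → E) {lam : ℝ}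
    (hlam : 0 < lam) :
    (({x | ∃ L : ℕ, lam < (1 / ((L : ℝ) + 1)) * ‖∑ k ∈ range (L + 1), sphericalMean k f x‖} :
        Set (ι → A)).ncard : ℝ) ≤ 97 * lam⁻¹ * ∑ x, ‖f x‖ := by
  classical
  rw [Set.ncard_eq_toFinset_card', mul_right_comm, ← div_eq_mul_inv, le_div_iff₀ hlam]
  refine card_mul_le_of_exists_radius (fun x ↦ norm_nonneg (f x)) hlam.le fun x hx ↦ ?_
  obtain ⟨L, hL⟩ := Set.mem_toFinset.mp hx
  refine ⟨L, ?_⟩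
  calc (L + 1) * lam < ‖∑ k ∈ range (L + 1), sphericalMean k f x‖ := by
        rwa [← lt_inv_mul_iff₀ (by positivity), ← one_div]
    _ ≤ ∑ k ∈ range (L + 1), ‖sphericalMean k f x‖ := norm_sum_le _ _
    _ ≤ ∑ k ∈ range (L + 1), sphericalMean k (fun y ↦ ‖f y‖) x :=
        sum_le_sum fun k _ ↦ norm_sphericalMean_le f k x

lemma card_hw_eq {m N : ℕ} (k : ℕ) (x : Fin N → ZMod (m + 1)) :
    #{y : Fin N → ZMod (m + 1) | (hw y : ℤ) = k} = #(hammingSphere x k) := by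
  rw [card_hammingSphere_eq x 0]
  simp only [hammingSphere, hammingDist_zero_left, Nat.cast_inj]
  rfl

lemma convC_sigmaC {m N : ℕ} (k : ℕ) (f : (Fin N → ZMod (m + 1)) → ℂ)
    (x : Fin N → ZMod (m + 1)) : convC (sigmaC m N k) f x = sphericalMean k f x := by
  have hw_sub (y : Fin N → ZMod (m + 1)) : hw (x - y) = hammingDist x y := by
    simp [hw, hammingDist, sub_ne_zero]
  rw [convC, ← Equiv.sum_comp (Equiv.subLeft x)]
  simp only [sigmaC, card_hw_eq k x]
  simp [hw_sub, sphericalMean, hammingSphere, mul_sum, sum_filter]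

theorem statement2 (m : ℕ) (hm : 2 ≤ m) :
    ∃ C : ℝ, ∀ N : ℕ, 1 ≤ N → ∀ f : (Fin N → ZMod (m + 1)) → ℂ, ∀ lam : ℝ, 0 < lam →
      ((Finset.univ.filter fun x => lam < smoothLocalMax m N f x).card : ℝ) ≤
        C * lam⁻¹ * ∑ x, ‖f x‖ := by
  have : Fact (1 < m + 1) := ⟨by omega⟩
  refine ⟨97, fun N _ f lam hlam ↦ le_trans ?_ (statement2_general f hlam)⟩
  rw [← Set.ncard_coe_finset]
  gcongr
  · exact Set.toFinite _
  intro x hx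
  obtain ⟨L, -, hL⟩ := (lt_sup'_iff _).mp (mem_filter.mp hx).2
  exact ⟨L, by simpa only [convC_sigmaC] using hL⟩
end
end

section
/- Define N_t = Ñ_{c_m(1−e^{−t})} for t > 0, the semigroup maximal function N_* f(x) = sup_{T > 0} |(1/T) ∫_0^T (N_t f)(x) dt|, and the reparametrized maximal function Ñ_* f(x) = sup_{0 < P ≤ c_m} |(1/P) ∫_0^P (Ñ_p f)(x) dp|. Then for every f : G → ℂ and every x ∈ G, Ñ_* f(x) ≤ N_* f(x). -/
open Finset

noncomputable section

/-- The noise density `μ̃_p^N(y) = (p/m)^{|y|} (1-p)^{N-|y|}`. -/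
def noiseDensity (m N : ℕ) (p : ℝ) (y : Fin N → ZMod (m + 1)) : ℝ :=
  (p / m) ^ hw y * (1 - p) ^ (N - hw y)

/-- The noise operator `Ñ_p f = f * μ̃_p^N`. -/
def noiseOp (m N : ℕ) (p : ℝ) (f : (Fin N → ZMod (m + 1)) → ℂ) :
    (Fin N → ZMod (m + 1)) → ℂ :=
  convC (fun y => (noiseDensity m N p y : ℂ)) f

/-- The semigroup maximal function `N_* f(x) = sup_{T>0} |(1/T)∫_0^T (N_t f)(x) dt|`,
where `N_t = Ñ_{c_m(1-e^{-t})}`. -/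
def semigroupMax (m N : ℕ) (f : (Fin N → ZMod (m + 1)) → ℂ) (x : Fin N → ZMod (m + 1)) : ℝ :=
  ⨆ T : Set.Ioi (0 : ℝ),
    ‖(1 / (T : ℝ)) • ∫ t in (0 : ℝ)..(T : ℝ),
        noiseOp m N ((m / (m + 1) : ℝ) * (1 - Real.exp (-t))) f x‖

/-- The reparametrized maximal function `Ñ_* f(x) = sup_{0<P≤c_m} |(1/P)∫_0^P (Ñ_p f)(x) dp|`. -/
def reparamMax (m N : ℕ) (f : (Fin N → ZMod (m + 1)) → ℂ) (x : Fin N → ZMod (m + 1)) : ℝ :=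
  ⨆ P : Set.Ioc (0 : ℝ) ((m : ℝ) / (m + 1)),
    ‖(1 / (P : ℝ)) • ∫ p in (0 : ℝ)..(P : ℝ), noiseOp m N p f x‖

/-!
Substituting `p = φ t` with `φ t = c (1 - e^{-t})` turns `∫₀^P F` into `∫₀^T φ' t • F (φ t)`, whose
weight `φ'` is nonnegative and decreasing. Integrating by parts writes such a weighted integral as
a combination of the primitives `∫₀^t F ∘ φ`, `t ≤ T`, with the nonnegative coefficients `φ' T` and
`-φ'' t`. If each of these primitives has norm at most `S t`, undoing the same integration by parts
for the constant function `S` bounds the weighted integral by `S ∫₀^T φ' = S P`. This covers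
`P < c`; the endpoint `P = c` follows by continuity.
-/

open MeasureTheory Set

section WeightedIntegral

variable {E : Type*} [NormedAddCommGroup E] [NormedSpace ℝ E] [CompleteSpace E]
  {a b S : ℝ} {w w' : ℝ → ℝ} {G : ℝ → E}

theorem integral_smul_eq_smul_integral_sub_integral_deriv_smul (hab : a ≤ b)
    (hw : ∀ t ∈ Icc a b, HasDerivAt w (w' t) t) (hw' : IntervalIntegrable w' volume a b)
    (hG : ContinuousOn G (Icc a b)) :
    ∫ t in a..b, w t • G t =
      w b • (∫ t in a..b, G t) - ∫ t in a..b, w' t • ∫ s in a..t, G s := by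
  have hG_int : IntervalIntegrable G volume a b := hG.intervalIntegrable_of_Icc hab
  have primitive_hasDerivAt (t : ℝ) (ht : t ∈ Ioo a b) :
      HasDerivAt (fun u => ∫ s in a..u, G s) (G t) t :=
    intervalIntegral.integral_hasDerivAt_right
      ((hG.mono (Icc_subset_Icc_right ht.2.le)).intervalIntegrable_of_Icc ht.1.le)
      ((hG.mono Ioo_subset_Icc_self).stronglyMeasurableAtFilter isOpen_Ioo t ht)
      (hG.continuousAt (Icc_mem_nhds ht.1 ht.2))
  have by_parts := intervalIntegral.integral_smul_deriv_eq_deriv_smul_of_hasDerivAt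
    (u := w) (u' := w') (v := fun u => ∫ s in a..u, G s) (v' := G) (a := a) (b := b)
    (by rw [uIcc_of_le hab]; exact HasDerivAt.continuousOn hw)
    (intervalIntegral.continuousOn_primitive_interval' hG_int left_mem_uIcc)
    (by rw [min_eq_left hab, max_eq_right hab]; exact fun t ht => hw t (Ioo_subset_Icc_self ht))
    (by rwa [min_eq_left hab, max_eq_right hab]) hw' hG_int
  rwa [intervalIntegral.integral_same, smul_zero, sub_zero] at by_parts

theorem norm_integral_smul_le_of_deriv_nonpos (hab : a ≤ b)
    (hw : ∀ t ∈ Icc a b, HasDerivAt w (w' t) t) (hw' : IntervalIntegrable w' volume a b)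
    (hw'_nonpos : ∀ t ∈ Icc a b, w' t ≤ 0) (hwb : 0 ≤ w b) (hG : ContinuousOn G (Icc a b))
    (hS : ∀ t ∈ Icc a b, ‖∫ s in a..t, G s‖ ≤ S * (t - a)) :
    ‖∫ t in a..b, w t • G t‖ ≤ S * ∫ t in a..b, w t := by
  have boundary_le : ‖w b • ∫ t in a..b, G t‖ ≤ w b * (S * (b - a)) := by
    rw [norm_smul, Real.norm_of_nonneg hwb]
    exact mul_le_mul_of_nonneg_left (hS b (right_mem_Icc.2 hab)) hwb
  have integrand_le (t : ℝ) (ht : t ∈ Icc a b) :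
      ‖w' t • ∫ s in a..t, G s‖ ≤ -w' t * (S * (t - a)) := by
    rw [norm_smul, Real.norm_of_nonpos (hw'_nonpos t ht)]
    exact mul_le_mul_of_nonneg_left (hS t ht) (neg_nonneg.2 (hw'_nonpos t ht))
  have remainder_le :
      ‖∫ t in a..b, w' t • ∫ s in a..t, G s‖ ≤ ∫ t in a..b, -w' t * (S * (t - a)) :=
    intervalIntegral.norm_integral_le_of_norm_le hab
      (.of_forall fun t ht => integrand_le t (Ioc_subset_Icc_self ht))
      (hw'.neg.mul_continuousOn (by fun_prop))
  have weight_by_parts := integral_smul_eq_smul_integral_sub_integral_deriv_smul hab hw hw'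
    (G := fun _ => S) (by fun_prop)
  calc ‖∫ t in a..b, w t • G t‖
      ≤ ‖w b • ∫ t in a..b, G t‖ + ‖∫ t in a..b, w' t • ∫ s in a..t, G s‖ := by
        rw [integral_smul_eq_smul_integral_sub_integral_deriv_smul hab hw hw' hG]
        exact norm_sub_le _ _
    _ ≤ w b * (S * (b - a)) + ∫ t in a..b, -w' t * (S * (t - a)) :=
        add_le_add boundary_le remainder_le
    _ = S * ∫ t in a..b, w t := by
        simp only [smul_eq_mul, intervalIntegral.integral_mul_const,
          intervalIntegral.integral_const] at weight_by_parts
        simp only [neg_mul, intervalIntegral.integral_neg, mul_comm S]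
        linarith

theorem norm_integral_le_of_norm_integral_comp_le {φ φ' φ'' : ℝ → ℝ} {F : ℝ → E} (hab : a ≤ b)
    (hφ : ∀ t ∈ Icc a b, HasDerivAt φ (φ' t) t) (hφ' : ∀ t ∈ Icc a b, HasDerivAt φ' (φ'' t) t)
    (hφ'' : IntervalIntegrable φ'' volume a b) (hφ''_nonpos : ∀ t ∈ Icc a b, φ'' t ≤ 0)
    (hφ'b : 0 ≤ φ' b) (hF : ContinuousOn F (φ '' Icc a b))
    (hS : ∀ t ∈ Icc a b, ‖∫ s in a..t, F (φ s)‖ ≤ S * (t - a)) :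
    ‖∫ p in φ a..φ b, F p‖ ≤ S * (φ b - φ a) := by
  have hφ'_cont : ContinuousOn φ' (Icc a b) := HasDerivAt.continuousOn hφ'
  have hFφ : ContinuousOn (F ∘ φ) (Icc a b) :=
    hF.comp (HasDerivAt.continuousOn hφ) (mapsTo_image φ _)
  rw [← uIcc_of_le hab] at hφ hF hφ'_cont
  rw [← intervalIntegral.integral_deriv_smul_comp' hφ hφ'_cont hF,
    ← intervalIntegral.integral_eq_sub_of_hasDerivAt hφ hφ'_cont.intervalIntegrable]
  exact norm_integral_smul_le_of_deriv_nonpos hab hφ' hφ'' hφ''_nonpos hφ'b hFφ hS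

end WeightedIntegral

section AveragesFromZero

variable {E : Type*} [NormedAddCommGroup E] [NormedSpace ℝ E]

theorem norm_one_div_smul_le_iff {T S : ℝ} (hT : 0 < T) (v : E) :
    ‖(1 / T) • v‖ ≤ S ↔ ‖v‖ ≤ S * T := by
  rw [norm_smul, Real.norm_of_nonneg (one_div_pos.2 hT).le, one_div, inv_mul_le_iff₀ hT, mul_comm]

theorem bddAbove_range_norm_average {G : ℝ → E} {C : ℝ} (hG : ∀ t, 0 < t → ‖G t‖ ≤ C) :
    BddAbove (range fun T : Ioi (0 : ℝ) => ‖(1 / (T : ℝ)) • ∫ t in (0 : ℝ)..T, G t‖) := by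
  refine ⟨C, ?_⟩
  rintro _ ⟨⟨T, hT : 0 < T⟩, rfl⟩
  refine (norm_one_div_smul_le_iff hT _).2 ?_
  simpa only [sub_zero, abs_of_pos hT] using
    intervalIntegral.norm_integral_le_of_norm_le_const (a := 0) (b := T) (f := G)
      fun t ht => hG t (uIoc_of_le hT.le ▸ ht).1

theorem norm_integral_le_iSup_norm_average_mul {G : ℝ → E}
    (hG : BddAbove (range fun T : Ioi (0 : ℝ) => ‖(1 / (T : ℝ)) • ∫ t in (0 : ℝ)..T, G t‖))
    {T : ℝ} (hT : 0 ≤ T) :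
    ‖∫ t in (0 : ℝ)..T, G t‖ ≤
      (⨆ T : Ioi (0 : ℝ), ‖(1 / (T : ℝ)) • ∫ t in (0 : ℝ)..T, G t‖) * T := by
  rcases hT.eq_or_lt with rfl | hT
  · simp
  · exact (norm_one_div_smul_le_iff hT _).1 (le_ciSup hG ⟨T, hT⟩)

end AveragesFromZero

section ExponentialReparametrization

variable {c : ℝ}

theorem hasDerivAt_mul_one_sub_exp_neg (c t : ℝ) :
    HasDerivAt (fun t => c * (1 - Real.exp (-t))) (c * Real.exp (-t)) t := by
  simpa using (((hasDerivAt_neg t).exp).const_sub 1).const_mul c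

theorem hasDerivAt_mul_exp_neg (c t : ℝ) :
    HasDerivAt (fun t => c * Real.exp (-t)) (-(c * Real.exp (-t))) t := by
  simpa using ((hasDerivAt_neg t).exp).const_mul c

theorem mul_one_sub_exp_neg_mem_Icc (hc : 0 ≤ c) {t : ℝ} (ht : 0 ≤ t) :
    c * (1 - Real.exp (-t)) ∈ Icc 0 c := by
  have exp_le_one : Real.exp (-t) ≤ 1 := Real.exp_le_one_iff.2 (neg_nonpos.2 ht)
  exact ⟨mul_nonneg hc (sub_nonneg.2 exp_le_one),
    mul_le_of_le_one_right hc (sub_le_self 1 (Real.exp_pos _).le)⟩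

theorem exists_mul_one_sub_exp_neg_eq {P : ℝ} (hP : P ∈ Ico 0 c) :
    ∃ T, 0 ≤ T ∧ c * (1 - Real.exp (-T)) = P := by
  have hc : 0 < c := hP.1.trans_lt hP.2
  have one_sub_pos : 0 < 1 - P / c := sub_pos.2 ((div_lt_one hc).2 hP.2)
  have one_sub_le_one : 1 - P / c ≤ 1 := sub_le_self 1 (div_nonneg hP.1 hc.le)
  refine ⟨-Real.log (1 - P / c), neg_nonneg.2 (Real.log_nonpos one_sub_pos.le one_sub_le_one), ?_⟩
  rw [neg_neg, Real.exp_log one_sub_pos, sub_sub_cancel, mul_div_cancel₀ P hc.ne']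

variable {E : Type*} [NormedAddCommGroup E] [NormedSpace ℝ E] [CompleteSpace E]
  {F : ℝ → E} {S : ℝ}

theorem norm_integral_le_of_norm_integral_comp_exp_le_of_lt
    (hF : ContinuousOn F (Icc 0 c))
    (hS : ∀ T, 0 ≤ T → ‖∫ t in (0 : ℝ)..T, F (c * (1 - Real.exp (-t)))‖ ≤ S * T)
    {P : ℝ} (hP : P ∈ Ico 0 c) : ‖∫ p in (0 : ℝ)..P, F p‖ ≤ S * P := by
  have hc : 0 ≤ c := hP.1.trans hP.2.le
  obtain ⟨T, hT, rfl⟩ := exists_mul_one_sub_exp_neg_eq hP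
  have image_subset : (fun t => c * (1 - Real.exp (-t))) '' Icc 0 T ⊆ Icc 0 c :=
    image_subset_iff.2 fun t ht => mul_one_sub_exp_neg_mem_Icc hc ht.1
  have weight_nonneg (t : ℝ) : 0 ≤ c * Real.exp (-t) := mul_nonneg hc (Real.exp_pos _).le
  have bound := norm_integral_le_of_norm_integral_comp_le (S := S) hT
    (fun t _ => hasDerivAt_mul_one_sub_exp_neg c t) (fun t _ => hasDerivAt_mul_exp_neg c t)
    (Continuous.intervalIntegrable (by fun_prop) _ _)
    (fun t _ => neg_nonpos.2 (weight_nonneg t)) (weight_nonneg T) (hF.mono image_subset)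
    (fun t ht => by simpa only [sub_zero] using hS t ht.1)
  simpa only [neg_zero, Real.exp_zero, sub_self, mul_zero, sub_zero] using bound

theorem norm_integral_le_of_norm_integral_comp_exp_le (hc : 0 < c)
    (hF : ContinuousOn F (Icc 0 c))
    (hS : ∀ T, 0 ≤ T → ‖∫ t in (0 : ℝ)..T, F (c * (1 - Real.exp (-t)))‖ ≤ S * T)
    {P : ℝ} (hP : P ∈ Icc 0 c) : ‖∫ p in (0 : ℝ)..P, F p‖ ≤ S * P := by
  have closure_eq : closure (Ico 0 c) = Icc 0 c := closure_Ico hc.ne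
  have primitive_continuousOn : ContinuousOn (fun P => ∫ p in (0 : ℝ)..P, F p) (Icc 0 c) := by
    rw [← uIcc_of_le hc.le] at hF ⊢
    exact intervalIntegral.continuousOn_primitive_interval' hF.intervalIntegrable left_mem_uIcc
  exact le_on_closure (fun Q hQ => norm_integral_le_of_norm_integral_comp_exp_le_of_lt hF hS hQ)
    (closure_eq ▸ primitive_continuousOn.norm) (by fun_prop) (closure_eq ▸ hP)

theorem iSup_norm_average_le_iSup_norm_average_comp_exp (hc : 0 < c)
    (hF : ContinuousOn F (Icc 0 c)) :
    ⨆ P : Ioc 0 c, ‖(1 / (P : ℝ)) • ∫ p in (0 : ℝ)..P, F p‖ ≤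
      ⨆ T : Ioi (0 : ℝ),
        ‖(1 / (T : ℝ)) • ∫ t in (0 : ℝ)..T, F (c * (1 - Real.exp (-t)))‖ := by
  obtain ⟨C, hC⟩ := isCompact_Icc.exists_bound_of_continuousOn hF
  have averages_bdd := bddAbove_range_norm_average
    fun t (ht : 0 < t) => hC _ (mul_one_sub_exp_neg_mem_Icc hc.le ht.le)
  have : Nonempty (Ioc 0 c) := ⟨⟨c, right_mem_Ioc.2 hc⟩⟩
  refine ciSup_le fun ⟨P, hP⟩ => (norm_one_div_smul_le_iff hP.1 _).2 ?_
  exact norm_integral_le_of_norm_integral_comp_exp_le hc hF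
    (fun T hT => norm_integral_le_iSup_norm_average_mul averages_bdd hT) (Ioc_subset_Icc_self hP)

end ExponentialReparametrization

theorem continuous_noiseOp (m N : ℕ) (f : (Fin N → ZMod (m + 1)) → ℂ)
    (x : Fin N → ZMod (m + 1)) : Continuous fun p : ℝ => noiseOp m N p f x := by
  unfold noiseOp convC noiseDensity
  fun_prop

theorem statement4_general (m N : ℕ) (hm : 1 ≤ m)
    (f : (Fin N → ZMod (m + 1)) → ℂ) (x : Fin N → ZMod (m + 1)) :
    reparamMax m N f x ≤ semigroupMax m N f x := by
  have hc : (0 : ℝ) < m / (m + 1) := by positivity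
  exact iSup_norm_average_le_iSup_norm_average_comp_exp hc (continuous_noiseOp m N f x).continuousOn

theorem statement4 (m N : ℕ) (hm : 2 ≤ m) (hN : 1 ≤ N)
    (f : (Fin N → ZMod (m + 1)) → ℂ) (x : Fin N → ZMod (m + 1)) :
    reparamMax m N f x ≤ semigroupMax m N f x :=
  statement4_general m N (one_le_two.trans hm) f x
end
end
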